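/- arXiv:1107.0960 — 10 statements merged into one kernel-verified Lean document; each statement's English description precedes it below -/
import Mathlib

section
/- Let n ≥ 1 and let V, V₀ ∈ C^∞(ℝⁿ; [0,∞)) both satisfy the superexponential decay condition. Suppose V₀(x) = R(|x|) where R: [0,∞) → [0,∞) is smooth and R′(r) vanishes only at r = 0 and at those r with R(r) = 0. If ∫_{ℝⁿ} V(x)^k dx = ∫_{ℝⁿ} V₀(x)^k dx and ∫_{ℝⁿ} V(x)^k |∇V(x)|² dx = ∫_{ℝⁿ} V₀(x)^k |∇V₀(x)|² dx for every integer k ≥ n, then there exists x₀ ∈ ℝⁿ such that V(x) = V₀(x − x₀) for all x ∈ ℝⁿ. -/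
open MeasureTheory Real

/-- The superexponential decay condition \eqref{e:ass}: `|W(x)| ≤ A exp(-B|x|^{1+ε})`
and all derivatives of `W` are bounded. -/
def SuperExpDecay {n : ℕ} (W : EuclideanSpace ℝ (Fin n) → ℝ) : Prop :=
  (∃ ε A B : ℝ, 0 < ε ∧ 0 < A ∧ 0 < B ∧
    ∀ x, |W x| ≤ A * Real.exp (-B * ‖x‖ ^ (1 + ε))) ∧
  ∀ k : ℕ, ∃ C : ℝ, ∀ x, ‖iteratedFDeriv ℝ k W x‖ ≤ C

theorem volume_le_iSup_isCompact_nonempty {A : Set ℝ} (hA : MeasurableSet A) :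
    volume A ≤ ⨆ (K : Set ℝ) (_ : K ⊆ A ∧ IsCompact K ∧ K.Nonempty), volume K := by
  rw [hA.measure_eq_iSup_isCompact]
  refine iSup_le fun K => iSup₂_le fun hK hKc => ?_
  rcases K.eq_empty_or_nonempty with rfl | hne
  · simp
  · exact le_iSup₂ (f := fun (K : Set ℝ) (_ : K ⊆ A ∧ IsCompact K ∧ K.Nonempty) => volume K)
      K ⟨hK, hKc, hne⟩

theorem volume_add_volume_le_of_isCompact {K L C : Set ℝ} (hK : IsCompact K) (hL : IsCompact L)
    (hKne : K.Nonempty) (hLne : L.Nonempty) (h : ∀ a ∈ K, ∀ b ∈ L, a + b ∈ C) :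
    volume K + volume L ≤ volume C := by
  obtain ⟨a, haK, ha⟩ := hK.exists_isGreatest hKne
  obtain ⟨b, hbL, hb⟩ := hL.exists_isLeast hLne
  have hd : AEDisjoint volume ((fun x => x + b) '' K) ((fun x => a + x) '' L) := by
    refine measure_mono_null (t := {a + b}) ?_ (by simp)
    rintro _ ⟨⟨x, hx, rfl⟩, ⟨y, hy, hxy⟩⟩
    have h1 := ha hx
    have h2 := hb hy
    simp only at hxy
    simp only [Set.mem_singleton_iff]
    linarith
  have hm : MeasurableSet ((fun x => a + x) '' L) :=
    (hL.image (by fun_prop)).isClosed.measurableSet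
  calc volume K + volume L
      = volume ((fun x => x + b) '' K ∪ (fun x => a + x) '' L) := by
        rw [measure_union₀ hm.nullMeasurableSet hd]
        simp
    _ ≤ volume C := by
        refine measure_mono ?_
        rintro _ (⟨x, hx, rfl⟩ | ⟨y, hy, rfl⟩)
        · exact h x hx b hbL
        · exact h a haK y hy

/-- The one-dimensional Brunn–Minkowski inequality. -/
theorem volume_add_volume_le_of_add_mem {A B C : Set ℝ} (hA : MeasurableSet A)
    (hB : MeasurableSet B) (hAne : A.Nonempty) (hBne : B.Nonempty)
    (h : ∀ a ∈ A, ∀ b ∈ B, a + b ∈ C) : volume A + volume B ≤ volume C := by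
  obtain ⟨a, ha⟩ := hAne
  obtain ⟨b, hb⟩ := hBne
  refine (add_le_add (volume_le_iSup_isCompact_nonempty hA)
    (volume_le_iSup_isCompact_nonempty hB)).trans ?_
  refine ENNReal.biSup_add_biSup_le'
    ⟨{a}, by simpa using ha, isCompact_singleton, Set.singleton_nonempty a⟩
    ⟨{b}, by simpa using hb, isCompact_singleton, Set.singleton_nonempty b⟩ ?_
  rintro K ⟨hKA, hK, hKne⟩ L ⟨hLB, hL, hLne⟩
  exact volume_add_volume_le_of_isCompact hK hL hKne hLne
    fun x hx y hy => h x (hKA hx) y (hLB hy)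

theorem ENNReal.rpow_mul_rpow_le_add {l m : ℝ} (hl : 0 < l) (hm : 0 < m) (hlm : l + m = 1)
    (a b : ENNReal) : a ^ l * b ^ m ≤ ENNReal.ofReal l * a + ENNReal.ofReal m * b := by
  have hpq : (l⁻¹).HolderConjugate m⁻¹ := by
    rw [Real.holderConjugate_iff]
    constructor
    · exact (one_lt_inv₀ hl).2 (by linarith)
    · simpa using hlm
  have := ENNReal.young_inequality (a ^ l) (b ^ m) hpq
  rw [← ENNReal.rpow_mul, ← ENNReal.rpow_mul, mul_inv_cancel₀ hl.ne', mul_inv_cancel₀ hm.ne',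
    ENNReal.rpow_one, ENNReal.rpow_one, ENNReal.ofReal_inv_of_pos hl,
    ENNReal.ofReal_inv_of_pos hm] at this
  simpa [div_eq_mul_inv, mul_comm] using this

/-- Prékopa–Leindler property of a measure on a real vector space. -/
def IsPrekopaLeindler {E : Type*} [AddCommGroup E] [Module ℝ E] [MeasurableSpace E]
    (μ : Measure E) (l m : ℝ) : Prop :=
  ∀ f g h : E → ENNReal, Measurable f → Measurable g → Measurable h →
    (∀ x y, f x ^ l * g y ^ m ≤ h (l • x + m • y)) →
    (∫⁻ x, f x ∂μ) ^ l * (∫⁻ x, g x ∂μ) ^ m ≤ ∫⁻ x, h x ∂μ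

theorem IsPrekopaLeindler.prod {E F : Type*} [AddCommGroup E] [Module ℝ E] [MeasurableSpace E]
    [AddCommGroup F] [Module ℝ F] [MeasurableSpace F] {μ : Measure E} {ν : Measure F} [SFinite ν]
    {l m : ℝ} (hμ : IsPrekopaLeindler μ l m) (hν : IsPrekopaLeindler ν l m) :
    IsPrekopaLeindler (μ.prod ν) l m := by
  intro f g h hf hg hh H
  rw [lintegral_prod _ hf.aemeasurable, lintegral_prod _ hg.aemeasurable,
    lintegral_prod _ hh.aemeasurable]
  refine hμ _ _ _ hf.lintegral_prod_right' hg.lintegral_prod_right' hh.lintegral_prod_right' ?_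
  intro x x'
  refine hν _ _ _ (hf.comp measurable_prodMk_left) (hg.comp measurable_prodMk_left)
    (hh.comp measurable_prodMk_left) ?_
  intro y y'
  exact H (x, y) (x', y')

theorem IsPrekopaLeindler.of_measurePreserving {E F : Type*} [AddCommGroup E] [Module ℝ E]
    [MeasurableSpace E] [AddCommGroup F] [Module ℝ F] [MeasurableSpace F]
    {μ : Measure E} {ν : Measure F} {l m : ℝ} (hμ : IsPrekopaLeindler μ l m)
    (e : E →ₗ[ℝ] F) (he : MeasurePreserving e μ ν) : IsPrekopaLeindler ν l m := by
  intro f g h hf hg hh H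
  rw [← he.lintegral_comp hf, ← he.lintegral_comp hg, ← he.lintegral_comp hh]
  refine hμ _ _ _ (hf.comp he.measurable) (hg.comp he.measurable) (hh.comp he.measurable) ?_
  intro x y
  simpa using H (e x) (e y)

theorem lintegral_eq_setLIntegral_Ioo_meas_lt {f : ℝ → ENNReal} (hf : Measurable f)
    (hf1 : ∀ x, f x ≤ 1) :
    ∫⁻ x, f x = ∫⁻ t in Set.Ioo (0 : ℝ) 1, volume {x | ENNReal.ofReal t < f x} := by
  have hfin : ∀ x, f x ≠ ⊤ := fun x => ((hf1 x).trans_lt ENNReal.one_lt_top).ne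
  have h1 : ∫⁻ x, f x = ∫⁻ x, ENNReal.ofReal (f x).toReal :=
    lintegral_congr fun x => (ENNReal.ofReal_toReal (hfin x)).symm
  rw [h1, lintegral_eq_lintegral_meas_lt volume
    (Filter.Eventually.of_forall fun x => ENNReal.toReal_nonneg) hf.ennreal_toReal.aemeasurable,
    ← Set.Ioo_union_Ici_eq_Ioi (zero_lt_one' ℝ),
    lintegral_union measurableSet_Ici
      (Set.disjoint_left.2 fun x hx hx' => absurd hx.2 (not_lt.2 hx'))]
  have h2 : ∫⁻ t in Set.Ici (1 : ℝ), volume {x | t < (f x).toReal} = 0 := by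
    rw [setLIntegral_congr_fun (g := fun _ => 0) measurableSet_Ici]
    · simp
    · intro t ht
      have : {x | t < (f x).toReal} = ∅ := by
        ext x
        simp only [Set.mem_ofPred_eq, Set.mem_empty_iff_false, iff_false, not_lt]
        refine le_trans ?_ (Set.mem_Ici.1 ht)
        exact ENNReal.toReal_le_of_le_ofReal zero_le_one (by simpa using hf1 x)
      simp only [this, measure_empty]
  rw [h2, add_zero]
  refine setLIntegral_congr_fun measurableSet_Ioo fun t ht => ?_
  congr 1
  ext x
  exact (ENNReal.ofReal_lt_iff_lt_toReal ht.1.le (hfin x)).symm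

open scoped Pointwise in
theorem lintegral_add_lintegral_le_of_normalized {l m : ℝ} (hl : 0 < l) (hm : 0 < m)
    {f g h : ℝ → ENNReal} (hlm : l + m = 1)
    (hf : Measurable f) (hg : Measurable g) (hh : Measurable h)
    (hf1 : ∀ x, f x ≤ 1) (hg1 : ∀ x, g x ≤ 1) (hf2 : ∀ s < 1, ∃ x, s < f x)
    (hg2 : ∀ s < 1, ∃ x, s < g x) (H : ∀ x y, f x ^ l * g y ^ m ≤ h (l • x + m • y)) :
    ENNReal.ofReal l * (∫⁻ x, f x) + ENNReal.ofReal m * (∫⁻ x, g x) ≤ ∫⁻ x, h x := by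
  have hanti : Antitone fun t : ℝ => volume {x | ENNReal.ofReal t < f x} := fun s t hst =>
    measure_mono fun x hx => (ENNReal.ofReal_le_ofReal hst).trans_lt hx
  have hlev : ∀ t ∈ Set.Ioo (0 : ℝ) 1,
      ENNReal.ofReal l * volume {x | ENNReal.ofReal t < f x} +
        ENNReal.ofReal m * volume {x | ENNReal.ofReal t < g x} ≤
      volume {x | ENNReal.ofReal t < min (h x) 1} := by
    intro t ht
    have ht1 : ENNReal.ofReal t < 1 := by simpa using ht.2
    have hsc : ∀ (c : ℝ) (_ : 0 < c) (A : Set ℝ), volume (c • A) = ENNReal.ofReal c * volume A := by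
      intro c hc A
      rw [Measure.addHaar_smul_of_nonneg _ hc.le]
      simp
    rw [← hsc l hl, ← hsc m hm]
    refine volume_add_volume_le_of_add_mem
      ((measurableSet_lt measurable_const hf).const_smul₀ l)
      ((measurableSet_lt measurable_const hg).const_smul₀ m)
      (Set.Nonempty.smul_set (hf2 _ ht1)) (Set.Nonempty.smul_set (hg2 _ ht1)) ?_
    rintro _ ⟨x, hx, rfl⟩ _ ⟨y, hy, rfl⟩
    refine lt_min (lt_of_lt_of_le ?_ (H x y)) ht1
    have ht0 : ENNReal.ofReal t ≠ 0 := by simpa using ht.1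
    calc ENNReal.ofReal t = ENNReal.ofReal t ^ l * ENNReal.ofReal t ^ m := by
          rw [← ENNReal.rpow_add _ _ ht0 ENNReal.ofReal_ne_top, hlm, ENNReal.rpow_one]
      _ < f x ^ l * g y ^ m := ENNReal.mul_lt_mul (ENNReal.rpow_lt_rpow hx hl)
          (ENNReal.rpow_lt_rpow hy hm)
  rw [lintegral_eq_setLIntegral_Ioo_meas_lt hf hf1, lintegral_eq_setLIntegral_Ioo_meas_lt hg hg1,
    ← lintegral_const_mul' _ _ ENNReal.ofReal_ne_top,
    ← lintegral_const_mul' _ _ ENNReal.ofReal_ne_top,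
    ← lintegral_add_left (hanti.measurable.const_mul _)]
  refine (setLIntegral_mono' measurableSet_Ioo hlev).trans ?_
  rw [← lintegral_eq_setLIntegral_Ioo_meas_lt (hh.min measurable_const) fun x => min_le_right _ _]
  exact lintegral_mono fun x => min_le_left _ _

theorem rpow_mul_rpow_lintegral_le_of_bounded {l m : ℝ} (hl : 0 < l) (hm : 0 < m)
    {f g h : ℝ → ENNReal} (hlm : l + m = 1)
    (hf : Measurable f) (hg : Measurable g) (hh : Measurable h) {N : ENNReal} (hN : N ≠ ⊤)
    (hf1 : ∀ x, f x ≤ N) (hg1 : ∀ x, g x ≤ N)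
    (H : ∀ x y, f x ^ l * g y ^ m ≤ h (l • x + m • y)) :
    (∫⁻ x, f x) ^ l * (∫⁻ x, g x) ^ m ≤ ∫⁻ x, h x := by
  set a := ⨆ x, f x with ha
  set b := ⨆ x, g x with hb
  have hatop : a ≠ ⊤ := ((iSup_le hf1).trans_lt hN.lt_top).ne
  have hbtop : b ≠ ⊤ := ((iSup_le hg1).trans_lt hN.lt_top).ne
  rcases eq_or_ne a 0 with ha0 | ha0
  · have : ∀ x, f x = 0 := by simpa [ha] using ha0
    simp [this, ENNReal.zero_rpow_of_pos hl]
  rcases eq_or_ne b 0 with hb0 | hb0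
  · have : ∀ x, g x = 0 := by simpa [hb] using hb0
    simp [this, ENNReal.zero_rpow_of_pos hm]
  have hnorm : ∀ (u : ℝ → ENNReal) (c : ENNReal), c = ⨆ x, u x → c ≠ 0 → c ≠ ⊤ →
      (∀ x, c⁻¹ * u x ≤ 1) ∧ ∀ s < 1, ∃ x, s < c⁻¹ * u x := by
    intro u c hc hc0 hct
    constructor
    · intro x
      rw [← ENNReal.inv_mul_cancel hc0 hct]
      gcongr
      rw [hc]
      exact le_iSup u x
    · intro s hs
      have : s * c < ⨆ x, u x := by
        rw [← hc]
        calc s * c < 1 * c := ENNReal.mul_lt_mul_left hc0 hct hs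
          _ = c := one_mul c
      obtain ⟨x, hx⟩ := lt_iSup_iff.1 this
      refine ⟨x, ?_⟩
      rw [mul_comm, ← div_eq_mul_inv]
      exact (ENNReal.lt_div_iff_mul_lt (Or.inl hc0) (Or.inl hct)).2 hx
  obtain ⟨hfa, hfa'⟩ := hnorm f a ha ha0 hatop
  obtain ⟨hgb, hgb'⟩ := hnorm g b hb hb0 hbtop
  have hal0 : a ^ l ≠ 0 := by simp [ha0, hatop]
  have halt : a ^ l ≠ ⊤ := ENNReal.rpow_ne_top_of_nonneg hl.le hatop
  have hbm0 : b ^ m ≠ 0 := by simp [hb0, hbtop]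
  have hbmt : b ^ m ≠ ⊤ := ENNReal.rpow_ne_top_of_nonneg hm.le hbtop
  have hsplit : ∀ u v : ENNReal, (a⁻¹ * u) ^ l * (b⁻¹ * v) ^ m
      = (a ^ l * b ^ m)⁻¹ * (u ^ l * v ^ m) := by
    intro u v
    rw [ENNReal.mul_rpow_of_nonneg _ _ hl.le, ENNReal.mul_rpow_of_nonneg _ _ hm.le,
      ENNReal.inv_rpow, ENNReal.inv_rpow, ENNReal.mul_inv (Or.inl hal0) (Or.inl halt)]
    ring
  have key := lintegral_add_lintegral_le_of_normalized hl hm (h := fun x => (a ^ l * b ^ m)⁻¹ * h x)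
    hlm (hf.const_mul a⁻¹) (hg.const_mul b⁻¹) (hh.const_mul _) hfa hgb hfa' hgb' (by
      intro x y
      rw [hsplit]
      gcongr
      exact H x y)
  have key2 := (ENNReal.rpow_mul_rpow_le_add hl hm hlm _ _).trans key
  rw [lintegral_const_mul _ hf, lintegral_const_mul _ hg, lintegral_const_mul _ hh, hsplit] at key2
  exact (ENNReal.mul_le_mul_iff_right (ENNReal.inv_ne_zero.2 (ENNReal.mul_ne_top halt hbmt))
    (ENNReal.inv_ne_top.2 (mul_ne_zero hal0 hbm0))).1 key2

theorem tendsto_lintegral_min_natCast {f : ℝ → ENNReal} (hf : Measurable f) :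
    Filter.Tendsto (fun N : ℕ => ∫⁻ x, min (f x) N) Filter.atTop (nhds (∫⁻ x, f x)) := by
  refine lintegral_tendsto_of_tendsto_of_monotone
    (fun N => (hf.min measurable_const).aemeasurable) ?_ ?_
  · refine Filter.Eventually.of_forall fun x N M hNM => ?_
    exact min_le_min le_rfl (by exact_mod_cast hNM)
  · refine Filter.Eventually.of_forall fun x => ?_
    have := (tendsto_const_nhds (x := f x)).min ENNReal.tendsto_nat_nhds_top
    simpa using this

/-- The one-dimensional Prékopa–Leindler inequality. -/
theorem isPrekopaLeindler_real {l m : ℝ} (hl : 0 < l) (hm : 0 < m) (hlm : l + m = 1) :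
    IsPrekopaLeindler (volume : Measure ℝ) l m := by
  intro f g h hf hg hh H
  rcases eq_or_ne (∫⁻ x, f x) 0 with hf0 | hf0
  · simp [hf0, ENNReal.zero_rpow_of_pos hl]
  rcases eq_or_ne (∫⁻ x, g x) 0 with hg0 | hg0
  · simp [hg0, ENNReal.zero_rpow_of_pos hm]
  have hlim := ENNReal.Tendsto.mul
    ((ENNReal.continuous_rpow_const (y := l)).continuousAt.tendsto.comp
      (tendsto_lintegral_min_natCast hf))
    (Or.inl (by simp [hf0, not_lt.2 hl.le]))
    ((ENNReal.continuous_rpow_const (y := m)).continuousAt.tendsto.comp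
      (tendsto_lintegral_min_natCast hg))
    (Or.inl (by simp [hg0, not_lt.2 hm.le]))
  refine le_of_tendsto' hlim fun N => ?_
  refine rpow_mul_rpow_lintegral_le_of_bounded hl hm hlm (hf.min measurable_const)
    (hg.min measurable_const) hh (ENNReal.natCast_ne_top N) (fun x => min_le_right _ _)
    (fun x => min_le_right _ _) fun x y => le_trans ?_ (H x y)
  gcongr <;> exact min_le_left _ _

theorem isPrekopaLeindler_pi {l m : ℝ} (hl : 0 < l) (hm : 0 < m) (hlm : l + m = 1) (n : ℕ) :
    IsPrekopaLeindler (volume : Measure (Fin n → ℝ)) l m := by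
  induction n with
  | zero =>
    intro f g h hf hg hh H
    rw [volume_pi, Measure.pi_of_empty (x := 0)]
    simpa [lintegral_dirac' _ hf, lintegral_dirac' _ hg, lintegral_dirac' _ hh] using H 0 0
  | succ k ih =>
    let e : ℝ × (Fin k → ℝ) →ₗ[ℝ] (Fin (k + 1) → ℝ) :=
      { toFun := fun p => Fin.cons p.1 p.2
        map_add' := by
          intro p q
          ext i
          refine Fin.cases ?_ (fun j => ?_) i <;> simp
        map_smul' := by
          intro c p
          ext i
          refine Fin.cases ?_ (fun j => ?_) i <;> simp }
    refine ((isPrekopaLeindler_real hl hm hlm).prod ih).of_measurePreserving e ?_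
    have he : (e : ℝ × (Fin k → ℝ) → Fin (k + 1) → ℝ) =
        (MeasurableEquiv.piFinSuccAbove (fun _ : Fin (k + 1) => ℝ) 0).symm := by
      ext p i
      refine Fin.cases ?_ (fun j => ?_) i <;> simp [e]
    rw [he]
    exact (volume_preserving_piFinSuccAbove (fun _ : Fin (k + 1) => ℝ) 0).symm

theorem isPrekopaLeindler_euclideanSpace {l m : ℝ} (hl : 0 < l) (hm : 0 < m) (hlm : l + m = 1)
    (n : ℕ) : IsPrekopaLeindler (volume : Measure (EuclideanSpace ℝ (Fin n))) l m :=
  (isPrekopaLeindler_pi hl hm hlm n).of_measurePreserving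
    (WithLp.linearEquiv 2 ℝ (Fin n → ℝ)).symm.toLinearMap (PiLp.volume_preserving_toLp (Fin n))

open scoped Pointwise in
/-- The Brunn–Minkowski inequality for the sum of a set and a ball. -/
theorem volume_ball_add_le {n : ℕ} {A C : Set (EuclideanSpace ℝ (Fin n))}
    (hA : MeasurableSet A) (hC : MeasurableSet C) {r s : ℝ} (hr : 0 < r) (hs : 0 < s)
    (hAr : volume A = volume (Metric.ball (0 : EuclideanSpace ℝ (Fin n)) r))
    (h : ∀ x ∈ A, ∀ y ∈ Metric.ball (0 : EuclideanSpace ℝ (Fin n)) s, x + y ∈ C) :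
    volume (Metric.ball (0 : EuclideanSpace ℝ (Fin n)) (r + s)) ≤ volume C := by
  have hrs : 0 < r + s := by positivity
  set l := r / (r + s) with hl_def
  set m := s / (r + s) with hm_def
  have hl : 0 < l := by positivity
  have hm : 0 < m := by positivity
  have hlm : l + m = 1 := by rw [hl_def, hm_def]; field_simp
  have hlr : l⁻¹ * r = r + s := by rw [hl_def]; field_simp
  have hball : ∀ c : ℝ, 0 < c → ∀ t : ℝ, c • Metric.ball (0 : EuclideanSpace ℝ (Fin n)) t
      = Metric.ball 0 (c * t) := by
    intro c hc t
    rw [_root_.smul_ball hc.ne', smul_zero, Real.norm_of_nonneg hc.le]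
  have hvol : volume (l⁻¹ • A) = volume (Metric.ball (0 : EuclideanSpace ℝ (Fin n)) (r + s)) := by
    rw [← hlr, ← hball _ (inv_pos.2 hl), Measure.addHaar_smul, Measure.addHaar_smul, hAr]
  have hAm : MeasurableSet (l⁻¹ • A) := hA.const_smul₀ _
  have key := isPrekopaLeindler_euclideanSpace hl hm hlm n ((l⁻¹ • A).indicator 1)
    ((Metric.ball 0 (r + s)).indicator 1) (C.indicator 1)
    (measurable_one.indicator hAm) (measurable_one.indicator Metric.isOpen_ball.measurableSet)
    (measurable_one.indicator hC) (by
      intro x y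
      by_cases hx : x ∈ l⁻¹ • A
      swap
      · simp [hx, ENNReal.zero_rpow_of_pos hl]
      by_cases hy : y ∈ Metric.ball (0 : EuclideanSpace ℝ (Fin n)) (r + s)
      swap
      · rw [Set.indicator_of_notMem hy]; simp [ENNReal.zero_rpow_of_pos hm]
      have hxy : l • x + m • y ∈ C := by
        refine h _ ?_ _ ?_
        · rwa [Set.mem_inv_smul_set_iff₀ hl.ne'] at hx
        · rw [mem_ball_zero_iff, norm_smul, Real.norm_of_nonneg hm.le]
          rw [mem_ball_zero_iff] at hy
          calc m * ‖y‖ < m * (r + s) := by gcongr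
            _ = s := by rw [hm_def]; field_simp
      simp [hx, hy, hxy])
  rw [lintegral_indicator_one hAm, lintegral_indicator_one Metric.isOpen_ball.measurableSet,
    lintegral_indicator_one hC, hvol, ← ENNReal.rpow_add, hlm, ENNReal.rpow_one] at key
  · exact key
  · exact (Metric.measure_ball_pos volume _ hrs).ne'
  · exact measure_ball_lt_top.ne

theorem SuperExpDecay.exists_le_exp {n : ℕ} {W : EuclideanSpace ℝ (Fin n) → ℝ}
    (hW : SuperExpDecay W) :
    ∃ A B : ℝ, 0 < A ∧ 0 < B ∧ ∀ x, |W x| ≤ A * Real.exp (-(B * ‖x‖)) := by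
  obtain ⟨⟨ε, A, B, hε, hA, hB, h⟩, -⟩ := hW
  refine ⟨A * Real.exp B, B, by positivity, hB, fun x => (h x).trans ?_⟩
  rw [mul_assoc, ← Real.exp_add]
  gcongr
  have : ‖x‖ ≤ 1 + ‖x‖ ^ (1 + ε) := by
    rcases le_total ‖x‖ 1 with h1 | h1
    · have := Real.rpow_nonneg (norm_nonneg x) (1 + ε)
      linarith
    · have := Real.rpow_le_rpow_of_exponent_le h1 (show (1 : ℝ) ≤ 1 + ε by linarith)
      rw [Real.rpow_one] at this
      linarith
  nlinarith

theorem exp_neg_mul_le_one_add_rpow {B r : ℝ} (hB : 0 < B) (hr : 0 ≤ r) (m : ℕ) :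
    Real.exp (-(B * r)) ≤ Real.exp B * (m.factorial / B ^ m) * (1 + r) ^ (-(m : ℝ)) := by
  have h := Real.pow_div_factorial_le_exp (B * (1 + r)) (by positivity) m
  rw [Real.rpow_neg (by positivity), Real.rpow_natCast]
  have h2 : Real.exp (B * (1 + r)) = Real.exp B * Real.exp (B * r) := by
    rw [← Real.exp_add]; ring_nf
  rw [h2, mul_pow] at h
  rw [Real.exp_neg]
  have hf : (0 : ℝ) < m.factorial := by positivity
  have h1r : 0 < 1 + r := by positivity
  rw [inv_le_iff_one_le_mul₀ (Real.exp_pos _)]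
  rw [div_le_iff₀ hf] at h
  have : Real.exp B * (m.factorial / B ^ m) * ((1 + r) ^ m)⁻¹ * Real.exp (B * r)
      = (Real.exp B * Real.exp (B * r) * m.factorial) / (B ^ m * (1 + r) ^ m) := by
    field_simp
  rw [this, one_le_div (by positivity)]
  exact h

theorem SuperExpDecay.integrable {n : ℕ} {W : EuclideanSpace ℝ (Fin n) → ℝ}
    (hW : SuperExpDecay W) (hc : Continuous W) : Integrable W := by
  obtain ⟨A, B, hA, hB, h⟩ := hW.exists_le_exp
  have hintg : Integrable (fun x : EuclideanSpace ℝ (Fin n) => (1 + ‖x‖) ^ (-((n + 1 : ℕ) : ℝ))) :=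
    integrable_one_add_norm (by simp)
  refine (hintg.const_mul (A * (Real.exp B * ((n + 1).factorial / B ^ (n + 1))))).mono'
    hc.aestronglyMeasurable (Filter.Eventually.of_forall fun x => (h x).trans ?_)
  rw [mul_assoc]
  gcongr
  exact exp_neg_mul_le_one_add_rpow hB (norm_nonneg x) (n + 1)

theorem SuperExpDecay.exists_bound {n : ℕ} {W : EuclideanSpace ℝ (Fin n) → ℝ}
    (hW : SuperExpDecay W) : ∃ A : ℝ, 0 < A ∧ ∀ x, |W x| ≤ A := by
  obtain ⟨A, B, hA, hB, h⟩ := hW.exists_le_exp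
  refine ⟨A, hA, fun x => (h x).trans ?_⟩
  have : Real.exp (-(B * ‖x‖)) ≤ 1 := Real.exp_le_one_iff.2 (by
    have := norm_nonneg x
    nlinarith)
  nlinarith

theorem SuperExpDecay.exists_norm_le {n : ℕ} {W : EuclideanSpace ℝ (Fin n) → ℝ}
    (hW : SuperExpDecay W) {c : ℝ} (hc : 0 < c) : ∃ T : ℝ, ∀ x, c ≤ W x → ‖x‖ ≤ T := by
  obtain ⟨A, B, hA, hB, h⟩ := hW.exists_le_exp
  refine ⟨Real.log (A / c) / B, fun x hx => ?_⟩
  have h1 : c ≤ A * Real.exp (-(B * ‖x‖)) := hx.trans ((le_abs_self _).trans (h x))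
  rw [le_div_iff₀ hB, Real.le_log_iff_exp_le (by positivity), le_div_iff₀ hc]
  rw [Real.exp_neg, ← div_eq_mul_inv, le_div_iff₀ (Real.exp_pos _)] at h1
  rw [mul_comm ‖x‖ B]
  linarith

theorem norm_gradient_eq_norm_fderiv {n : ℕ} (W : EuclideanSpace ℝ (Fin n) → ℝ)
    (x : EuclideanSpace ℝ (Fin n)) : ‖gradient W x‖ = ‖fderiv ℝ W x‖ := by
  simp [gradient]

theorem continuous_norm_fderiv {n : ℕ} {W : EuclideanSpace ℝ (Fin n) → ℝ}
    (hW : ContDiff ℝ (⊤ : ℕ∞) W) : Continuous fun x => ‖fderiv ℝ W x‖ :=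
  (hW.continuous_fderiv (by simp)).norm

theorem SuperExpDecay.exists_norm_fderiv_le {n : ℕ} {W : EuclideanSpace ℝ (Fin n) → ℝ}
    (hW : SuperExpDecay W) : ∃ C : ℝ, 0 < C ∧ ∀ x, ‖fderiv ℝ W x‖ ≤ C := by
  obtain ⟨C, hC⟩ := hW.2 1
  refine ⟨max C 1, by positivity, fun x => ?_⟩
  rw [← norm_iteratedFDeriv_one]
  exact (hC x).trans (le_max_left _ _)

/-- A second order Taylor estimate, uniform in the base point. -/
theorem SuperExpDecay.exists_taylor {n : ℕ} {W : EuclideanSpace ℝ (Fin n) → ℝ}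
    (hW : SuperExpDecay W) (hs : ContDiff ℝ (⊤ : ℕ∞) W) :
    ∃ K : ℝ, 0 ≤ K ∧ ∀ x y, |W y - W x - fderiv ℝ W x (y - x)| ≤ K * ‖y - x‖ ^ 2 := by
  obtain ⟨K, hK⟩ := hW.2 2
  have hK' : ∀ x, ‖fderiv ℝ (fderiv ℝ W) x‖ ≤ K := fun x => by
    rw [← norm_iteratedFDeriv_one, norm_iteratedFDeriv_fderiv]
    exact hK x
  have hd : Differentiable ℝ (fderiv ℝ W) :=
    (hs.fderiv_right (m := 1) (by norm_cast)).differentiable (by simp)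
  have hK0 : 0 ≤ K := (norm_nonneg (iteratedFDeriv ℝ 2 W 0)).trans (hK 0)
  have hlip : ∀ x z, ‖fderiv ℝ W z - fderiv ℝ W x‖ ≤ K * ‖z - x‖ := fun x z =>
    convex_univ.norm_image_sub_le_of_norm_fderiv_le (fun u _ => hd u) (fun u _ => hK' u)
      (Set.mem_univ x) (Set.mem_univ z)
  refine ⟨K, hK0, fun x y => ?_⟩
  have := (convex_closedBall x ‖y - x‖).norm_image_sub_le_of_norm_hasFDerivWithin_le'
    (f := W) (f' := fderiv ℝ W) (φ := fderiv ℝ W x) (C := K * ‖y - x‖) (x := x) (y := y)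
    (fun z _ => ((hs.differentiable (by simp)) z).hasFDerivAt.hasFDerivWithinAt)
    (fun z hz => (hlip x z).trans (by
      gcongr
      simpa [dist_eq_norm] using hz))
    (Metric.mem_closedBall_self (norm_nonneg _)) (by simp [dist_eq_norm])
  rw [Real.norm_eq_abs] at this
  linarith [this, (by ring : K * ‖y - x‖ * ‖y - x‖ = K * ‖y - x‖ ^ 2)]

section Moments

variable {X : Type*} [MeasurableSpace X] {μ : Measure X}

theorem integrable_comp_mul {V w : X → ℝ} {A : ℝ} (hV : Measurable V)
    (hw : Integrable w μ) (hV0 : ∀ x, 0 ≤ V x) (hVA : ∀ x, V x ≤ A)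
    {f : ℝ → ℝ} (hf : Continuous f) : Integrable (fun x => f (V x) * w x) μ := by
  obtain ⟨C, hC⟩ := isCompact_Icc.exists_bound_of_continuousOn (s := Set.Icc 0 A) hf.continuousOn
  exact hw.bdd_mul (c := C) (hf.measurable.comp hV).aestronglyMeasurable
    (Filter.Eventually.of_forall fun x => hC _ ⟨hV0 x, hVA x⟩)

theorem integral_polynomial_comp_mul {V w : X → ℝ} {A : ℝ} (hV : Measurable V)
    (hw : Integrable w μ) (hV0 : ∀ x, 0 ≤ V x) (hVA : ∀ x, V x ≤ A) (p : Polynomial ℝ) :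
    ∫ x, p.eval (V x) * w x ∂μ
      = ∑ k ∈ Finset.range (p.natDegree + 1), p.coeff k * ∫ x, V x ^ k * w x ∂μ := by
  simp_rw [Polynomial.eval_eq_sum_range, Finset.sum_mul, mul_assoc]
  rw [integral_finsetSum]
  · simp_rw [integral_const_mul]
  · intro k _
    exact (integrable_comp_mul hV hw hV0 hVA (continuous_pow k)).const_mul _

/-- Moments determine integrals of continuous functions of a bounded observable. -/
theorem integral_comp_mul_eq_of_moments {V w V₀ w₀ : X → ℝ} {A : ℝ}
    (hV : Measurable V) (hV₀ : Measurable V₀) (hw : Integrable w μ) (hw₀ : Integrable w₀ μ)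
    (hV0 : ∀ x, 0 ≤ V x) (hVA : ∀ x, V x ≤ A) (hV₀0 : ∀ x, 0 ≤ V₀ x) (hV₀A : ∀ x, V₀ x ≤ A)
    (hmom : ∀ k : ℕ, ∫ x, V x ^ k * w x ∂μ = ∫ x, V₀ x ^ k * w₀ x ∂μ)
    {f : ℝ → ℝ} (hf : Continuous f) :
    ∫ x, f (V x) * w x ∂μ = ∫ x, f (V₀ x) * w₀ x ∂μ := by
  set I := (∫ x, |w x| ∂μ) + ∫ x, |w₀ x| ∂μ with hI
  have hI0 : 0 ≤ I := add_nonneg (integral_nonneg fun _ => abs_nonneg _)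
    (integral_nonneg fun _ => abs_nonneg _)
  refine eq_of_abs_sub_le_all fun δ hδ => ?_
  obtain ⟨p, hp⟩ := exists_polynomial_near_of_continuousOn 0 A f hf.continuousOn (δ / (I + 1))
    (by positivity)
  have happrox : ∀ {U u : X → ℝ},
      Measurable U → Integrable u μ → (∀ x, 0 ≤ U x) → (∀ x, U x ≤ A) →
      |∫ x, f (U x) * u x ∂μ - ∫ x, p.eval (U x) * u x ∂μ| ≤ δ / (I + 1) * ∫ x, |u x| ∂μ := by
    intro U u hU hu hU0 hUA
    rw [← integral_sub (integrable_comp_mul hU hu hU0 hUA hf)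
      (integrable_comp_mul hU hu hU0 hUA p.continuous), ← integral_const_mul, ← Real.norm_eq_abs]
    refine norm_integral_le_of_norm_le (hu.abs.const_mul _)
      (Filter.Eventually.of_forall fun x => ?_)
    rw [← sub_mul, norm_mul, Real.norm_eq_abs, Real.norm_eq_abs, abs_sub_comm]
    gcongr
    exact (hp _ ⟨hU0 x, hUA x⟩).le
  have h1 := happrox hV hw hV0 hVA
  have h2 := happrox hV₀ hw₀ hV₀0 hV₀A
  have h3 : ∫ x, p.eval (V x) * w x ∂μ = ∫ x, p.eval (V₀ x) * w₀ x ∂μ := by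
    rw [integral_polynomial_comp_mul hV hw hV0 hVA,
      integral_polynomial_comp_mul hV₀ hw₀ hV₀0 hV₀A]
    simp_rw [hmom]
  rw [h3] at h1
  have h4 : δ / (I + 1) * I ≤ δ := by
    rw [div_mul_eq_mul_div, div_le_iff₀ (by positivity)]
    nlinarith
  rw [hI] at h4
  rw [abs_le] at h1 h2 ⊢
  constructor <;> nlinarith [h1.1, h1.2, h2.1, h2.2]

theorem lintegral_comp_mul_eq_of_moments {V w V₀ w₀ : X → ℝ} {A : ℝ}
    (hV : Measurable V) (hV₀ : Measurable V₀) (hw : Integrable w μ) (hw₀ : Integrable w₀ μ)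
    (hwm : Measurable w) (hw₀m : Measurable w₀)
    (hwnn : ∀ x, 0 ≤ w x) (hw₀nn : ∀ x, 0 ≤ w₀ x)
    (hV0 : ∀ x, 0 ≤ V x) (hVA : ∀ x, V x ≤ A) (hV₀0 : ∀ x, 0 ≤ V₀ x) (hV₀A : ∀ x, V₀ x ≤ A)
    (hmom : ∀ k : ℕ, ∫ x, V x ^ k * w x ∂μ = ∫ x, V₀ x ^ k * w₀ x ∂μ)
    {f : ℝ → ENNReal} (hf : Measurable f) :
    ∫⁻ x, f (V x) * ENNReal.ofReal (w x) ∂μ = ∫⁻ x, f (V₀ x) * ENNReal.ofReal (w₀ x) ∂μ := by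
  have hlint : ∀ {U u : X → ℝ},
      Measurable U → Measurable u →
      ∫⁻ x, f (U x) * ENNReal.ofReal (u x) ∂μ =
      ∫⁻ t, f t ∂(Measure.map U (μ.withDensity fun x => ENNReal.ofReal (u x))) := by
    intro U u hU hu
    rw [lintegral_map hf hU, lintegral_withDensity_eq_lintegral_mul _ hu.ennreal_ofReal
      (show Measurable fun x => f (U x) from hf.comp hU)]
    simp [mul_comm]
  have hintg : ∀ {U u : X → ℝ},
      Measurable U → Measurable u → (∀ x, 0 ≤ u x) → ∀ g : BoundedContinuousFunction ℝ ℝ,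
      ∫ t, g t ∂(Measure.map U (μ.withDensity fun x => ENNReal.ofReal (u x))) =
      ∫ x, g (U x) * u x ∂μ := by
    intro U u hU hu hu0 g
    rw [integral_map hU.aemeasurable g.continuous.aestronglyMeasurable,
      integral_withDensity_eq_integral_toReal_smul hu.ennreal_ofReal (by simp)]
    refine integral_congr_ae (Filter.Eventually.of_forall fun x => ?_)
    simp [ENNReal.toReal_ofReal (hu0 x), mul_comm]
  have : IsFiniteMeasure (μ.withDensity fun x => ENNReal.ofReal (w x)) :=
    isFiniteMeasure_withDensity_ofReal hw.2
  have : IsFiniteMeasure (μ.withDensity fun x => ENNReal.ofReal (w₀ x)) :=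
    isFiniteMeasure_withDensity_ofReal hw₀.2
  rw [hlint hV hwm, hlint hV₀ hw₀m]
  congr 1
  refine ext_of_forall_integral_eq_of_IsFiniteMeasure fun g => ?_
  rw [hintg hV hwm hwnn, hintg hV₀ hw₀m hw₀nn]
  exact integral_comp_mul_eq_of_moments hV hV₀ hw hw₀ hV0 hVA hV₀0 hV₀A hmom g.continuous

end Moments

section Profile

variable {R : ℝ → ℝ}

theorem profile_lt_of_lt (hRc : ContinuousOn R (Set.Ici 0))
    (hRdec : ∀ c > 0, ∃ T, ∀ r, 0 ≤ r → c ≤ R r → r ≤ T)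
    (hR' : ∀ r, 0 ≤ r → deriv R r = 0 → r = 0 ∨ R r = 0)
    {r s : ℝ} (hr : 0 ≤ r) (hrs : r < s) (h : 0 < R r ∨ 0 < R s) : R s < R r := by
  by_contra! hle
  have hs0 : 0 < R s := h.elim (fun h => h.trans_le hle) id
  obtain ⟨T, hT⟩ := hRdec (R s) hs0
  have hsT : s ≤ T := hT s (hr.trans hrs.le) le_rfl
  obtain ⟨m, hm, hmax⟩ := isCompact_Icc.exists_isMaxOn (s := Set.Icc r T)
    ⟨r, le_rfl, hrs.le.trans hsT⟩ (hRc.mono fun x hx => hr.trans hx.1)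
  have hmax' : ∀ x, r ≤ x → R x ≤ R m := by
    intro x hx
    rcases le_total x T with h | h
    · exact hmax ⟨hx, h⟩
    · by_contra! hlt
      have hsm : R s ≤ R m := hmax ⟨hrs.le, hsT⟩
      have hxT : x = T := le_antisymm (hT x (hr.trans hx) (hsm.trans hlt.le)) h
      exact absurd (hmax ⟨hx, hxT.le⟩) (not_le.2 hlt)
  obtain ⟨p, hrp, hp⟩ : ∃ p, r < p ∧ ∀ x, r ≤ x → R x ≤ R p := by
    rcases hm.1.eq_or_lt with rfl | h
    · exact ⟨s, hrs, fun x hx => (hmax' x hx).trans hle⟩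
    · exact ⟨m, h, hmax'⟩
  have hloc : IsLocalMax R p := by
    filter_upwards [lt_mem_nhds hrp] with x hx using hp x hx.le
  rcases hR' p (hr.trans hrp.le) hloc.deriv_eq_zero with h | h
  · linarith
  · linarith [hp s hrs.le]

theorem profile_le_of_le (hRc : ContinuousOn R (Set.Ici 0)) (hRnn : ∀ r, 0 ≤ r → 0 ≤ R r)
    (hRdec : ∀ c > 0, ∃ T, ∀ r, 0 ≤ r → c ≤ R r → r ≤ T)
    (hR' : ∀ r, 0 ≤ r → deriv R r = 0 → r = 0 ∨ R r = 0)
    {r s : ℝ} (hr : 0 ≤ r) (hrs : r ≤ s) : R s ≤ R r := by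
  rcases hrs.eq_or_lt with rfl | hlt
  · exact le_rfl
  · by_contra! h
    exact absurd (profile_lt_of_lt hRc hRdec hR' hr hlt (Or.inr ((hRnn r hr).trans_lt h)))
      (not_lt.2 h.le)

/-- A continuous inverse of a profile that decreases strictly where it is positive. -/
theorem exists_continuousOn_inverse (hRc : ContinuousOn R (Set.Ici 0))
    (hRdec : ∀ c > 0, ∃ T, ∀ r, 0 ≤ r → c ≤ R r → r ≤ T)
    (hlt : ∀ r s, 0 ≤ r → r < s → 0 < R r ∨ 0 < R s → R s < R r) :
    ∃ ρ : ℝ → ℝ, (∀ t ∈ Set.Ioo 0 (R 0), 0 < ρ t ∧ R (ρ t) = t) ∧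
      ContinuousOn ρ (Set.Ioo 0 (R 0)) := by
  have hex : ∀ t : ℝ, ∃ r : ℝ, t ∈ Set.Ioo 0 (R 0) → 0 < r ∧ R r = t := by
    intro t
    by_cases ht : t ∈ Set.Ioo 0 (R 0)
    swap
    · exact ⟨0, fun h => absurd h ht⟩
    obtain ⟨T, hT⟩ := hRdec t ht.1
    have hT0 : 0 ≤ T := hT 0 le_rfl ht.2.le
    have hRT : R (T + 1) ≤ t := by
      by_contra! h
      linarith [hT (T + 1) (by linarith) h.le]
    obtain ⟨r, hr, hrt⟩ := intermediate_value_Icc' (show (0 : ℝ) ≤ T + 1 by linarith)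
      (hRc.mono fun x hx => hx.1) ⟨hRT, ht.2.le⟩
    refine ⟨r, fun _ => ⟨hr.1.lt_of_ne' ?_, hrt⟩⟩
    rintro rfl
    exact ht.2.ne hrt.symm
  choose ρ hρ using hex
  refine ⟨ρ, hρ, fun t ht => ?_⟩
  obtain ⟨hρ0, hρt⟩ := hρ t ht
  refine ContinuousAt.continuousWithinAt (Metric.continuousAt_iff'.2 fun ε hε => ?_)
  set δ := min ε (ρ t) / 2 with hδ
  have hδ0 : 0 < δ := by positivity
  have hδε : δ < ε := by
    have := min_le_left ε (ρ t)
    rw [hδ]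
    linarith
  have hδρ : δ < ρ t := by
    have := min_le_right ε (ρ t)
    rw [hδ]
    linarith
  have hpos : 0 < R (ρ t) := by rw [hρt]; exact ht.1
  have hright : R (ρ t + δ) < t :=
    (hlt (ρ t) (ρ t + δ) hρ0.le (by linarith) (Or.inl hpos)).trans_eq hρt
  have hleft : t < R (ρ t - δ) :=
    hρt.symm.trans_lt (hlt (ρ t - δ) (ρ t) (by linarith) (by linarith) (Or.inr hpos))
  filter_upwards [Ioo_mem_nhds hright hleft, Ioo_mem_nhds ht.1 ht.2] with s hs hs0
  obtain ⟨hρs0, hρs⟩ := hρ s hs0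
  have hposs : 0 < R (ρ s) := by rw [hρs]; exact hs0.1
  have h1 : ρ t - δ < ρ s := by
    by_contra! h
    rcases h.eq_or_lt with h | h
    · rw [h] at hρs
      linarith [hs.2]
    · linarith [hlt (ρ s) (ρ t - δ) hρs0.le h (Or.inl hposs), hs.2]
  have h2 : ρ s < ρ t + δ := by
    by_contra! h
    rcases h.eq_or_lt with h | h
    · rw [← h] at hρs
      linarith [hs.1]
    · linarith [hlt (ρ t + δ) (ρ s) (by linarith) h (Or.inr hposs), hs.1]
  rw [Real.dist_eq, abs_lt]
  constructor <;> linarith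

end Profile

section Perturbation

variable {X : Type*} [MeasurableSpace X] {μ : Measure X}

theorem integral_eq_zero_of_le {g : ℝ → ℝ} {c : ℝ} (hc : 0 < c) (hgc : ∀ t ≤ c, g t = 0)
    {u : ℝ} (hu : u ≤ c) : ∫ t in (0 : ℝ)..u, g t = 0 := by
  refine intervalIntegral.integral_zero_ae (Filter.Eventually.of_forall fun t ht => hgc t ?_)
  exact ht.2.trans (max_le hc.le hu)

/-- First variation of `∫ G (W + ε N + κ ε²)` at `ε = 0`, where `G` is the primitive of a function
supported away from zero. -/
theorem hasDerivAt_integral_primitive {W N : X → ℝ} (hW : Measurable W) (hN : Measurable N)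
    {C κ c D : ℝ} (hN0 : ∀ x, 0 ≤ N x) (hNC : ∀ x, N x ≤ C) (hc : 0 < c)
    (hfin : μ {x | c / 2 ≤ W x} ≠ ⊤)
    {g : ℝ → ℝ} (hg : Continuous g) (hgD : ∀ t, |g t| ≤ D) (hgc : ∀ t ≤ c, g t = 0)
    (hWA : ∃ A, ∀ x, |W x| ≤ A) :
    (∀ᶠ ε in nhds (0 : ℝ),
      Integrable (fun x => ∫ t in (0 : ℝ)..(W x + ε * N x + κ * ε ^ 2), g t) μ) ∧
    HasDerivAt (fun ε : ℝ => ∫ x, (∫ t in (0 : ℝ)..(W x + ε * N x + κ * ε ^ 2), g t) ∂μ)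
      (∫ x, g (W x) * N x ∂μ) 0 := by
  obtain ⟨A, hA⟩ := hWA
  set G : ℝ → ℝ := fun u => ∫ t in (0 : ℝ)..u, g t with hGdef
  have hGd : ∀ u, HasDerivAt G (g u) u := fun u =>
    intervalIntegral.integral_hasDerivAt_right (hg.intervalIntegrable _ _)
      (hg.stronglyMeasurableAtFilter _ _) hg.continuousAt
  have hGc : Continuous G := continuous_iff_continuousAt.2 fun u => (hGd u).continuousAt
  have hD0 : 0 ≤ D := (abs_nonneg _).trans (hgD 0)
  have hGlip : ∀ u v, |G u - G v| ≤ D * |u - v| := by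
    intro u v
    rw [hGdef]
    simp only
    rw [intervalIntegral.integral_interval_sub_left (hg.intervalIntegrable _ _)
      (hg.intervalIntegrable _ _)]
    rw [← Real.norm_eq_abs]
    exact intervalIntegral.norm_integral_le_of_norm_le_const fun t _ => hgD t
  have hG0 : ∀ u ≤ c, G u = 0 := fun u hu => integral_eq_zero_of_le hc hgc hu
  rcases isEmpty_or_nonempty X with hX | ⟨⟨x₀⟩⟩
  · have : μ = 0 := Measure.eq_zero_of_isEmpty μ
    subst this
    simp [hasDerivAt_const]
  have hC0 : 0 ≤ C := (hN0 x₀).trans (hNC x₀)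
  set δ := min 1 (c / (2 * (C + |κ| + 1))) with hδ
  have hδ0 : 0 < δ := by positivity
  have hball : ∀ ε ∈ Metric.ball (0 : ℝ) δ, |ε| ≤ 1 ∧ |ε| * (C + |κ|) ≤ c / 2 := by
    intro ε hε
    rw [mem_ball_zero_iff, Real.norm_eq_abs] at hε
    have h1 : |ε| ≤ 1 := (hε.trans_le (min_le_left _ _)).le
    have h2 : |ε| < c / (2 * (C + |κ| + 1)) := hε.trans_le (min_le_right _ _)
    rw [lt_div_iff₀ (by positivity)] at h2
    exact ⟨h1, by nlinarith [abs_nonneg ε]⟩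
  have hsmall : ∀ ε ∈ Metric.ball (0 : ℝ) δ, ∀ x, |ε * N x + κ * ε ^ 2| ≤ c / 2 := by
    intro ε hε x
    obtain ⟨h1, h2⟩ := hball ε hε
    calc |ε * N x + κ * ε ^ 2| ≤ |ε * N x| + |κ * ε ^ 2| := abs_add_le _ _
      _ = |ε| * (N x + |κ| * |ε|) := by
          rw [abs_mul, abs_mul, abs_of_nonneg (hN0 x), abs_pow]; ring
      _ ≤ |ε| * (C + |κ| * 1) := by
          gcongr
          exact hNC x
      _ ≤ c / 2 := by simpa using h2
  have hzero : ∀ x, W x < c / 2 → ∀ ε ∈ Metric.ball (0 : ℝ) δ,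
      G (W x + ε * N x + κ * ε ^ 2) = 0 := by
    intro x hx ε hε
    refine hG0 _ ?_
    have := (abs_le.1 (hsmall ε hε x)).2
    linarith
  have hS : MeasurableSet {x | c / 2 ≤ W x} := measurableSet_le measurable_const hW
  have hmeas : ∀ ε : ℝ, Measurable fun x => G (W x + ε * N x + κ * ε ^ 2) := fun ε =>
    hGc.measurable.comp ((hW.add (hN.const_mul ε)).add_const _)
  have hind : ∀ b : ℝ, Integrable ({x | c / 2 ≤ W x}.indicator fun _ => b) μ := fun b =>
    (integrable_indicator_iff hS).2 (integrableOn_const hfin)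
  have hintg : ∀ ε ∈ Metric.ball (0 : ℝ) δ,
      Integrable (fun x => G (W x + ε * N x + κ * ε ^ 2)) μ := by
    intro ε hε
    refine (hind (D * (A + c / 2))).mono' (hmeas ε).aestronglyMeasurable
      (Filter.Eventually.of_forall fun x => ?_)
    by_cases hx : c / 2 ≤ W x
    · rw [Set.indicator_of_mem (by exact hx)]
      have := hGlip (W x + ε * N x + κ * ε ^ 2) 0
      rw [hG0 0 hc.le, sub_zero, sub_zero] at this
      refine this.trans ?_
      gcongr
      rw [add_assoc]
      exact (abs_add_le _ _).trans (add_le_add (hA x) (hsmall ε hε x))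
    · rw [hzero x (not_le.1 hx) ε hε, norm_zero, Set.indicator_of_notMem (by exact hx)]
  refine ⟨Filter.eventually_of_mem (Metric.ball_mem_nhds 0 hδ0) hintg, ?_⟩
  refine (hasDerivAt_integral_of_dominated_loc_of_lip (𝕜 := ℝ)
    (F := fun ε x => G (W x + ε * N x + κ * ε ^ 2))
    (bound := {x | c / 2 ≤ W x}.indicator fun _ => D * (C + 2 * |κ|))
    (Metric.ball_mem_nhds 0 hδ0)
    (Filter.Eventually.of_forall fun ε => (hmeas ε).aestronglyMeasurable)
    (hintg 0 (Metric.mem_ball_self hδ0)) ?_ ?_ (hind _) ?_).2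
  · exact ((hg.measurable.comp hW).mul hN).aestronglyMeasurable
  · refine Filter.Eventually.of_forall fun x => LipschitzOnWith.of_dist_le_mul fun ε hε ε' hε' => ?_
    rw [Real.dist_eq, Real.dist_eq, Real.coe_nnabs]
    by_cases hx : c / 2 ≤ W x
    · rw [Set.indicator_of_mem (by exact hx),
        abs_of_nonneg (a := D * (C + 2 * |κ|)) (by positivity)]
      refine (hGlip _ _).trans ?_
      rw [mul_assoc]
      gcongr
      have : W x + ε * N x + κ * ε ^ 2 - (W x + ε' * N x + κ * ε' ^ 2)
          = (N x + κ * (ε + ε')) * (ε - ε') := by ring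
      rw [this, abs_mul]
      gcongr
      refine (abs_add_le _ _).trans (add_le_add ?_ ?_)
      · rw [abs_of_nonneg (hN0 x)]; exact hNC x
      · rw [abs_mul, mul_comm]
        gcongr
        linarith [abs_add_le ε ε', (hball ε hε).1, (hball ε' hε').1]
    · rw [hzero x (not_le.1 hx) ε hε, hzero x (not_le.1 hx) ε' hε', sub_zero, abs_zero]
      positivity
  · refine Filter.Eventually.of_forall fun x => ?_
    have h1 : HasDerivAt (fun ε : ℝ => W x + ε * N x + κ * ε ^ 2) (N x) 0 := by
      have h2 := (((hasDerivAt_id (0 : ℝ)).mul_const (N x)).const_add (W x)).add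
        (((hasDerivAt_id (0 : ℝ)).pow 2).const_mul κ)
      refine h2.congr_deriv ?_
      simp
    have h3 : HasDerivAt G (g (W x)) (W x + 0 * N x + κ * 0 ^ 2) := by
      convert hGd (W x) using 1
      ring
    exact h3.comp 0 h1

theorem lintegral_primitive_le {U U' : X → ℝ} (hU : Measurable U) (hU' : Measurable U')
    {c : ℝ} (hc : 0 < c) {g : ℝ → ℝ} (hg : Continuous g) (hg0 : ∀ t, 0 ≤ g t)
    (hgc : ∀ t ≤ c, g t = 0) (h : ∀ t, 0 < t → μ {x | t < U x} ≤ μ {x | t < U' x}) :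
    ∫⁻ x, ENNReal.ofReal (∫ t in (0 : ℝ)..U x, g t) ∂μ ≤
      ∫⁻ x, ENNReal.ofReal (∫ t in (0 : ℝ)..U' x, g t) ∂μ := by
  have hlayer : ∀ {Z : X → ℝ}, Measurable Z →
      ∫⁻ x, ENNReal.ofReal (∫ t in (0 : ℝ)..Z x, g t) ∂μ =
        ∫⁻ t in Set.Ioi 0, μ {x | t < Z x} * ENNReal.ofReal (g t) := by
    intro Z hZ
    have h1 := lintegral_comp_eq_lintegral_meas_lt_mul (f := fun x => max (Z x) 0) (g := g) μ
      (Filter.Eventually.of_forall fun x => le_max_right _ _)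
      (hZ.max measurable_const).aemeasurable (fun t _ => hg.intervalIntegrable _ _)
      (Filter.Eventually.of_forall hg0)
    have h2 : ∀ x, ∫ t in (0 : ℝ)..max (Z x) 0, g t = ∫ t in (0 : ℝ)..Z x, g t := by
      intro x
      rcases le_total (Z x) 0 with hx | hx
      · rw [integral_eq_zero_of_le hc hgc (max_le (hx.trans hc.le) hc.le),
          integral_eq_zero_of_le hc hgc (hx.trans hc.le)]
      · rw [max_eq_left hx]
    simp_rw [h2] at h1
    rw [h1]
    refine setLIntegral_congr_fun measurableSet_Ioi fun t ht => ?_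
    have : {x | t < max (Z x) 0} = {x | t < Z x} := by
      ext x
      have : ¬ t < 0 := not_lt.2 (le_of_lt ht)
      simp [this]
    simp only [this]
  rw [hlayer hU, hlayer hU']
  refine setLIntegral_mono' measurableSet_Ioi fun t ht => ?_
  exact mul_le_mul_left (h t ht) _

end Perturbation

section Perturbation

variable {X : Type*} [MeasurableSpace X] {μ : Measure X}

/-- Comparing the superlevel sets of first order perturbations of two functions with the same
distribution compares their first variations. -/
theorem integral_comp_mul_le_of_superlevel {W N W' N' : X → ℝ} (hW : Measurable W)
    (hN : Measurable N) (hW' : Measurable W') (hN' : Measurable N') {C C' κ κ' c D : ℝ}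
    (hN0 : ∀ x, 0 ≤ N x) (hNC : ∀ x, N x ≤ C) (hN'0 : ∀ x, 0 ≤ N' x) (hN'C : ∀ x, N' x ≤ C')
    (hc : 0 < c) (hfin : μ {x | c / 2 ≤ W x} ≠ ⊤) (hfin' : μ {x | c / 2 ≤ W' x} ≠ ⊤)
    {g : ℝ → ℝ} (hg : Continuous g) (hg0 : ∀ t, 0 ≤ g t) (hgD : ∀ t, |g t| ≤ D)
    (hgc : ∀ t ≤ c, g t = 0) (hWA : ∃ A, ∀ x, |W x| ≤ A) (hWA' : ∃ A, ∀ x, |W' x| ≤ A)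
    (heq : ∀ f : ℝ → ℝ, Continuous f → (∀ t ≤ c, f t = 0) →
      ∫ x, f (W x) ∂μ = ∫ x, f (W' x) ∂μ)
    (hlev : ∀ ε t : ℝ, 0 < ε → 0 < t → μ {x | t < W x + ε * N x + κ * ε ^ 2} ≤
      μ {x | t < W' x + ε * N' x + κ' * ε ^ 2}) :
    ∫ x, g (W x) * N x ∂μ ≤ ∫ x, g (W' x) * N' x ∂μ := by
  obtain ⟨hi, hd⟩ := hasDerivAt_integral_primitive (κ := κ) hW hN hN0 hNC hc hfin hg hgD hgc hWA
  obtain ⟨hi', hd'⟩ :=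
    hasDerivAt_integral_primitive (κ := κ') hW' hN' hN'0 hN'C hc hfin' hg hgD hgc hWA'
  set G : ℝ → ℝ := fun u => ∫ t in (0 : ℝ)..u, g t with hGdef
  have hGc : Continuous G := intervalIntegral.continuous_primitive
    (fun a b => hg.intervalIntegrable a b) 0
  have hGz : ∀ u ≤ c, G u = 0 := fun u hu => integral_eq_zero_of_le hc hgc hu
  have hG0 : ∀ u, 0 ≤ G u := by
    intro u
    rcases le_total u c with hu | hu
    · exact (hGz u hu).ge
    · exact intervalIntegral.integral_nonneg (hc.le.trans hu) fun t _ => hg0 t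
  have hslope := (hd'.sub hd).tendsto_slope_zero_right
  rw [← sub_nonneg]
  refine ge_of_tendsto hslope ?_
  filter_upwards [self_mem_nhdsWithin, nhdsWithin_le_nhds hi, nhdsWithin_le_nhds hi'] with
    ε hε hε1 hε2
  have hε0 : 0 < ε := hε
  have hbase : ∫ x, G (W' x) ∂μ = ∫ x, G (W x) ∂μ := (heq G hGc hGz).symm
  have hle : ∫ x, G (W x + ε * N x + κ * ε ^ 2) ∂μ ≤ ∫ x, G (W' x + ε * N' x + κ' * ε ^ 2) ∂μ := by
    rw [integral_eq_lintegral_of_nonneg_ae (Filter.Eventually.of_forall fun x => hG0 _) hε1.1,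
      integral_eq_lintegral_of_nonneg_ae (Filter.Eventually.of_forall fun x => hG0 _) hε2.1]
    refine ENNReal.toReal_mono ?_ (lintegral_primitive_le
      ((hW.add (hN.const_mul ε)).add_const _) ((hW'.add (hN'.const_mul ε)).add_const _) hc hg hg0
      hgc fun t ht => hlev ε t hε0 ht)
    exact (hε2.lintegral_lt_top).ne
  simp only [zero_add, smul_eq_mul, Pi.sub_apply, zero_mul, add_zero, ne_eq, OfNat.ofNat_ne_zero,
    not_false_eq_true, zero_pow, mul_zero]
  refine mul_nonneg (inv_nonneg.2 hε0.le) ?_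
  linarith

end Perturbation

theorem exists_norm_le_apply_eq {n : ℕ} (φ : EuclideanSpace ℝ (Fin n) →L[ℝ] ℝ) {ε : ℝ}
    (hε : 0 ≤ ε) : ∃ v, ‖v‖ ≤ ε ∧ φ v = ε * ‖φ‖ := by
  set v := (InnerProductSpace.toDual ℝ (EuclideanSpace ℝ (Fin n))).symm φ with hv
  have hnorm : ‖v‖ = ‖φ‖ := by simp [hv]
  rcases eq_or_ne v 0 with h | h
  · refine ⟨0, by simpa using hε, ?_⟩
    rw [← hnorm, h]
    simp
  · refine ⟨(ε / ‖v‖) • v, ?_, ?_⟩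
    · rw [norm_smul, Real.norm_of_nonneg (by positivity), div_mul_cancel₀ _ (norm_ne_zero_iff.2 h)]
    · have : φ v = ‖v‖ ^ 2 := by
        rw [← real_inner_self_eq_norm_sq, hv, InnerProductSpace.toDual_symm_apply]
      rw [map_smul, this, smul_eq_mul, ← hnorm]
      have := norm_ne_zero_iff.2 h
      field_simp

theorem norm_fderiv_radial {n : ℕ} {W : EuclideanSpace ℝ (Fin n) → ℝ} {R : ℝ → ℝ}
    (hWR : ∀ x, W x = R ‖x‖) {x : EuclideanSpace ℝ (Fin n)} (hx : x ≠ 0)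
    (hR : DifferentiableAt ℝ R ‖x‖) : ‖fderiv ℝ W x‖ = |deriv R ‖x‖| := by
  have : Nontrivial (EuclideanSpace ℝ (Fin n)) := ⟨x, 0, hx⟩
  have hd : DifferentiableAt ℝ (fun y : EuclideanSpace ℝ (Fin n) => ‖y‖) x :=
    (contDiffAt_norm ℝ hx (n := 1)).differentiableAt (by simp)
  have h1 : HasFDerivAt W (deriv R ‖x‖ • fderiv ℝ (fun y => ‖y‖) x) x := by
    rw [show W = R ∘ fun y => ‖y‖ from funext hWR]
    exact hR.hasDerivAt.comp_hasFDerivAt x hd.hasFDerivAt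
  rw [h1.fderiv, norm_smul, norm_fderiv_norm hd, mul_one, Real.norm_eq_abs]

/-- Superlevel sets of first order perturbations of a function are at least as large as those of
its radially decreasing rearrangement. -/
theorem volume_superlevel_le {n : ℕ} {V V₀ : EuclideanSpace ℝ (Fin n) → ℝ} {R ρ : ℝ → ℝ}
    {K K₀ : ℝ} (hV : ContDiff ℝ (⊤ : ℕ∞) V)
    (hK0 : 0 ≤ K)
    (hK : ∀ x y, |V y - V x - fderiv ℝ V x (y - x)| ≤ K * ‖y - x‖ ^ 2)
    (hK₀0 : 0 ≤ K₀)
    (hK₀ : ∀ x y, |V₀ y - V₀ x - fderiv ℝ V₀ x (y - x)| ≤ K₀ * ‖y - x‖ ^ 2)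
    (hV₀R : ∀ x, V₀ x = R ‖x‖) (hle : ∀ r s, 0 ≤ r → r ≤ s → R s ≤ R r)
    (hlt : ∀ r s, 0 ≤ r → r < s → 0 < R r ∨ 0 < R s → R s < R r)
    (hρ : ∀ t ∈ Set.Ioo 0 (R 0), 0 < ρ t ∧ R (ρ t) = t)
    (hvol : ∀ t, 0 < t → volume {x | t < V x} = volume {x | t < V₀ x})
    {ε t : ℝ} (hε : 0 < ε) (ht : 0 < t) :
    volume {x | t < V₀ x + ε * ‖fderiv ℝ V₀ x‖ + (-K₀) * ε ^ 2} ≤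
      volume {x | t < V x + ε * ‖fderiv ℝ V x‖ + K * ε ^ 2} := by
  have hstep : ∀ x, t < V₀ x + ε * ‖fderiv ℝ V₀ x‖ + (-K₀) * ε ^ 2 →
      ∃ v, ‖v‖ ≤ ε ∧ t < V₀ (x + v) := by
    intro x hx
    obtain ⟨v, hv, hφ⟩ := exists_norm_le_apply_eq (fderiv ℝ V₀ x) hε.le
    refine ⟨v, hv, ?_⟩
    have h1 := (abs_le.1 (hK₀ x (x + v))).1
    rw [add_sub_cancel_left, hφ] at h1
    have h2 : K₀ * ‖v‖ ^ 2 ≤ K₀ * ε ^ 2 := by gcongr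
    linarith
  rcases le_or_gt (R 0) t with hRt | hRt
  · have hempty : {x | t < V₀ x + ε * ‖fderiv ℝ V₀ x‖ + (-K₀) * ε ^ 2} = ∅ := by
      refine Set.eq_empty_of_forall_notMem fun x hx => ?_
      obtain ⟨v, -, hv⟩ := hstep x hx
      rw [hV₀R] at hv
      linarith [hle 0 ‖x + v‖ le_rfl (norm_nonneg _)]
    rw [hempty, measure_empty]
    exact zero_le
  obtain ⟨hr0, hRr⟩ := hρ t ⟨ht, hRt⟩
  have hball : ∀ x, t < V₀ x ↔ ‖x‖ < ρ t := by
    intro x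
    rw [hV₀R]
    constructor
    · intro h
      by_contra! hx
      linarith [hle (ρ t) ‖x‖ hr0.le hx]
    · intro h
      linarith [hlt ‖x‖ (ρ t) (norm_nonneg x) h (Or.inr (by rw [hRr]; exact ht))]
  have hset : {x | t < V₀ x} = Metric.ball 0 (ρ t) := by
    ext x
    rw [mem_ball_zero_iff]
    exact hball x
  have hsub : {x | t < V₀ x + ε * ‖fderiv ℝ V₀ x‖ + (-K₀) * ε ^ 2} ⊆ Metric.ball 0 (ρ t + ε) := by
    intro x hx
    obtain ⟨v, hv, hxv⟩ := hstep x hx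
    rw [hball] at hxv
    rw [mem_ball_zero_iff]
    calc ‖x‖ = ‖(x + v) - v‖ := by rw [add_sub_cancel_right]
      _ ≤ ‖x + v‖ + ‖v‖ := norm_sub_le _ _
      _ < ρ t + ε := by linarith
  refine (measure_mono hsub).trans ?_
  have hVc := hV.continuous
  have hNc := continuous_norm_fderiv hV
  refine volume_ball_add_le (A := {x | t < V x}) (measurableSet_lt measurable_const hVc.measurable)
    (measurableSet_lt measurable_const
      ((hVc.add (continuous_const.mul hNc)).add continuous_const).measurable)
    hr0 hε (by rw [hvol t ht, hset]) ?_
  intro x hx y hy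
  have hy' : ‖y‖ < ε := by simpa using hy
  have hx' : t < V x := hx
  have h1 := (abs_le.1 (hK (x + y) x)).2
  have hxy : x - (x + y) = -y := by abel
  rw [hxy, norm_neg, map_neg] at h1
  have h2 : |fderiv ℝ V (x + y) y| ≤ ‖fderiv ℝ V (x + y)‖ * ‖y‖ :=
    (fderiv ℝ V (x + y)).le_opNorm y
  have h3 : ‖fderiv ℝ V (x + y)‖ * ‖y‖ ≤ ε * ‖fderiv ℝ V (x + y)‖ := by
    rw [mul_comm]
    gcongr
  have h4 : K * ‖y‖ ^ 2 ≤ K * ε ^ 2 := by gcongr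
  have h5 := neg_abs_le (fderiv ℝ V (x + y) y)
  change t < V (x + y) + ε * ‖fderiv ℝ V (x + y)‖ + K * ε ^ 2
  linarith

/-- Comparison of a function with a radial profile along rays from a maximum point. -/
theorem profile_le_of_norm_fderiv_le {n : ℕ} {V : EuclideanSpace ℝ (Fin n) → ℝ} {R : ℝ → ℝ}
    (hV : Differentiable ℝ V) (hVnn : ∀ x, 0 ≤ V x)
    (hRc : ContinuousOn R (Set.Ici 0)) (hRd : ∀ r, 0 < r → DifferentiableAt ℝ R r)
    (hRnn : ∀ r, 0 ≤ r → 0 ≤ R r) (hle : ∀ r s, 0 ≤ r → r ≤ s → R s ≤ R r)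
    (hR' : ∀ r, 0 ≤ r → deriv R r = 0 → r = 0 ∨ R r = 0)
    (hgrad : ∀ x r, 0 < r → 0 < R r → V x = R r → ‖fderiv ℝ V x‖ ≤ |deriv R r|)
    {x₀ u : EuclideanSpace ℝ (Fin n)} (hx₀ : V x₀ = R 0) (hu : ‖u‖ = 1) {r : ℝ} (hr : 0 ≤ r) :
    R r ≤ V (x₀ + r • u) := by
  rcases (hRnn r hr).eq_or_lt with hR0 | hRpos
  · rw [← hR0]
    exact hVnn _
  have hneg : ∀ p, 0 < p → 0 < R p → deriv R p < 0 := by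
    intro p hp hRp
    have hanti : AntitoneOn R (Set.Ioi 0) := fun a ha b _ hab => hle a b (le_of_lt ha) hab
    have h1 := hanti.derivWithin_nonpos (x := p)
    rw [derivWithin_of_isOpen isOpen_Ioi hp] at h1
    refine lt_of_le_of_ne h1 fun h => ?_
    rcases hR' p hp.le h with h | h <;> linarith
  have hφ : ∀ s : ℝ, HasDerivAt (fun s : ℝ => V (x₀ + s • u)) (fderiv ℝ V (x₀ + s • u) u) s := by
    intro s
    have h1 : HasDerivAt (fun s : ℝ => x₀ + s • u) u s := by
      simpa using ((hasDerivAt_id s).smul_const u).const_add x₀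
    exact (hV _).hasFDerivAt.comp_hasDerivAt s h1
  have hRcont : ContinuousWithinAt (fun δ : ℝ => R ((1 + δ) * r + δ)) (Set.Ici 0) 0 := by
    refine ContinuousWithinAt.comp (t := Set.Ici 0) (hRc _ ?_) (by fun_prop) ?_
    · simpa using hr
    · intro δ hδ
      have : (0 : ℝ) ≤ δ := hδ
      simp only [Set.mem_Ici]
      positivity
  have htend : Filter.Tendsto (fun δ : ℝ => R ((1 + δ) * r + δ)) (nhdsWithin 0 (Set.Ioi 0))
      (nhds (R r)) := by
    have := hRcont.tendsto.mono_left (nhdsWithin_mono 0 Set.Ioi_subset_Ici_self)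
    simpa using this
  refine le_of_tendsto htend ?_
  filter_upwards [htend.eventually (lt_mem_nhds hRpos), self_mem_nhdsWithin] with δ hδR hδ
  have hδ0 : (0 : ℝ) < δ := hδ
  have harg : ∀ s, 0 ≤ s → 0 < (1 + δ) * s + δ := fun s hs => by positivity
  have hder : ∀ s, 0 ≤ s → HasDerivAt (fun s : ℝ => R ((1 + δ) * s + δ))
      (deriv R ((1 + δ) * s + δ) * (1 + δ)) s := by
    intro s hs
    have h1 : HasDerivAt (fun s : ℝ => (1 + δ) * s + δ) (1 + δ) s := by
      simpa using ((hasDerivAt_id s).const_mul (1 + δ)).add_const δ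
    exact (hRd _ (harg s hs)).hasDerivAt.comp s h1
  refine image_le_of_deriv_right_lt_deriv_boundary' (a := 0) (b := r)
    (f := fun s => R ((1 + δ) * s + δ)) (B := fun s => V (x₀ + s • u))
    (fun s hs => (hder s hs.1).continuousAt.continuousWithinAt)
    (fun s hs => (hder s hs.1).hasDerivWithinAt) ?_
    (fun s _ => (hφ s).continuousAt.continuousWithinAt)
    (fun s _ => (hφ s).hasDerivWithinAt) ?_ ⟨hr, le_rfl⟩
  · simp only [mul_zero, zero_add, zero_smul, add_zero, hx₀]
    exact hle 0 δ le_rfl hδ0.le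
  · intro s hs heq
    have hp := harg s hs.1
    have hRp : 0 < R ((1 + δ) * s + δ) := by
      refine hδR.trans_le (hle _ _ hp.le ?_)
      have := hs.2.le
      gcongr
    have h1 := hneg _ hp hRp
    have h2 := hgrad (x₀ + s • u) _ hp hRp heq.symm
    rw [abs_of_neg h1] at h2
    have h3 := (fderiv ℝ V (x₀ + s • u)).le_opNorm u
    rw [hu, mul_one, Real.norm_eq_abs] at h3
    have h4 := neg_abs_le (fderiv ℝ V (x₀ + s • u) u)
    nlinarith

section Away

variable {X : Type*} [MeasurableSpace X] {μ : Measure X}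

/-- Moments of high order determine integrals of functions supported away from zero. -/
theorem integral_comp_mul_eq_of_moments_ge {V w V₀ w₀ : X → ℝ} {A c : ℝ} {n : ℕ}
    (hV : Measurable V) (hV₀ : Measurable V₀)
    (hw : Integrable (fun x => V x ^ n * w x) μ) (hw₀ : Integrable (fun x => V₀ x ^ n * w₀ x) μ)
    (hV0 : ∀ x, 0 ≤ V x) (hVA : ∀ x, V x ≤ A) (hV₀0 : ∀ x, 0 ≤ V₀ x) (hV₀A : ∀ x, V₀ x ≤ A)
    (hmom : ∀ k : ℕ, n ≤ k → ∫ x, V x ^ k * w x ∂μ = ∫ x, V₀ x ^ k * w₀ x ∂μ)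
    {f : ℝ → ℝ} (hf : Continuous f) (hc : 0 < c) (hfc : ∀ t ≤ c, f t = 0) :
    ∫ x, f (V x) * w x ∂μ = ∫ x, f (V₀ x) * w₀ x ∂μ := by
  have hpos : ∀ t, 0 < max t c := fun t => lt_max_of_lt_right hc
  have hcont : Continuous fun t => f t / max t c ^ n :=
    hf.div ((continuous_id.max continuous_const).pow n) fun t => (pow_pos (hpos t) n).ne'
  have hf' : ∀ t u : ℝ, f t * u = f t / max t c ^ n * (t ^ n * u) := by
    intro t u
    rcases le_total t c with h | h
    · simp [hfc t h]
    · rw [max_eq_left h]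
      have : t ^ n ≠ 0 := (pow_pos (hc.trans_le h) n).ne'
      field_simp
  simp_rw [hf']
  refine integral_comp_mul_eq_of_moments hV hV₀ hw hw₀ hV0 hVA hV₀0 hV₀A (fun k => ?_) hcont
  simp_rw [← mul_assoc, ← pow_add]
  exact hmom (k + n) (Nat.le_add_left n k)

/-- Moments of high order determine the measure of superlevel sets. -/
theorem measure_superlevel_eq_of_moments_ge {V V₀ : X → ℝ} {A t : ℝ} {n : ℕ}
    (hV : Measurable V) (hV₀ : Measurable V₀)
    (hw : Integrable (fun x => V x ^ n) μ) (hw₀ : Integrable (fun x => V₀ x ^ n) μ)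
    (hV0 : ∀ x, 0 ≤ V x) (hVA : ∀ x, V x ≤ A) (hV₀0 : ∀ x, 0 ≤ V₀ x) (hV₀A : ∀ x, V₀ x ≤ A)
    (hmom : ∀ k : ℕ, n ≤ k → ∫ x, V x ^ k ∂μ = ∫ x, V₀ x ^ k ∂μ) (ht : 0 < t) :
    μ {x | t < V x} = μ {x | t < V₀ x} := by
  have hf : Measurable
      ((Set.Ioi t).indicator fun s : ℝ => (ENNReal.ofReal (s ^ n))⁻¹) := by
    refine Measurable.indicator ?_ measurableSet_Ioi
    fun_prop
  have hlev : ∀ {U : X → ℝ}, Measurable U →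
      ∫⁻ x, (Set.Ioi t).indicator (fun s : ℝ => (ENNReal.ofReal (s ^ n))⁻¹) (U x) *
        ENNReal.ofReal (U x ^ n) ∂μ = μ {x | t < U x} := by
    intro U hU
    rw [← lintegral_indicator_one (measurableSet_lt measurable_const hU)]
    refine lintegral_congr fun x => ?_
    by_cases hx : t < U x
    · have hp : 0 < U x ^ n := pow_pos (ht.trans hx) n
      rw [Set.indicator_of_mem (Set.mem_Ioi.2 hx),
        Set.indicator_of_mem (show x ∈ {x | t < U x} from hx),
        ENNReal.inv_mul_cancel (by simpa using hp) ENNReal.ofReal_ne_top, Pi.one_apply]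
    · rw [Set.indicator_of_notMem (by simpa using hx),
        Set.indicator_of_notMem (show x ∉ {x | t < U x} from hx), zero_mul]
  rw [← hlev hV, ← hlev hV₀]
  refine lintegral_comp_mul_eq_of_moments hV hV₀ hw hw₀ (hV.pow_const n) (hV₀.pow_const n)
    (fun x => pow_nonneg (hV0 x) n) (fun x => pow_nonneg (hV₀0 x) n) hV0 hVA hV₀0 hV₀A
    (fun k => ?_) hf
  simp_rw [← pow_add]
  exact hmom (k + n) (Nat.le_add_left n k)

end Away

theorem SuperExpDecay.integrable_of_eq_zero {n : ℕ} {W f : EuclideanSpace ℝ (Fin n) → ℝ}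
    (hW : SuperExpDecay W) (hf : Continuous f) {c : ℝ} (hc : 0 < c)
    (hfc : ∀ x, W x ≤ c → f x = 0) : Integrable f := by
  obtain ⟨T, hT⟩ := hW.exists_norm_le hc
  refine hf.integrable_of_hasCompactSupport
    (HasCompactSupport.intro (isCompact_closedBall 0 T) fun x hx => hfc x ?_)
  by_contra! h
  exact hx (mem_closedBall_zero_iff.2 (hT x h.le))

theorem SuperExpDecay.integrable_pow_mul {n : ℕ} {W w : EuclideanSpace ℝ (Fin n) → ℝ}
    (hW : SuperExpDecay W) (hc : Continuous W) (hw : Continuous w) {C : ℝ} (hC : ∀ x, |w x| ≤ C)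
    {k : ℕ} (hk : 1 ≤ k) : Integrable fun x => W x ^ k * w x := by
  obtain ⟨A, hA, hb⟩ := hW.exists_bound
  have h := (hW.integrable hc).bdd_mul (f := fun x => W x ^ (k - 1) * w x) (c := A ^ (k - 1) * C)
    ((hc.pow _).mul hw).aestronglyMeasurable (Filter.Eventually.of_forall fun x => by
      rw [norm_mul, norm_pow, Real.norm_eq_abs, Real.norm_eq_abs]
      have := hb x
      have := hC x
      gcongr)
  refine h.congr (Filter.Eventually.of_forall fun x => ?_)
  obtain ⟨m, rfl⟩ : ∃ m, k = m + 1 := ⟨k - 1, by omega⟩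
  simp only [add_tsub_cancel_right, pow_succ]
  ring

/-- Equality in the level set comparison forces the gradient to be that of the profile. -/
theorem norm_fderiv_eq_abs_deriv_profile {n : ℕ} {V V₀ : EuclideanSpace ℝ (Fin n) → ℝ}
    {R ρ : ℝ → ℝ} (hV : ContDiff ℝ (⊤ : ℕ∞) V) (hV₀ : ContDiff ℝ (⊤ : ℕ∞) V₀)
    (hVdec : SuperExpDecay V) (hV₀dec : SuperExpDecay V₀)
    (hRd : ∀ r, 0 < r → DifferentiableAt ℝ R r) (hRd' : ContinuousOn (deriv R) (Set.Ioi 0))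
    (hV₀R : ∀ x, V₀ x = R ‖x‖)
    (hlt : ∀ r s, 0 ≤ r → r < s → 0 < R r ∨ 0 < R s → R s < R r)
    (hρ : ∀ t ∈ Set.Ioo 0 (R 0), 0 < ρ t ∧ R (ρ t) = t)
    (hρc : ContinuousOn ρ (Set.Ioo 0 (R 0)))
    (heq : ∀ (f : ℝ → ℝ) (c : ℝ), Continuous f → 0 < c → (∀ t ≤ c, f t = 0) →
      ∫ x, f (V x) = ∫ x, f (V₀ x))
    (heq2 : ∀ (f : ℝ → ℝ) (c : ℝ), Continuous f → 0 < c → (∀ t ≤ c, f t = 0) →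
      ∫ x, f (V x) * ‖fderiv ℝ V x‖ ^ 2 = ∫ x, f (V₀ x) * ‖fderiv ℝ V₀ x‖ ^ 2)
    (hle : ∀ (g : ℝ → ℝ) (c D : ℝ), Continuous g → (∀ t, 0 ≤ g t) → (∀ t, |g t| ≤ D) → 0 < c →
      (∀ t ≤ c, g t = 0) →
      ∫ x, g (V₀ x) * ‖fderiv ℝ V₀ x‖ ≤ ∫ x, g (V x) * ‖fderiv ℝ V x‖)
    {x : EuclideanSpace ℝ (Fin n)} (hx : V x ∈ Set.Ioo 0 (R 0)) :
    ‖fderiv ℝ V x‖ = |deriv R (ρ (V x))| := by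
  set t₀ := V x with ht₀
  obtain ⟨a, ha0, hat⟩ := exists_between hx.1
  obtain ⟨d, hd0, hda, hdR⟩ : ∃ d, 0 < d ∧ a < t₀ - d ∧ t₀ + d < R 0 := by
    have h1 : 0 < min (t₀ - a) (R 0 - t₀) := lt_min (by linarith) (by linarith [hx.2])
    obtain ⟨d, hd, hd'⟩ := exists_between h1
    exact ⟨d, hd, by linarith [hd'.trans_le (min_le_left _ _)],
      by linarith [hd'.trans_le (min_le_right _ _)]⟩
  set κ : ℝ → ℝ := fun t => max (t₀ - d) (min t (t₀ + d)) with hκ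
  have hκc : Continuous κ := continuous_const.max (continuous_id.min continuous_const)
  have hκI : ∀ t, κ t ∈ Set.Icc (t₀ - d) (t₀ + d) := fun t =>
    ⟨le_max_left _ _, max_le (by linarith) (min_le_right _ _)⟩
  have hIccsub : Set.Icc (t₀ - d) (t₀ + d) ⊆ Set.Ioo 0 (R 0) := fun t ht =>
    ⟨by linarith [ht.1], by linarith [ht.2]⟩
  have hκid : ∀ t ∈ Set.Icc (t₀ - d) (t₀ + d), κ t = t := fun t ht => by
    simp only [hκ]
    rw [min_eq_left ht.2, max_eq_right ht.1]
  have hQ : ContinuousOn (fun t => |deriv R (ρ t)|) (Set.Ioo 0 (R 0)) :=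
    (hRd'.comp hρc fun t ht => (hρ t ht).1).abs
  set q : ℝ → ℝ := fun t => |deriv R (ρ (κ t))| with hq
  have hqc : Continuous q := hQ.comp_continuous hκc fun t => hIccsub (hκI t)
  have hq0 : ∀ t, 0 ≤ q t := fun t => abs_nonneg _
  obtain ⟨D, hD⟩ := isCompact_Icc.exists_bound_of_continuousOn (hQ.mono hIccsub)
  have hqD : ∀ t, q t ≤ D := fun t => (le_abs_self _).trans (hD _ (hκI t))
  set g : ℝ → ℝ := fun t => max 0 (d - |t - t₀|) with hg
  have hgc : Continuous g := by fun_prop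
  have hg0 : ∀ t, 0 ≤ g t := fun t => le_max_left _ _
  have hgd : ∀ t, g t ≤ d := fun t => max_le hd0.le (by linarith [abs_nonneg (t - t₀)])
  have hgI : ∀ t, t ∉ Set.Icc (t₀ - d) (t₀ + d) → g t = 0 := by
    intro t ht
    refine max_eq_left ?_
    by_contra! h
    have h' := abs_lt.1 (show |t - t₀| < d by linarith)
    exact ht ⟨by linarith [h'.1], by linarith [h'.2]⟩
  have hga : ∀ t ≤ a, g t = 0 := fun t ht => hgI t fun h => by linarith [h.1]
  have hN := continuous_norm_fderiv hV
  have hN₀ := continuous_norm_fderiv hV₀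
  have hVc := hV.continuous
  have hV₀c := hV₀.continuous
  have hexp : ∀ {W N : EuclideanSpace ℝ (Fin n) → ℝ}, SuperExpDecay W → Continuous W →
      Continuous N → ∫ y, g (W y) * (N y - q (W y)) ^ 2 =
        (∫ y, g (W y) * N y ^ 2) - 2 * (∫ y, (g (W y) * q (W y)) * N y)
          + ∫ y, g (W y) * q (W y) ^ 2 := by
    intro W N hWd hWc hNc
    have i1 : Integrable fun y => g (W y) * N y ^ 2 :=
      hWd.integrable_of_eq_zero (by fun_prop) ha0 fun y hy => by simp [hga _ hy]
    have i2 : Integrable fun y => (g (W y) * q (W y)) * N y :=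
      hWd.integrable_of_eq_zero (by fun_prop) ha0 fun y hy => by simp [hga _ hy]
    have i3 : Integrable fun y => g (W y) * q (W y) ^ 2 :=
      hWd.integrable_of_eq_zero (by fun_prop) ha0 fun y hy => by simp [hga _ hy]
    have i4 : Integrable fun y => g (W y) * N y ^ 2 - 2 * ((g (W y) * q (W y)) * N y) :=
      i1.sub (i2.const_mul 2)
    rw [← integral_const_mul, ← integral_sub i1 (i2.const_mul 2), ← integral_add i4 i3]
    refine integral_congr_ae (Filter.Eventually.of_forall fun y => ?_)
    simp only
    ring
  have hzero₀ : ∀ y, g (V₀ y) * (‖fderiv ℝ V₀ y‖ - q (V₀ y)) ^ 2 = 0 := by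
    intro y
    by_cases hy : V₀ y ∈ Set.Icc (t₀ - d) (t₀ + d)
    swap
    · rw [hgI _ hy, zero_mul]
    have hyI := hIccsub hy
    have hy0 : y ≠ 0 := by
      rintro rfl
      have := hyI.2
      rw [hV₀R, norm_zero] at this
      exact lt_irrefl _ this
    obtain ⟨h1, h2⟩ := hρ _ hyI
    have hρy : ρ (V₀ y) = ‖y‖ := by
      have hpos := hyI.1
      rcases lt_trichotomy (ρ (V₀ y)) ‖y‖ with h | h | h
      · have := hlt _ _ h1.le h (Or.inl (by rw [h2]; exact hpos))
        rw [h2, hV₀R] at this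
        exact absurd this (lt_irrefl _)
      · exact h
      · have := hlt _ _ (norm_nonneg y) h (Or.inr (by rw [h2]; exact hpos))
        rw [h2, hV₀R] at this
        exact absurd this (lt_irrefl _)
    have : q (V₀ y) = ‖fderiv ℝ V₀ y‖ := by
      simp only [hq]
      rw [hκid _ hy, hρy, norm_fderiv_radial hV₀R hy0 (hRd _ (norm_pos_iff.2 hy0))]
    rw [this, sub_self]
    simp
  have hfinal : ∫ y, g (V y) * (‖fderiv ℝ V y‖ - q (V y)) ^ 2 ≤ 0 := by
    have e0 : ∫ y, g (V₀ y) * (‖fderiv ℝ V₀ y‖ - q (V₀ y)) ^ 2 = 0 := by simp [hzero₀]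
    have e1 := heq2 g a hgc ha0 hga
    have e2 := heq (fun t => g t * q t ^ 2) a (by fun_prop) ha0 fun t ht => by simp [hga t ht]
    have e3 := hle (fun t => g t * q t) a (d * D) (by fun_prop)
      (fun t => mul_nonneg (hg0 t) (hq0 t))
      (fun t => by
        rw [abs_of_nonneg (mul_nonneg (hg0 t) (hq0 t))]
        exact mul_le_mul (hgd t) (hqD t) (hq0 t) hd0.le) ha0 fun t ht => by simp [hga t ht]
    rw [hexp hVdec hVc hN]
    rw [hexp hV₀dec hV₀c hN₀] at e0
    linarith
  have hcont : Continuous fun y => g (V y) * (‖fderiv ℝ V y‖ - q (V y)) ^ 2 := by fun_prop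
  have hnn : 0 ≤ fun y => g (V y) * (‖fderiv ℝ V y‖ - q (V y)) ^ 2 := fun y =>
    mul_nonneg (hg0 _) (sq_nonneg _)
  have hintg : Integrable fun y => g (V y) * (‖fderiv ℝ V y‖ - q (V y)) ^ 2 :=
    hVdec.integrable_of_eq_zero hcont ha0 fun y hy => by simp [hga _ hy]
  have hae := (integral_eq_zero_iff_of_nonneg hnn hintg).1
    (le_antisymm hfinal (integral_nonneg hnn))
  have hx0 : g t₀ * (‖fderiv ℝ V x‖ - q t₀) ^ 2 = 0 :=
    congrFun ((hcont.ae_eq_iff_eq volume continuous_const).1 hae) x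
  have hgx : g t₀ = d := by simp [hg, hd0.le]
  have hqx : q t₀ = |deriv R (ρ t₀)| := by
    simp only [hq]
    rw [hκid t₀ ⟨by linarith, by linarith⟩]
  rw [hgx, hqx] at hx0
  exact sub_eq_zero.1 (pow_eq_zero_iff two_ne_zero |>.1 ((mul_eq_zero_iff_left hd0.ne').1 hx0))

theorem statement0 (n : ℕ) (hn : 1 ≤ n)
    (V V₀ : EuclideanSpace ℝ (Fin n) → ℝ)
    (hV : ContDiff ℝ (⊤ : ℕ∞) V) (hV₀ : ContDiff ℝ (⊤ : ℕ∞) V₀)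
    (hVnn : ∀ x, 0 ≤ V x) (hV₀nn : ∀ x, 0 ≤ V₀ x)
    (hVdec : SuperExpDecay V) (hV₀dec : SuperExpDecay V₀)
    (R : ℝ → ℝ) (hR : ContDiffOn ℝ (⊤ : ℕ∞) R (Set.Ici 0))
    (hRnn : ∀ r, 0 ≤ r → 0 ≤ R r)
    (hV₀R : ∀ x, V₀ x = R ‖x‖)
    (hR' : ∀ r, 0 ≤ r → deriv R r = 0 → r = 0 ∨ R r = 0)
    (hmom : ∀ k : ℕ, n ≤ k →
      ∫ x, (V x) ^ k = ∫ x, (V₀ x) ^ k)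
    (hmom2 : ∀ k : ℕ, n ≤ k →
      ∫ x, (V x) ^ k * ‖gradient V x‖ ^ 2 = ∫ x, (V₀ x) ^ k * ‖gradient V₀ x‖ ^ 2) :
    ∃ x₀ : EuclideanSpace ℝ (Fin n), ∀ x, V x = V₀ (x - x₀) := by
  simp_rw [norm_gradient_eq_norm_fderiv] at hmom2
  have hVc := hV.continuous
  have hV₀c := hV₀.continuous
  have hN := continuous_norm_fderiv hV
  have hN₀ := continuous_norm_fderiv hV₀
  obtain ⟨A, -, hA⟩ := hVdec.exists_bound
  obtain ⟨A₀, -, hA₀⟩ := hV₀dec.exists_bound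
  obtain ⟨C, -, hC⟩ := hVdec.exists_norm_fderiv_le
  obtain ⟨C₀, -, hC₀⟩ := hV₀dec.exists_norm_fderiv_le
  have hVM : ∀ x, V x ≤ max A A₀ := fun x => (le_abs_self _).trans ((hA x).trans (le_max_left _ _))
  have hV₀M : ∀ x, V₀ x ≤ max A A₀ := fun x =>
    (le_abs_self _).trans ((hA₀ x).trans (le_max_right _ _))
  have hsq : ∀ {W : EuclideanSpace ℝ (Fin n) → ℝ} {K : ℝ}, (∀ x, ‖fderiv ℝ W x‖ ≤ K) →
      ∀ x, |‖fderiv ℝ W x‖ ^ 2| ≤ K ^ 2 := by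
    intro W K h x
    rw [abs_of_nonneg (by positivity)]
    exact pow_le_pow_left₀ (norm_nonneg _) (h x) 2
  have hintg : Integrable fun x => V x ^ n * 1 :=
    hVdec.integrable_pow_mul hVc continuous_const (C := 1) (by simp) hn
  have hintg₀ : Integrable fun x => V₀ x ^ n * 1 :=
    hV₀dec.integrable_pow_mul hV₀c continuous_const (C := 1) (by simp) hn
  have hpow : Integrable fun x => V x ^ n := by simpa using hintg
  have hpow₀ : Integrable fun x => V₀ x ^ n := by simpa using hintg₀
  have heq : ∀ (f : ℝ → ℝ) (c : ℝ), Continuous f → 0 < c → (∀ t ≤ c, f t = 0) →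
      ∫ x, f (V x) = ∫ x, f (V₀ x) := by
    intro f c hf hc hfc
    simpa using integral_comp_mul_eq_of_moments_ge hVc.measurable hV₀c.measurable hintg hintg₀ hVnn
      hVM hV₀nn hV₀M (by simpa using hmom) hf hc hfc
  have heq2 : ∀ (f : ℝ → ℝ) (c : ℝ), Continuous f → 0 < c → (∀ t ≤ c, f t = 0) →
      ∫ x, f (V x) * ‖fderiv ℝ V x‖ ^ 2 = ∫ x, f (V₀ x) * ‖fderiv ℝ V₀ x‖ ^ 2 :=
    fun f c hf hc hfc => integral_comp_mul_eq_of_moments_ge hVc.measurable hV₀c.measurable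
      (hVdec.integrable_pow_mul hVc (hN.pow 2) (hsq hC) hn)
      (hV₀dec.integrable_pow_mul hV₀c (hN₀.pow 2) (hsq hC₀) hn)
      hVnn hVM hV₀nn hV₀M hmom2 hf hc hfc
  have hvol : ∀ t, 0 < t → volume {x | t < V x} = volume {x | t < V₀ x} := fun t ht =>
    measure_superlevel_eq_of_moments_ge hVc.measurable hV₀c.measurable hpow hpow₀ hVnn hVM hV₀nn
      hV₀M hmom ht
  have hRc := hR.continuousOn
  have hRd : ∀ r, 0 < r → DifferentiableAt ℝ R r := fun r hr =>
    (hR.contDiffAt (Ici_mem_nhds hr)).differentiableAt (by simp)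
  have hRd' : ContinuousOn (deriv R) (Set.Ioi 0) :=
    (hR.mono Set.Ioi_subset_Ici_self).continuousOn_deriv_of_isOpen isOpen_Ioi (by simp)
  have hRdec : ∀ c > 0, ∃ T, ∀ r, 0 ≤ r → c ≤ R r → r ≤ T := by
    intro c hc
    obtain ⟨T, hT⟩ := hV₀dec.exists_norm_le hc
    refine ⟨T, fun r hr hcr => ?_⟩
    have hnorm : ‖EuclideanSpace.single (⟨0, hn⟩ : Fin n) r‖ = r := by
      rw [PiLp.norm_single, Real.norm_of_nonneg hr]
    have := hT (EuclideanSpace.single (⟨0, hn⟩ : Fin n) r) (by rwa [hV₀R, hnorm])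
    rwa [hnorm] at this
  have hlt : ∀ r s, 0 ≤ r → r < s → 0 < R r ∨ 0 < R s → R s < R r := fun r s hr hrs h =>
    profile_lt_of_lt hRc hRdec hR' hr hrs h
  have hle : ∀ r s, 0 ≤ r → r ≤ s → R s ≤ R r := fun r s hr hrs =>
    profile_le_of_le hRc hRnn hRdec hR' hr hrs
  obtain ⟨ρ, hρ, hρc⟩ := exists_continuousOn_inverse hRc hRdec hlt
  obtain ⟨K, hK0, hK⟩ := hVdec.exists_taylor hV
  obtain ⟨K₀, hK₀0, hK₀⟩ := hV₀dec.exists_taylor hV₀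
  have hfin : ∀ {W : EuclideanSpace ℝ (Fin n) → ℝ}, SuperExpDecay W → ∀ c, 0 < c →
      volume {x | c / 2 ≤ W x} ≠ ⊤ := by
    intro W hW c hc
    obtain ⟨T, hT⟩ := hW.exists_norm_le (half_pos hc)
    refine ((measure_mono fun x hx => ?_).trans_lt
      (measure_closedBall_lt_top (x := (0 : EuclideanSpace ℝ (Fin n))) (r := T))).ne
    exact mem_closedBall_zero_iff.2 (hT x hx)
  have hvar : ∀ (g : ℝ → ℝ) (c D : ℝ), Continuous g → (∀ t, 0 ≤ g t) → (∀ t, |g t| ≤ D) → 0 < c →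
      (∀ t ≤ c, g t = 0) →
      ∫ x, g (V₀ x) * ‖fderiv ℝ V₀ x‖ ≤ ∫ x, g (V x) * ‖fderiv ℝ V x‖ :=
    fun g c D hg hg0 hgD hc hgc => integral_comp_mul_le_of_superlevel hV₀c.measurable
      hN₀.measurable hVc.measurable hN.measurable (fun x => norm_nonneg _) hC₀
      (fun x => norm_nonneg _) hC hc (hfin hV₀dec c hc) (hfin hVdec c hc) hg hg0 hgD hgc
      ⟨A₀, hA₀⟩ ⟨A, hA⟩ (fun f hf hfc => (heq f c hf hc hfc).symm)
      fun ε t hε ht => volume_superlevel_le hV hK0 hK hK₀0 hK₀ hV₀R hle hlt hρ hvol hε ht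
  have hgrad : ∀ x r, 0 < r → 0 < R r → V x = R r → ‖fderiv ℝ V x‖ ≤ |deriv R r| := by
    intro x r hr hRr hxr
    have hxI : V x ∈ Set.Ioo 0 (R 0) := by
      rw [hxr]
      exact ⟨hRr, hlt 0 r le_rfl hr (Or.inr hRr)⟩
    obtain ⟨h1, h2⟩ := hρ _ hxI
    have hρr : ρ (V x) = r := by
      rcases lt_trichotomy (ρ (V x)) r with h | h | h
      · linarith [hlt _ _ h1.le h (Or.inr hRr)]
      · exact h
      · linarith [hlt _ _ hr.le h (Or.inl hRr)]
    rw [norm_fderiv_eq_abs_deriv_profile hV hV₀ hVdec hV₀dec hRd hRd' hV₀R hlt hρ hρc heq heq2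
      hvar hxI, hρr]
  have hVR : ∀ x, V x ≤ R 0 := by
    intro x
    by_contra! h
    obtain ⟨t, ht, htx⟩ := exists_between h
    have hempty : {x | t < V₀ x} = ∅ := by
      refine Set.eq_empty_of_forall_notMem fun y hy => ?_
      have hy' : t < V₀ y := hy
      rw [hV₀R] at hy'
      linarith [hle 0 ‖y‖ le_rfl (norm_nonneg y)]
    have hz := hvol t ((hRnn 0 le_rfl).trans_lt ht)
    rw [hempty, measure_empty] at hz
    have := (isOpen_lt continuous_const hVc).measure_eq_zero_iff volume |>.1 hz
    exact (Set.eq_empty_iff_forall_notMem.1 this x) htx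
  obtain ⟨x₀, hx₀⟩ : ∃ x₀, V x₀ = R 0 := by
    rcases (hRnn 0 le_rfl).eq_or_lt with h0 | h0
    · exact ⟨0, le_antisymm (hVR 0) (h0 ▸ hVnn 0)⟩
    have hne : ∀ t, 0 < t → t < R 0 → ∃ x, t < V x := by
      intro t ht htR
      have hpos : 0 < volume {x | t < V₀ x} := by
        refine (isOpen_lt continuous_const hV₀c).measure_pos volume ⟨0, ?_⟩
        simpa [hV₀R] using htR
      rw [← hvol t ht] at hpos
      exact nonempty_of_measure_ne_zero hpos.ne'
    obtain ⟨T, hT⟩ := hVdec.exists_norm_le (half_pos h0)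
    obtain ⟨y, hy⟩ := hne (R 0 / 2) (half_pos h0) (half_lt_self h0)
    obtain ⟨x₀, -, hmax⟩ := (isCompact_closedBall (0 : EuclideanSpace ℝ (Fin n)) T).exists_isMaxOn
      ⟨y, mem_closedBall_zero_iff.2 (hT y hy.le)⟩ hVc.continuousOn
    refine ⟨x₀, le_antisymm (hVR x₀) ?_⟩
    by_contra! h
    obtain ⟨z, hz⟩ := hne (max (V x₀) (R 0 / 2)) (lt_max_of_lt_right (half_pos h0))
      (max_lt h (half_lt_self h0))
    have hz1 := (le_max_left _ _).trans_lt hz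
    have hz2 := (le_max_right _ _).trans_lt hz
    exact absurd (hmax (mem_closedBall_zero_iff.2 (hT z hz2.le))) (not_le.2 hz1)
  have hge : ∀ x, V₀ (x - x₀) ≤ V x := by
    intro x
    rcases eq_or_ne x x₀ with rfl | hne
    · rw [hV₀R, sub_self, norm_zero, hx₀]
    have hpos : ‖x - x₀‖ ≠ 0 := norm_ne_zero_iff.2 (sub_ne_zero.2 hne)
    have h := profile_le_of_norm_fderiv_le (hV.differentiable (by simp)) hVnn hRc hRd hRnn hle hR'
      hgrad hx₀ (u := ‖x - x₀‖⁻¹ • (x - x₀)) (by rw [norm_smul, norm_inv, norm_norm,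
        inv_mul_cancel₀ hpos]) (norm_nonneg (x - x₀))
    rwa [smul_smul, mul_inv_cancel₀ hpos, one_smul, add_sub_cancel, ← hV₀R] at h
  refine ⟨x₀, fun x => ?_⟩
  have hshift : Integrable fun x => V₀ (x - x₀) ^ n := hpow₀.comp_sub_right x₀
  have hnn : 0 ≤ fun x => V x ^ n - V₀ (x - x₀) ^ n := fun x =>
    sub_nonneg.2 (pow_le_pow_left₀ (hV₀nn _) (hge x) n)
  have hzero : ∫ x, (V x ^ n - V₀ (x - x₀) ^ n) = 0 := by
    rw [integral_sub hpow hshift, integral_sub_right_eq_self (fun x => V₀ x ^ n) x₀,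
      hmom n le_rfl, sub_self]
  have hae := (integral_eq_zero_iff_of_nonneg hnn (hpow.sub hshift)).1 hzero
  have hcont : Continuous fun x => V x ^ n - V₀ (x - x₀) ^ n := by fun_prop
  have h : V x ^ n - V₀ (x - x₀) ^ n = 0 :=
    congrFun ((hcont.ae_eq_iff_eq volume continuous_const).1 hae) x
  exact (pow_left_inj₀ (hVnn x) (hV₀nn _) (by omega)).1 (sub_eq_zero.1 h)
end

section
/- Let n ≥ 1 be odd. There exists an even Schwartz function g: ℝ → ℝ whose Fourier transform ĝ(t) = ∫_ℝ g(τ) e^{−itτ} dτ is smooth, compactly supported, and vanishes on a neighborhood of 0, such that, with f: [0,∞) → ℝ defined by f(σ) = g(√σ) (so f(τ²) = g(τ), and f is smooth on [0,∞)), one has ∫_{ℝⁿ} f^{(k)}(|ξ|²) dξ ≠ 0 for every integer k ≥ n. -/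
open MeasureTheory Real Filter

/-- Fourier transform with the convention `ĝ(t) = ∫ g(τ) e^{-itτ} dτ`. -/
noncomputable def fourierTr (g : ℝ → ℝ) (t : ℝ) : ℂ :=
  ∫ τ : ℝ, (g τ : ℂ) * Complex.exp (-Complex.I * t * τ)

open scoped FourierTransform SchwartzMap ContDiff

/-- Nonzero, nonnegative, even test functions on the line. -/
structure IsEvenBump (φ : ℝ → ℝ) : Prop where
  contDiff : ContDiff ℝ ∞ φ
  hasCompactSupport : HasCompactSupport φ
  even : ∀ x, φ (-x) = φ x
  nonneg : ∀ x, 0 ≤ φ x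
  exists_pos : ∃ x, 0 < x ∧ 0 < φ x

namespace IsEvenBump

variable {φ ψ : ℝ → ℝ}

theorem exists_primitive (h : IsEvenBump φ) :
    ∃ ψ, IsEvenBump ψ ∧ 0 < ψ 0 ∧ ∀ v, HasDerivAt ψ (-(v * φ v)) v := by
  obtain ⟨R, hR, hsupp⟩ : ∃ R : ℝ, 0 < R ∧ ∀ x, R ≤ x → φ x = 0 := by
    obtain ⟨R, hR, hs⟩ := h.hasCompactSupport.isCompact.isBounded.exists_pos_norm_lt
    refine ⟨R, hR, fun x hx => ?_⟩
    by_contra hne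
    have := hs x (subset_tsupport _ hne)
    rw [Real.norm_eq_abs] at this
    exact absurd (le_abs_self x) (by linarith)
  have hcont : Continuous fun v => v * φ v := continuous_id.mul h.contDiff.continuous
  set ψ : ℝ → ℝ := fun u => ∫ v in u..R, v * φ v with hψ
  have hderiv : ∀ v, HasDerivAt ψ (-(v * φ v)) v := fun v =>
    intervalIntegral.integral_hasDerivAt_left (hcont.intervalIntegrable _ _)
      hcont.stronglyMeasurable.stronglyMeasurableAtFilter hcont.continuousAt
  have heven : ∀ u, ψ (-u) = ψ u := by
    intro u
    have hodd : ∫ v in (-u)..u, v * φ v = 0 := by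
      have h1 := intervalIntegral.integral_comp_neg (a := -u) (b := u) fun v => v * φ v
      simp only [h.even, neg_mul, neg_neg, intervalIntegral.integral_neg] at h1
      linarith
    simp only [hψ]
    rw [← intervalIntegral.integral_add_adjacent_intervals
      (hcont.intervalIntegrable (-u) u) (hcont.intervalIntegrable u R), hodd, zero_add]
  have hzero : ∀ u, R ≤ u → ψ u = 0 := by
    intro u hu
    refine intervalIntegral.integral_zero_ae (ae_of_all _ fun v hv => ?_)
    rw [Set.uIoc_of_ge hu] at hv
    rw [hsupp v hv.1.le, mul_zero]
  have hnonneg : ∀ u, 0 ≤ u → 0 ≤ ψ u := by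
    intro u hu
    rcases le_total u R with huR | huR
    · exact intervalIntegral.integral_nonneg huR fun v hv =>
        mul_nonneg (hu.trans hv.1) (h.nonneg v)
    · exact (hzero u huR).ge
  have hpos : 0 < ψ 0 := by
    obtain ⟨x, hx, hφx⟩ := h.exists_pos
    have hxR : x ≤ R := by
      by_contra! hlt
      exact hφx.ne' (hsupp x hlt.le)
    exact intervalIntegral.integral_pos hR hcont.continuousOn
      (fun v hv => mul_nonneg hv.1.le (h.nonneg v)) ⟨x, ⟨hx.le, hxR⟩, mul_pos hx hφx⟩
  have hsmooth : ContDiff ℝ ∞ ψ := by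
    rw [contDiff_infty_iff_deriv]
    refine ⟨fun v => (hderiv v).differentiableAt, ?_⟩
    rw [funext fun v => (hderiv v).deriv]
    exact (contDiff_id.mul h.contDiff).neg
  refine ⟨ψ, ⟨hsmooth, ?_, heven, fun u => ?_, ?_⟩, hpos, hderiv⟩
  · refine HasCompactSupport.intro (isCompact_Icc (a := -R) (b := R)) fun u hu => ?_
    rcases le_total R u with hRu | hRu
    · exact hzero u hRu
    · rw [← heven]
      exact hzero _ (by by_contra! hlt; exact hu ⟨by linarith, hRu⟩)
  · rcases le_total 0 u with hu | hu
    · exact hnonneg u hu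
    · rw [← heven]
      exact hnonneg _ (by linarith)
  · have hev : ∀ᶠ u in nhdsWithin 0 (Set.Ioi 0), 0 < ψ u :=
      (hsmooth.continuous.continuousAt.eventually (lt_mem_nhds hpos)).filter_mono
        nhdsWithin_le_nhds
    obtain ⟨x, hx, hx0⟩ := (hev.and self_mem_nhdsWithin).exists
    exact ⟨x, hx0, hx⟩

theorem exists_eq_zero_near : ∃ φ, IsEvenBump φ ∧ ∀ᶠ t in nhds (0 : ℝ), φ t = 0 := by
  let b : ContDiffBump (2 : ℝ) := ⟨1 / 2, 1, by norm_num, by norm_num⟩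
  have hb : ∀ x : ℝ, x ≤ 1 → b x = 0 := by
    intro x hx
    refine b.zero_of_le_dist ?_
    rw [Real.dist_eq, abs_sub_comm]
    exact (by linarith : (1 : ℝ) ≤ 2 - x).trans (le_abs_self _)
  refine ⟨fun x => b x + b (-x), ⟨?_, ?_, ?_, ?_, 2, two_pos, ?_⟩, ?_⟩
  · exact b.contDiff.add (b.contDiff.comp contDiff_neg)
  · exact b.hasCompactSupport.add (b.hasCompactSupport.comp_homeomorph (Homeomorph.neg ℝ))
  · intro x
    simp [add_comm]
  · exact fun x => add_nonneg b.nonneg b.nonneg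
  · exact add_pos_of_pos_of_nonneg (b.pos_of_mem_ball (by simp [b])) b.nonneg
  · filter_upwards [Icc_mem_nhds (show (-1 : ℝ) < 0 by norm_num) one_pos] with x hx
    rw [hb x hx.2, hb (-x) (by linarith [hx.1]), add_zero]

theorem contDiff_ofReal (h : IsEvenBump φ) : ContDiff ℝ ∞ fun v => (φ v : ℂ) :=
  Complex.ofRealCLM.contDiff.comp h.contDiff

theorem hasCompactSupport_ofReal (h : IsEvenBump φ) :
    HasCompactSupport fun v => (φ v : ℂ) :=
  h.hasCompactSupport.comp_left (g := fun x : ℝ => (x : ℂ)) Complex.ofReal_zero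

theorem fourier_even (h : IsEvenBump φ) (τ : ℝ) :
    𝓕 (fun v => (φ v : ℂ)) (-τ) = 𝓕 (fun v => (φ v : ℂ)) τ := by
  rw [Real.fourier_real_eq, Real.fourier_real_eq,
    ← integral_neg_eq_self (fun v : ℝ => 𝐞 (-(v * -τ)) • (φ v : ℂ))]
  simp [h.even]

theorem conj_fourier (h : IsEvenBump φ) (τ : ℝ) :
    (starRingEnd ℂ) (𝓕 (fun v => (φ v : ℂ)) τ) = 𝓕 (fun v => (φ v : ℂ)) τ := by
  rw [← h.fourier_even τ]
  conv_rhs => rw [h.fourier_even τ]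
  rw [Real.fourier_real_eq_integral_exp_smul, Real.fourier_real_eq_integral_exp_smul,
    ← integral_conj]
  refine integral_congr_ae (ae_of_all _ fun v => ?_)
  simp [← Complex.exp_conj, Complex.conj_ofNat]

theorem exists_schwartzMap (h : IsEvenBump φ) :
    ∃ g : 𝓢(ℝ, ℝ), ∀ τ, (g τ : ℂ) = 𝓕 (fun v => (φ v : ℂ)) τ := by
  let H : 𝓢(ℝ, ℂ) := h.hasCompactSupport_ofReal.toSchwartzMap h.contDiff_ofReal
  refine ⟨SchwartzMap.postcompCLM (𝕜 := ℝ) Complex.reCLM (𝓕 H), fun τ => ?_⟩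
  exact Complex.conj_eq_iff_re.mp (h.conj_fourier τ)

theorem fourierTr_eq (h : IsEvenBump φ) {g : 𝓢(ℝ, ℝ)}
    (hg : ∀ τ, (g τ : ℂ) = 𝓕 (fun v => (φ v : ℂ)) τ) (t : ℝ) :
    fourierTr g t = φ ((2 * π)⁻¹ * t) := by
  let H : 𝓢(ℝ, ℂ) := h.hasCompactSupport_ofReal.toSchwartzMap h.contDiff_ofReal
  have hinv : 𝓕⁻ (𝓕 H) (-((2 * π)⁻¹ * t)) = H (-((2 * π)⁻¹ * t)) := by
    rw [FourierTransform.fourierInv_fourier_eq]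
  have hH : H (-((2 * π)⁻¹ * t)) = φ ((2 * π)⁻¹ * t) :=
    congrArg Complex.ofReal (h.even _)
  rw [← hH, ← hinv, SchwartzMap.fourierInv_coe, SchwartzMap.fourier_coe,
    Real.fourierInv_eq_fourier_neg, neg_neg, Real.fourier_real_eq_integral_exp_smul, fourierTr]
  refine integral_congr_ae (ae_of_all _ fun v => ?_)
  simp only [hg, smul_eq_mul]
  rw [mul_comm]
  congr 2
  have : (π : ℂ) ≠ 0 := Complex.ofReal_ne_zero.mpr pi_ne_zero
  push_cast
  field_simp

theorem integral_eq (h : IsEvenBump φ) {g : 𝓢(ℝ, ℝ)}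
    (hg : ∀ τ, (g τ : ℂ) = 𝓕 (fun v => (φ v : ℂ)) τ) : ∫ τ, g τ = φ 0 := by
  have := h.fourierTr_eq hg 0
  simp only [fourierTr, Complex.ofReal_zero, mul_zero, zero_mul, Complex.exp_zero, mul_one,
    integral_complex_ofReal] at this
  exact_mod_cast this

theorem deriv_eq (hφ : IsEvenBump φ) (hψ : IsEvenBump ψ)
    (hd : ∀ v, HasDerivAt ψ (-(v * φ v)) v) {g₀ g₁ : 𝓢(ℝ, ℝ)}
    (hg₀ : ∀ τ, (g₀ τ : ℂ) = 𝓕 (fun v => (φ v : ℂ)) τ)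
    (hg₁ : ∀ τ, (g₁ τ : ℂ) = 𝓕 (fun v => (ψ v : ℂ)) τ) (τ : ℝ) :
    HasDerivAt g₀ (-(4 * π ^ 2) * τ * g₁ τ) τ := by
  have hint : Integrable fun v => (φ v : ℂ) :=
    hφ.contDiff_ofReal.continuous.integrable_of_hasCompactSupport hφ.hasCompactSupport_ofReal
  have hint' : Integrable fun v : ℝ => v • (φ v : ℂ) :=
    (continuous_id.smul hφ.contDiff_ofReal.continuous).integrable_of_hasCompactSupport
      hφ.hasCompactSupport_ofReal.smul_left
  have hψint : Integrable fun v => (ψ v : ℂ) :=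
    hψ.contDiff_ofReal.continuous.integrable_of_hasCompactSupport hψ.hasCompactSupport_ofReal
  have hdψ : deriv (fun v => (ψ v : ℂ)) = fun v : ℝ => -(v • (φ v : ℂ)) := by
    ext v
    rw [(hd v).ofReal_comp.deriv]
    simp
  have h1 := Real.hasDerivAt_fourier hint hint' τ
  have h2 := congrFun (Real.fourier_deriv hψint
    (hψ.contDiff_ofReal.differentiable (by simp)) (hdψ ▸ hint'.neg)) τ
  have h3 : 𝓕 (fun v : ℝ => (-2 * π * Complex.I * v) • (φ v : ℂ)) τ
      = (2 * π * Complex.I) * 𝓕 (deriv fun v => (ψ v : ℂ)) τ := by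
    rw [hdψ, Real.fourier_real_eq, Real.fourier_real_eq, ← integral_const_mul]
    refine integral_congr_ae (ae_of_all _ fun v => ?_)
    simp only [Circle.smul_def, smul_eq_mul, Complex.real_smul]
    ring
  rw [h3, h2, ← hg₁, ← funext hg₀] at h1
  have hg := g₀.differentiableAt (x := τ) |>.hasDerivAt
  have hval : ((deriv g₀ τ : ℝ) : ℂ) = ((-(4 * π ^ 2) * τ * g₁ τ : ℝ) : ℂ) := by
    rw [hg.ofReal_comp.unique h1, smul_eq_mul]
    push_cast
    linear_combination (4 * (π : ℂ) ^ 2 * τ * g₁ τ) * Complex.I_sq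
  rwa [Complex.ofReal_injective hval] at hg

end IsEvenBump

theorem integrable_pow_mul_schwartzMap (g : 𝓢(ℝ, ℝ)) (m : ℕ) :
    Integrable fun x : ℝ => x ^ m * g x := by
  refine (g.integrable_pow_mul volume m).mono'
    ((continuous_id.pow m).mul g.continuous).aestronglyMeasurable (ae_of_all _ fun x => ?_)
  simp

section Ladder

variable {g : ℕ → 𝓢(ℝ, ℝ)} {c : ℝ}

theorem iteratedDeriv_comp_sqrt (hd : ∀ j τ, HasDerivAt (g j) (c * τ * g (j + 1) τ) τ) (k : ℕ)
    {σ : ℝ} (hσ : 0 < σ) :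
    iteratedDeriv k (fun σ : ℝ => g 0 (√σ)) σ = (c / 2) ^ k * g k (√σ) := by
  induction k generalizing σ with
  | zero => simp
  | succ k ih =>
    have heq : iteratedDeriv k (fun σ : ℝ => g 0 (√σ)) =ᶠ[nhds σ]
        fun σ => (c / 2) ^ k * g k (√σ) := by
      filter_upwards [lt_mem_nhds hσ] with s hs using ih hs
    have hderiv := ((hd k (√σ)).comp σ (Real.hasDerivAt_sqrt hσ.ne')).const_mul ((c / 2) ^ k)
    rw [iteratedDeriv_succ, heq.deriv_eq]
    refine hderiv.deriv.trans ?_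
    have := (Real.sqrt_pos.mpr hσ).ne'
    field_simp
    ring

theorem integral_even_pow_mul_ne_zero
    (hd : ∀ j τ, HasDerivAt (g j) (c * τ * g (j + 1) τ) τ) (m j : ℕ)
    (hj : ∫ τ, g j τ ≠ 0) : ∫ τ, τ ^ (2 * m) * g (j + m) τ ≠ 0 := by
  induction m with
  | zero => simpa using hj
  | succ m ih =>
    have hparts := integral_mul_deriv_eq_deriv_mul_of_integrable
      (u := fun x : ℝ => x ^ (2 * m + 1)) (u' := fun x : ℝ => (2 * m + 1 : ℕ) * x ^ (2 * m))
      (v := g (j + m)) (v' := fun x => c * x * g (j + m + 1) x)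
      (fun x _ => by simpa using hasDerivAt_pow (2 * m + 1) x) (fun x _ => hd _ x)
      (((integrable_pow_mul_schwartzMap (g (j + m + 1)) (2 * (m + 1))).const_mul c).congr
        (ae_of_all _ fun x => by simp only [Pi.mul_apply]; ring))
      (((integrable_pow_mul_schwartzMap (g (j + m)) (2 * m)).const_mul
        ((2 * m + 1 : ℕ) : ℝ)).congr
        (ae_of_all _ fun x => by simp only [Pi.mul_apply]; ring))
      (integrable_pow_mul_schwartzMap (g (j + m)) (2 * m + 1))
    have hl : ∀ x : ℝ, x ^ (2 * m + 1) * (c * x * g (j + m + 1) x)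
        = c * (x ^ (2 * (m + 1)) * g (j + (m + 1)) x) := fun x => by rw [← add_assoc]; ring
    have hr : ∀ x : ℝ, ((2 * m + 1 : ℕ) : ℝ) * x ^ (2 * m) * g (j + m) x
        = ((2 * m + 1 : ℕ) : ℝ) * (x ^ (2 * m) * g (j + m) x) := fun x => mul_assoc _ _ _
    simp only [hl, hr, integral_const_mul] at hparts
    refine right_ne_zero_of_mul (a := c) ?_
    rw [hparts]
    exact neg_ne_zero.mpr (mul_ne_zero (by positivity) ih)

theorem integral_iteratedDeriv_comp_sqrt_ne_zero {m k : ℕ} (hc : c ≠ 0)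
    (hd : ∀ j τ, HasDerivAt (g j) (c * τ * g (j + 1) τ) τ)
    (heven : ∀ j τ, g j (-τ) = g j τ) (hk : ∫ τ, g k τ ≠ 0) :
    ∫ ξ : EuclideanSpace ℝ (Fin (2 * m + 1)),
      iteratedDeriv (k + m) (fun σ : ℝ => g 0 (√σ)) (‖ξ‖ ^ 2) ≠ 0 := by
  rw [integral_fun_norm_addHaar volume
    fun r => iteratedDeriv (k + m) (fun σ : ℝ => g 0 (√σ)) (r ^ 2)]
  have hradial : ∫ r in Set.Ioi (0 : ℝ), r ^ (2 * m) *
      iteratedDeriv (k + m) (fun σ : ℝ => g 0 (√σ)) (r ^ 2)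
      = (c / 2) ^ (k + m) * ∫ r in Set.Ioi (0 : ℝ), r ^ (2 * m) * g (k + m) r := by
    rw [← integral_const_mul]
    refine setIntegral_congr_fun measurableSet_Ioi fun r hr => ?_
    simp only [iteratedDeriv_comp_sqrt hd _ (pow_pos hr 2), Real.sqrt_sq (le_of_lt hr)]
    ring
  have habs := integral_comp_abs (f := fun r : ℝ => r ^ (2 * m) * g (k + m) r)
  have heq : ∀ x : ℝ, |x| ^ (2 * m) * g (k + m) |x| = x ^ (2 * m) * g (k + m) x := by
    intro x
    rw [(even_two_mul m).pow_abs]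
    rcases abs_choice x with hx | hx <;> simp [hx, heven]
  simp only [heq] at habs
  have hne := integral_even_pow_mul_ne_zero hd m k hk
  rw [habs] at hne
  have hball : volume.real (Metric.ball (0 : EuclideanSpace ℝ (Fin (2 * m + 1))) 1) ≠ 0 :=
    (ENNReal.toReal_pos (Metric.measure_ball_pos _ _ one_pos).ne' measure_ball_lt_top.ne).ne'
  simp only [finrank_euclideanSpace_fin, Nat.add_sub_cancel, smul_eq_mul, nsmul_eq_mul, hradial]
  refine mul_ne_zero (by positivity) (mul_ne_zero hball (mul_ne_zero ?_ ?_))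
  · exact pow_ne_zero _ (div_ne_zero hc two_ne_zero)
  · exact right_ne_zero_of_mul hne

end Ladder

theorem statement1 (n : ℕ) (hn : 1 ≤ n) (hodd : Odd n) :
    ∃ g : SchwartzMap ℝ ℝ,
      (∀ τ, g (-τ) = g τ) ∧
      ContDiff ℝ (⊤ : ℕ∞) (fourierTr g) ∧
      HasCompactSupport (fourierTr g) ∧
      (∀ᶠ t in nhds (0 : ℝ), fourierTr g t = 0) ∧
      ∀ k : ℕ, n ≤ k →
        (∫ ξ : EuclideanSpace ℝ (Fin n),
          iteratedDeriv k (fun σ : ℝ => g (Real.sqrt σ)) (‖ξ‖ ^ 2)) ≠ 0 := by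
  obtain ⟨φ₀, hφ₀, hφ₀_zero⟩ := IsEvenBump.exists_eq_zero_near
  choose next hnext hnext_pos hnext_deriv using
    fun φ : {φ // IsEvenBump φ} => φ.2.exists_primitive
  choose T hT using fun φ : {φ // IsEvenBump φ} => φ.2.exists_schwartzMap
  let φ : ℕ → {φ // IsEvenBump φ} :=
    fun j => Nat.rec ⟨φ₀, hφ₀⟩ (fun _ φ => ⟨next φ, hnext φ⟩) j
  have hd : ∀ j τ, HasDerivAt (T (φ j)) (-(4 * π ^ 2) * τ * T (φ (j + 1)) τ) τ := fun j =>
    (φ j).2.deriv_eq (φ (j + 1)).2 (hnext_deriv (φ j)) (hT _) (hT _)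
  have heven : ∀ j τ, T (φ j) (-τ) = T (φ j) τ := fun j τ => by
    have := (φ j).2.fourier_even τ
    rw [← hT, ← hT] at this
    exact_mod_cast this
  have hFT : fourierTr (T (φ 0)) = fun t => (φ₀ ((2 * π)⁻¹ * t) : ℂ) :=
    funext ((φ 0).2.fourierTr_eq (hT _))
  have hpi : (2 * π)⁻¹ ≠ 0 := inv_ne_zero two_pi_pos.ne'
  refine ⟨T (φ 0), heven 0, ?_, ?_, ?_, fun k hk => ?_⟩
  · rw [hFT]
    exact hφ₀.contDiff_ofReal.comp (contDiff_const.mul contDiff_id)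
  · rw [hFT]
    exact hφ₀.hasCompactSupport_ofReal.comp_homeomorph (Homeomorph.mulLeft₀ _ hpi)
  · rw [hFT]
    have hlim : Tendsto (fun t : ℝ => (2 * π)⁻¹ * t) (nhds 0) (nhds 0) := by
      simpa using (continuous_const_mul (2 * π)⁻¹).tendsto (0 : ℝ)
    filter_upwards [hlim.eventually hφ₀_zero] with t ht
    rw [ht, Complex.ofReal_zero]
  · obtain ⟨m, rfl⟩ := hodd
    obtain ⟨j, rfl⟩ : ∃ j, k = (j + 1) + m := ⟨k - m - 1, by omega⟩
    refine integral_iteratedDeriv_comp_sqrt_ne_zero (g := fun j => T (φ j))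
      (neg_ne_zero.mpr (by positivity)) hd heven ?_
    rw [(φ (j + 1)).2.integral_eq (hT _)]
    exact (hnext_pos (φ j)).ne'
end

section
/- Let n ≥ 1 be odd and let k ≥ n be an integer. There exists a nonzero real constant A, depending only on n and k, such that for every even real-valued Schwartz function g, with f: [0,∞) → ℝ defined by f(σ) = g(√σ), one has ∫_{ℝⁿ} f^{(k)}(|ξ|²) dξ = A ∫_0^∞ g^{(2k−n)}(τ) τ^{−1} dτ. (The integral on the right converges since 2k − n is odd and g is even, so g^{(2k−n)} is odd and vanishes at 0.) -/
open MeasureTheory Real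

open Filter Topology SchwartzMap
open scoped ContDiff

theorem iteratedDeriv_succ_id_mul {h : ℝ → ℝ} (hh : ContDiff ℝ ∞ h) (j : ℕ) (x : ℝ) :
    iteratedDeriv (j + 1) (fun y => y * h y) x =
      x * iteratedDeriv (j + 1) h x + (j + 1) * iteratedDeriv j h x := by
  have hd (i : ℕ) (x : ℝ) : HasDerivAt (iteratedDeriv i h) (iteratedDeriv (i + 1) h x) x := by
    rw [iteratedDeriv_succ]
    exact (hh.differentiable_iteratedDeriv i (mod_cast ENat.natCast_lt_top i) x).hasDerivAt
  induction j generalizing x with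
  | zero =>
    have := (hasDerivAt_id x).mul (hd 0 x)
    simp only [iteratedDeriv_zero] at this
    rw [zero_add, iteratedDeriv_one]
    refine this.deriv.trans ?_
    simp
    ring
  | succ j ih =>
    rw [iteratedDeriv_succ, funext ih]
    have := ((hasDerivAt_id x).mul (hd (j + 1) x)).add ((hd j x).const_mul ((j : ℝ) + 1))
    refine this.deriv.trans ?_
    simp
    ring

namespace SchwartzMap

theorem exists_eq_iteratedDeriv (φ : 𝓢(ℝ, ℝ)) (j : ℕ) :
    ∃ ψ : 𝓢(ℝ, ℝ), ⇑ψ = iteratedDeriv j φ := by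
  induction j with
  | zero => exact ⟨φ, iteratedDeriv_zero.symm⟩
  | succ j ih =>
    obtain ⟨ψ, hψ⟩ := ih
    refine ⟨derivCLM ℝ ℝ ψ, ?_⟩
    ext x
    rw [iteratedDeriv_succ, derivCLM_apply, hψ]

theorem exists_eq_pow_mul (φ : 𝓢(ℝ, ℝ)) (m : ℕ) :
    ∃ ψ : 𝓢(ℝ, ℝ), ∀ x, ψ x = x ^ m * φ x := by
  refine ⟨smulLeftCLM ℝ (fun x : ℝ => x ^ m) φ, fun x => ?_⟩
  rw [smulLeftCLM_apply_apply (by fun_prop), smul_eq_mul]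

theorem exists_norm_le (φ : 𝓢(ℝ, ℝ)) : ∃ C, ∀ x, ‖φ x‖ ≤ C := by
  obtain ⟨C, -, hC⟩ := φ.decay 0 0
  exact ⟨C, fun x => by simpa using hC x⟩

theorem hasDerivAt_integral_pow_mul_comp_mul (ψ : 𝓢(ℝ, ℝ)) (a : ℕ) (x : ℝ) :
    HasDerivAt (fun x => ∫ t in (0 : ℝ)..1, t ^ a * ψ (t * x))
      (∫ t in (0 : ℝ)..1, t ^ (a + 1) * derivCLM ℝ ℝ ψ (t * x)) x := by
  obtain ⟨C, hC⟩ := (derivCLM ℝ ℝ ψ).exists_norm_le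
  refine (intervalIntegral.hasDerivAt_integral_of_dominated_loc_of_deriv_le
    (F := fun x t => t ^ a * ψ (t * x))
    (F' := fun x t => t ^ (a + 1) * derivCLM ℝ ℝ ψ (t * x)) (bound := fun _ => C)
    univ_mem (Eventually.of_forall fun y => ?_) ?_ ?_ ?_ ?_ ?_).2
  · exact Continuous.aestronglyMeasurable (by fun_prop)
  · exact Continuous.intervalIntegrable (by fun_prop) _ _
  · exact Continuous.aestronglyMeasurable (by fun_prop)
  · refine Eventually.of_forall fun t ht y _ => ?_
    rw [Set.uIoc_of_le zero_le_one] at ht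
    have h1 : ‖t ^ (a + 1)‖ ≤ 1 := by
      rw [norm_pow]
      exact pow_le_one₀ (norm_nonneg _) (by rw [Real.norm_of_nonneg ht.1.le]; exact ht.2)
    calc ‖t ^ (a + 1) * derivCLM ℝ ℝ ψ (t * y)‖ = ‖t ^ (a + 1)‖ * ‖derivCLM ℝ ℝ ψ (t * y)‖ :=
          norm_mul _ _
      _ ≤ 1 * ‖derivCLM ℝ ℝ ψ (t * y)‖ := by gcongr
      _ ≤ C := by rw [one_mul]; exact hC _
  · exact intervalIntegrable_const
  · refine Eventually.of_forall fun t _ y _ => ?_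
    have := ((ψ.hasDerivAt (t * y)).comp y ((hasDerivAt_id y).const_mul t)).const_mul (t ^ a)
    convert! this using 1
    simp [pow_succ]
    ring

theorem contDiff_integral_pow_mul_comp_mul (ψ : 𝓢(ℝ, ℝ)) (a : ℕ) :
    ContDiff ℝ ∞ (fun x => ∫ t in (0 : ℝ)..1, t ^ a * ψ (t * x)) := by
  rw [contDiff_infty]
  intro n
  induction n generalizing a ψ with
  | zero =>
    exact contDiff_zero.2 <| continuous_iff_continuousAt.2 fun x =>
      (ψ.hasDerivAt_integral_pow_mul_comp_mul a x).continuousAt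
  | succ n ih =>
    push_cast
    refine contDiff_succ_iff_deriv.2
      ⟨fun x => (ψ.hasDerivAt_integral_pow_mul_comp_mul a x).differentiableAt, by simp, ?_⟩
    rw [funext fun x => (ψ.hasDerivAt_integral_pow_mul_comp_mul a x).deriv]
    exact ih _ _

/-- Hadamard's lemma for Schwartz functions: one vanishing at the origin is divisible by the
coordinate. -/
theorem exists_eq_id_mul (φ : 𝓢(ℝ, ℝ)) (h0 : φ 0 = 0) :
    ∃ ψ : 𝓢(ℝ, ℝ), ∀ x, φ x = x * ψ x := by
  set h : ℝ → ℝ := fun x => ∫ t in (0 : ℝ)..1, t ^ 0 * derivCLM ℝ ℝ φ (t * x)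
  have hh : ContDiff ℝ ∞ h := contDiff_integral_pow_mul_comp_mul _ _
  have hφ : ⇑φ = fun x => x * h x := by
    ext x
    have hd (t : ℝ) : HasDerivAt (fun t => φ (t * x)) (x * (t ^ 0 * derivCLM ℝ ℝ φ (t * x))) t := by
      convert! (φ.hasDerivAt (t * x)).comp t ((hasDerivAt_id t).mul_const x) using 1
      simp [mul_comm]
    have := intervalIntegral.integral_eq_sub_of_hasDerivAt (a := 0) (b := 1)
      (fun t _ => hd t) (Continuous.intervalIntegrable (by fun_prop) _ _)
    rw [intervalIntegral.integral_const_mul] at this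
    rw [one_mul, zero_mul, h0, sub_zero] at this
    exact this.symm
  have key (j : ℕ) : ∀ k : ℕ, ∃ C : ℝ, ∀ x, ‖x‖ ^ k * ‖iteratedDeriv j h x‖ ≤ C := by
    have hcpt (j : ℕ) : ∃ M : ℝ, ∀ x, ‖x‖ ≤ 1 → ‖iteratedDeriv j h x‖ ≤ M := by
      obtain ⟨M, hM⟩ := (isCompact_closedBall (0 : ℝ) 1).exists_bound_of_continuousOn
        (hh.continuous_iteratedDeriv j (mod_cast le_top)).continuousOn
      exact ⟨M, fun x hx => hM x (by simpa using hx)⟩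
    have hnear {M : ℝ} {x : ℝ} {j k : ℕ} (hM : ∀ x, ‖x‖ ≤ 1 → ‖iteratedDeriv j h x‖ ≤ M)
        (hx : ‖x‖ ≤ 1) : ‖x‖ ^ k * ‖iteratedDeriv j h x‖ ≤ M :=
      (mul_le_of_le_one_left (norm_nonneg _) (pow_le_one₀ (norm_nonneg _) hx)).trans (hM x hx)
    have hfar {x : ℝ} (hx : 1 ≤ ‖x‖) (k : ℕ) (y : ℝ) :
        ‖x‖ ^ k * ‖y‖ ≤ ‖x‖ ^ k * ‖x * y‖ := by
      rw [norm_mul]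
      exact mul_le_mul_of_nonneg_left (le_mul_of_one_le_left (norm_nonneg _) hx) (by positivity)
    induction j with
    | zero =>
      intro k
      obtain ⟨M, hM⟩ := hcpt 0
      obtain ⟨C, -, hC⟩ := φ.decay k 0
      refine ⟨max M C, fun x => ?_⟩
      rcases le_total ‖x‖ 1 with hx | hx
      · exact (hnear hM hx).trans (le_max_left _ _)
      · refine (hfar hx k _).trans (le_trans ?_ (le_max_right _ _))
        simpa [hφ] using hC x
    | succ j ih =>
      intro k
      obtain ⟨M, hM⟩ := hcpt (j + 1)
      obtain ⟨C, -, hC⟩ := φ.decay k (j + 1)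
      obtain ⟨B, hB⟩ := ih k
      refine ⟨max M (C + (j + 1) * B), fun x => ?_⟩
      rcases le_total ‖x‖ 1 with hx | hx
      · exact (hnear hM hx).trans (le_max_left _ _)
      · refine (hfar hx k _).trans (le_trans ?_ (le_max_right _ _))
        have hCx := hC x
        rw [norm_iteratedFDeriv_eq_norm_iteratedDeriv] at hCx
        have e : x * iteratedDeriv (j + 1) h x =
            iteratedDeriv (j + 1) φ x - (j + 1) * iteratedDeriv j h x := by
          rw [hφ, iteratedDeriv_succ_id_mul hh]
          ring
        rw [e]
        have hj : ‖(j : ℝ) + 1‖ = j + 1 := Real.norm_of_nonneg (by positivity)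
        calc _ ≤ ‖x‖ ^ k * (‖iteratedDeriv (j + 1) φ x‖ + ‖(j + 1) * iteratedDeriv j h x‖) := by
              gcongr
              exact norm_sub_le _ _
          _ = ‖x‖ ^ k * ‖iteratedDeriv (j + 1) φ x‖
              + (j + 1) * (‖x‖ ^ k * ‖iteratedDeriv j h x‖) := by
              rw [norm_mul, hj]; ring
          _ ≤ _ := by
              gcongr
              exact hB x
  refine ⟨⟨h, hh, fun k j => ?_⟩, fun x => congrFun hφ x⟩
  simpa only [norm_iteratedFDeriv_eq_norm_iteratedDeriv] using key j k

theorem iteratedDeriv_odd_neg {g : 𝓢(ℝ, ℝ)} (hg : ∀ x, g (-x) = g x) {j : ℕ} (hj : Odd j)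
    (x : ℝ) : iteratedDeriv j g (-x) = -iteratedDeriv j g x := by
  have := iteratedDeriv_comp_neg j g x
  rw [funext hg, hj.neg_one_pow] at this
  simpa using (congrArg Neg.neg this).symm

theorem iteratedDeriv_odd_zero {g : 𝓢(ℝ, ℝ)} (hg : ∀ x, g (-x) = g x) {j : ℕ} (hj : Odd j) :
    iteratedDeriv j g 0 = 0 := by
  have := iteratedDeriv_odd_neg hg hj 0
  rw [neg_zero] at this
  linarith

theorem exists_even_deriv_eq {g : 𝓢(ℝ, ℝ)} (hg : ∀ x, g (-x) = g x) :
    ∃ h : 𝓢(ℝ, ℝ), (∀ x, h (-x) = h x) ∧ ∀ x, deriv g x = 2 * (x * h x) := by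
  have hodd (x : ℝ) : deriv g (-x) = -deriv g x := by
    simpa using iteratedDeriv_odd_neg hg odd_one x
  obtain ⟨ψ, hψ⟩ := (derivCLM ℝ ℝ g).exists_eq_id_mul
    (by simpa using iteratedDeriv_odd_zero hg odd_one)
  simp only [derivCLM_apply] at hψ
  refine ⟨(2⁻¹ : ℝ) • ψ, fun x => ?_, fun x => ?_⟩
  · rcases eq_or_ne x 0 with rfl | hx
    · rw [neg_zero]
    · have := hodd x
      rw [hψ, hψ] at this
      have : ψ (-x) = ψ x := mul_left_cancel₀ hx (by linarith)
      simp [this]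
  · rw [hψ, smul_apply, smul_eq_mul]
    ring

/-- Iterates of the derivative divided by twice the coordinate, on even Schwartz functions. -/
theorem exists_seq_deriv_eq {g : 𝓢(ℝ, ℝ)} (hg : ∀ x, g (-x) = g x) :
    ∃ G : ℕ → 𝓢(ℝ, ℝ), G 0 = g ∧ (∀ j x, G j (-x) = G j x) ∧
      ∀ j x, deriv (G j) x = 2 * (x * G (j + 1) x) := by
  choose D hD hD' using fun h : {h : 𝓢(ℝ, ℝ) // ∀ x, h (-x) = h x} => exists_even_deriv_eq h.2
  let G : ℕ → {h : 𝓢(ℝ, ℝ) // ∀ x, h (-x) = h x} := fun j =>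
    Nat.rec ⟨g, hg⟩ (fun _ h => ⟨D h, hD h⟩) j
  exact ⟨fun j => (G j).1, rfl, fun j => (G j).2, fun j => hD' (G j)⟩

theorem integral_Ioi_deriv (φ : 𝓢(ℝ, ℝ)) : ∫ x in Set.Ioi (0 : ℝ), deriv φ x = -φ 0 := by
  rw [integral_Ioi_of_hasDerivAt_of_tendsto' (fun x _ => φ.hasDerivAt x)
    (derivCLM ℝ ℝ φ).integrable.integrableOn
    (φ.tendsto_cocompact.mono_left atTop_le_cocompact), zero_sub]

theorem integral_Ioi_pow_mul_of_deriv_eq {g h : 𝓢(ℝ, ℝ)}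
    (hgh : ∀ x, deriv g x = 2 * (x * h x)) (m : ℕ) :
    ∫ x in Set.Ioi (0 : ℝ), x ^ (2 * (m + 1)) * h x =
      -((2 * m + 1) / 2) * ∫ x in Set.Ioi (0 : ℝ), x ^ (2 * m) * g x := by
  obtain ⟨ψ, hψ⟩ := g.exists_eq_pow_mul (2 * m + 1)
  obtain ⟨p, hp⟩ := g.exists_eq_pow_mul (2 * m)
  obtain ⟨q, hq⟩ := h.exists_eq_pow_mul (2 * (m + 1))
  have hd (x : ℝ) : deriv ψ x = (2 * m + 1) * p x + 2 * q x := by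
    rw [funext hψ]
    refine (((hasDerivAt_pow (2 * m + 1) x).mul (g.hasDerivAt x)).deriv).trans ?_
    rw [hp, hq, hgh]
    push_cast
    ring
  have := ψ.integral_Ioi_deriv
  simp only [hd] at this
  rw [integral_add (p.integrable.integrableOn.const_mul _) (q.integrable.integrableOn.const_mul _),
    integral_const_mul, integral_const_mul, hψ, zero_pow (by positivity)] at this
  simp only [← hp, ← hq]
  linarith

theorem integral_Ioi_iteratedDeriv_div_of_deriv_eq {g h : 𝓢(ℝ, ℝ)} (hh : ∀ x, h (-x) = h x)
    (hgh : ∀ x, deriv g x = 2 * (x * h x)) (j : ℕ) :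
    ∫ x in Set.Ioi (0 : ℝ), iteratedDeriv (2 * (j + 1) + 1) g x / x =
      4 * (j + 1) * ∫ x in Set.Ioi (0 : ℝ), iteratedDeriv (2 * j + 1) h x / x := by
  have hj : Odd (2 * j + 1) := odd_two_mul_add_one j
  obtain ⟨φ, hφ⟩ := h.exists_eq_iteratedDeriv (2 * j + 1)
  obtain ⟨q, hq⟩ := φ.exists_eq_id_mul (by rw [hφ, iteratedDeriv_odd_zero hh hj])
  have hright : ∀ x ∈ Set.Ioi (0 : ℝ), iteratedDeriv (2 * j + 1) h x / x = q x := by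
    intro x hx
    rw [← hφ, hq, mul_div_cancel_left₀ _ (ne_of_gt hx)]
  have hleft : ∀ x ∈ Set.Ioi (0 : ℝ),
      iteratedDeriv (2 * (j + 1) + 1) g x / x = 2 * deriv φ x + 4 * (j + 1) * q x := by
    intro x hx
    have hx0 : x ≠ 0 := ne_of_gt hx
    rw [iteratedDeriv_succ', funext hgh, iteratedDeriv_const_mul_field,
      show 2 * (j + 1) = (2 * j + 1) + 1 by ring, iteratedDeriv_succ_id_mul (h.smooth ⊤),
      iteratedDeriv_succ, ← hφ, hq x]
    push_cast
    field_simp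
    ring
  have hint : IntegrableOn (deriv φ) (Set.Ioi 0) := (derivCLM ℝ ℝ φ).integrable.integrableOn
  rw [setIntegral_congr_fun measurableSet_Ioi hleft, setIntegral_congr_fun measurableSet_Ioi hright,
    integral_add (hint.const_mul _) (q.integrable.integrableOn.const_mul _),
    integral_const_mul, integral_const_mul, φ.integral_Ioi_deriv, hφ, iteratedDeriv_odd_zero hh hj]
  ring

theorem iteratedDeriv_comp_sqrt {G : ℕ → 𝓢(ℝ, ℝ)}
    (hG : ∀ j x, deriv (G j) x = 2 * (x * G (j + 1) x)) (k : ℕ) {σ : ℝ} (hσ : 0 < σ) :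
    iteratedDeriv k (fun σ => G 0 (√σ)) σ = G k (√σ) := by
  induction k generalizing σ with
  | zero => rw [iteratedDeriv_zero]
  | succ k ih =>
    have he : iteratedDeriv k (fun σ => G 0 (√σ)) =ᶠ[𝓝 σ] fun σ => G k (√σ) := by
      filter_upwards [Ioi_mem_nhds hσ] with s hs using ih hs
    rw [iteratedDeriv_succ, he.deriv_eq]
    have hs : √σ ≠ 0 := (Real.sqrt_pos.2 hσ).ne'
    refine (((G k).hasDerivAt (√σ)).comp σ (Real.hasDerivAt_sqrt hσ.ne')).deriv.trans ?_
    rw [hG]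
    field_simp

end SchwartzMap

theorem exists_integral_Ioi_pow_mul_eq (m : ℕ) :
    ∃ a : ℝ, a ≠ 0 ∧ ∀ G : ℕ → 𝓢(ℝ, ℝ), (∀ j x, deriv (G j) x = 2 * (x * G (j + 1) x)) →
      ∀ j, ∫ x in Set.Ioi (0 : ℝ), x ^ (2 * m) * G (j + m) x =
        a * ∫ x in Set.Ioi (0 : ℝ), G j x := by
  induction m with
  | zero => exact ⟨1, one_ne_zero, fun G _ j => by simp⟩
  | succ m ih =>
    obtain ⟨a, ha, h⟩ := ih
    refine ⟨-((2 * m + 1) / 2) * a, mul_ne_zero (neg_ne_zero.2 (by positivity)) ha,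
      fun G hG j => ?_⟩
    rw [← add_assoc, integral_Ioi_pow_mul_of_deriv_eq (hG (j + m)), h G hG, mul_assoc]

theorem exists_integral_Ioi_eq_iteratedDeriv_div (j : ℕ) :
    ∃ c : ℝ, c ≠ 0 ∧ ∀ G : ℕ → 𝓢(ℝ, ℝ), (∀ j x, G j (-x) = G j x) →
      (∀ j x, deriv (G j) x = 2 * (x * G (j + 1) x)) →
      ∀ i, ∫ x in Set.Ioi (0 : ℝ), G (i + j + 1) x =
        c * ∫ x in Set.Ioi (0 : ℝ), iteratedDeriv (2 * j + 1) (G i) x / x := by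
  induction j with
  | zero =>
    refine ⟨2⁻¹, by norm_num, fun G _ hG i => ?_⟩
    rw [← integral_const_mul]
    refine setIntegral_congr_fun measurableSet_Ioi fun x hx => ?_
    have hx0 : x ≠ 0 := ne_of_gt hx
    simp only [mul_zero, zero_add, add_zero, iteratedDeriv_one, hG]
    field_simp
  | succ j ih =>
    obtain ⟨c, hc, h⟩ := ih
    have hj : (4 * ((j : ℝ) + 1)) ≠ 0 := by positivity
    refine ⟨c / (4 * (j + 1)), div_ne_zero hc hj, fun G he hG i => ?_⟩
    rw [integral_Ioi_iteratedDeriv_div_of_deriv_eq (he (i + 1)) (hG i), ← mul_assoc,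
      div_mul_cancel₀ _ hj, ← h G he hG (i + 1)]
    congr! 4
    ring

theorem statement2 (n k : ℕ) (hn : 1 ≤ n) (hodd : Odd n) (hk : n ≤ k) :
    ∃ A : ℝ, A ≠ 0 ∧
      ∀ g : SchwartzMap ℝ ℝ, (∀ τ, g (-τ) = g τ) →
        (∫ ξ : EuclideanSpace ℝ (Fin n),
            iteratedDeriv k (fun σ : ℝ => g (Real.sqrt σ)) (‖ξ‖ ^ 2)) =
          A * ∫ τ in Set.Ioi (0 : ℝ), iteratedDeriv (2 * k - n) g τ / τ := by
  obtain ⟨m, rfl⟩ := hodd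
  obtain ⟨j, rfl⟩ : ∃ j, k = 0 + j + 1 + m := ⟨k - m - 1, by omega⟩
  obtain ⟨a, ha, hA⟩ := exists_integral_Ioi_pow_mul_eq m
  obtain ⟨c, hc, hC⟩ := exists_integral_Ioi_eq_iteratedDeriv_div j
  set v : ℝ := (volume : Measure (EuclideanSpace ℝ (Fin (2 * m + 1)))).real (Metric.ball 0 1)
    with hv
  have hv0 : v ≠ 0 :=
    (ENNReal.toReal_pos (Metric.measure_ball_pos _ _ one_pos).ne' measure_ball_lt_top.ne).ne'
  refine ⟨((2 * m + 1 : ℕ) : ℝ) * v * a * c,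
    mul_ne_zero (mul_ne_zero (mul_ne_zero (by positivity) hv0) ha) hc, fun g hg => ?_⟩
  obtain ⟨G, rfl, he, hG⟩ := exists_seq_deriv_eq hg
  have hfin : Module.finrank ℝ (EuclideanSpace ℝ (Fin (2 * m + 1))) = 2 * m + 1 := by simp
  rw [integral_fun_norm_addHaar volume fun r =>
      iteratedDeriv (0 + j + 1 + m) (fun σ : ℝ => G 0 (√σ)) (r ^ 2), hfin, ← hv,
    show 2 * (0 + j + 1 + m) - (2 * m + 1) = 2 * j + 1 by omega]
  have hcongr : ∀ r ∈ Set.Ioi (0 : ℝ),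
      r ^ (2 * m + 1 - 1) • iteratedDeriv (0 + j + 1 + m) (fun σ : ℝ => G 0 (√σ)) (r ^ 2) =
        r ^ (2 * m) * G (0 + j + 1 + m) r := by
    intro r hr
    rw [iteratedDeriv_comp_sqrt hG _ (pow_pos hr 2), Real.sqrt_sq (le_of_lt hr), smul_eq_mul,
      Nat.add_sub_cancel]
  rw [setIntegral_congr_fun measurableSet_Ioi hcongr, hA G hG, hC G he hG, nsmul_eq_mul,
    smul_eq_mul]
  ring
end

section
/- Let g: ℝ → ℝ be an even Schwartz function and let m ≥ 1 be an odd integer. Then ∫_ℝ g^{(m)}(τ) τ^{−1} dτ = (i^{m+1}/2) ∫_ℝ t^m ĝ(t) sgn(t) dt, where ĝ(t) = ∫_ℝ g(τ) e^{−itτ} dτ. (Both integrals converge absolutely: g^{(m)} is odd, so g^{(m)}(τ)/τ extends continuously to τ = 0, and i^{m+1} is real since m is odd.) -/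
open MeasureTheory Real

open Set Filter Topology
open scoped FourierTransform SchwartzMap

theorem ae_ne_zero_real : ∀ᵐ x : ℝ, x ≠ 0 := by
  simp [ae_iff]

/-- An integrable function vanishing at `0` and differentiable there stays integrable after
division by the variable. -/
theorem integrable_div_self {f : ℝ → ℂ} (hc : Continuous f) (hf : Integrable f)
    (hd : DifferentiableAt ℝ f 0) (h0 : f 0 = 0) : Integrable fun x : ℝ => f x / x := by
  have hslope : (fun x : ℝ => f x / x) =ᵐ[volume] dslope f 0 := by
    filter_upwards [ae_ne_zero_real] with x hx
    rw [dslope_of_ne _ hx, slope_def_module, h0, sub_zero, sub_zero, Complex.real_smul,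
      Complex.ofReal_inv, div_eq_inv_mul]
  have hcont : Continuous (dslope f 0) := by
    rw [← continuousOn_univ, continuousOn_dslope univ_mem]
    exact ⟨hc.continuousOn, hd⟩
  have hmeas : AEStronglyMeasurable (fun x : ℝ => f x / x) volume :=
    hcont.aestronglyMeasurable.congr hslope.symm
  have hin : IntegrableOn (fun x : ℝ => f x / x) (Icc (-1) 1) :=
    (hcont.integrableOn_Icc).congr (ae_restrict_of_ae hslope.symm)
  have hout : IntegrableOn (fun x : ℝ => f x / x) (Icc (-1) 1)ᶜ := by
    refine Integrable.mono hf.integrableOn hmeas.restrict ?_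
    refine (ae_restrict_iff' measurableSet_Icc.compl).2 (Eventually.of_forall fun x hx => ?_)
    have hx1 : 1 ≤ |x| := by
      by_contra h
      exact hx (abs_le.1 (not_le.1 h).le)
    rw [norm_div, Complex.norm_real, Real.norm_eq_abs]
    exact div_le_self (norm_nonneg _) hx1
  rw [← integrableOn_univ, ← union_compl_self (Icc (-1 : ℝ) 1)]
  exact hin.union hout

/-- The integral of `f x / x` as the integral of the Fourier transform of `f` against the sign. -/
theorem integral_div_self_eq_fourier_sign {f : ℝ → ℂ} (hc : Continuous f) (hf : Integrable f)
    (hd : DifferentiableAt ℝ f 0) (h0 : f 0 = 0) (hF : Integrable (𝓕 f)) :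
    ∫ x : ℝ, f x / x = π * Complex.I * ∫ ξ : ℝ, 𝓕 f ξ * (Real.sign ξ : ℂ) := by
  set k : ℝ → ℂ := fun x => f x / x
  have hk : Integrable k := integrable_div_self hc hf hd h0
  have hxk (x : ℝ) : (x : ℂ) * k x = f x := by
    rcases eq_or_ne x 0 with rfl | hx
    · simp [h0]
    · exact mul_div_cancel₀ _ (Complex.ofReal_ne_zero.2 hx)
  have hderiv (ξ : ℝ) : HasDerivAt (𝓕 k) (-2 * π * Complex.I * 𝓕 f ξ) ξ := by
    have h := Real.hasDerivAt_fourier hk (by simpa [Complex.real_smul, hxk] using hf) ξ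
    have heq : (fun x : ℝ => (-2 * π * Complex.I * x) • k x) =
        (-2 * π * Complex.I : ℂ) • f := by
      funext x
      simp only [Pi.smul_apply, smul_eq_mul, mul_assoc, hxk]
    have hsmul : 𝓕 ((-2 * π * Complex.I : ℂ) • f) ξ = -2 * π * Complex.I * 𝓕 f ξ := by
      rw [Real.fourier_real_eq, Real.fourier_real_eq, ← integral_const_mul]
      simp only [Pi.smul_apply, smul_eq_mul, Circle.smul_def, mul_left_comm]
    rwa [heq, hsmul] at h
  have hderiv_int : Integrable fun ξ => -2 * π * Complex.I * 𝓕 f ξ := hF.const_mul _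
  have hlim := Real.zero_at_infty_fourier k
  have hpos := integral_Ioi_of_hasDerivAt_of_tendsto' (a := 0) (fun ξ _ => hderiv ξ)
    hderiv_int.integrableOn (hlim.mono_left atTop_le_cocompact)
  have hneg := integral_Iic_of_hasDerivAt_of_tendsto' (a := 0) (fun ξ _ => hderiv ξ)
    hderiv_int.integrableOn (hlim.mono_left atBot_le_cocompact)
  have hzero : 𝓕 k 0 = ∫ x, k x := by simp [Real.fourier_real_eq]
  rw [integral_const_mul, hzero] at hpos hneg
  have hsign : ∫ ξ : ℝ, 𝓕 f ξ * (Real.sign ξ : ℂ) =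
      (∫ ξ in Ioi 0, 𝓕 f ξ) - ∫ ξ in Iic 0, 𝓕 f ξ := by
    have hpos' : ∫ ξ in Ioi (0 : ℝ), 𝓕 f ξ * (Real.sign ξ : ℂ) = ∫ ξ in Ioi 0, 𝓕 f ξ :=
      setIntegral_congr_fun measurableSet_Ioi fun ξ hξ => by
        simp [Real.sign_of_pos (mem_Ioi.1 hξ)]
    have hneg' : ∫ ξ in Iic (0 : ℝ), 𝓕 f ξ * (Real.sign ξ : ℂ) = -∫ ξ in Iic 0, 𝓕 f ξ := by
      rw [integral_Iic_eq_integral_Iio, integral_Iic_eq_integral_Iio, ← integral_neg]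
      exact setIntegral_congr_fun measurableSet_Iio fun ξ hξ => by
        simp [Real.sign_of_neg (mem_Iio.1 hξ)]
    have hsint : Integrable fun ξ : ℝ => 𝓕 f ξ * (Real.sign ξ : ℂ) := by
      refine hF.mono (hF.aestronglyMeasurable.mul ?_) (Eventually.of_forall fun ξ => ?_)
      · have hm : Measurable Real.sign :=
          Measurable.ite measurableSet_Iio measurable_const
            (Measurable.ite measurableSet_Ioi measurable_const measurable_const)
        exact (Complex.measurable_ofReal.comp hm).aestronglyMeasurable
      · rcases Real.sign_apply_eq ξ with h | h | h <;> simp [h]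
    rw [← intervalIntegral.integral_Iic_add_Ioi (b := (0 : ℝ)) hsint.integrableOn
      hsint.integrableOn, hpos', hneg']
    ring
  rw [hsign]
  linear_combination (1 / 2 : ℂ) * hpos - (1 / 2 : ℂ) * hneg

theorem SchwartzMap.exists_coe_eq_iteratedDeriv (f : 𝓢(ℝ, ℂ)) (n : ℕ) :
    ∃ h : 𝓢(ℝ, ℂ), ⇑h = iteratedDeriv n f := by
  induction n with
  | zero => exact ⟨f, by simp⟩
  | succ n ih =>
    obtain ⟨h, hh⟩ := ih
    refine ⟨SchwartzMap.derivCLM ℂ ℂ h, ?_⟩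
    funext x
    rw [iteratedDeriv_succ, ← hh, SchwartzMap.derivCLM_apply]

theorem iteratedDeriv_ofReal_comp {f : ℝ → ℝ} (hf : ContDiff ℝ (⊤ : ℕ∞) f) (n : ℕ) :
    iteratedDeriv n (fun x => (f x : ℂ)) = fun x => ((iteratedDeriv n f x : ℝ) : ℂ) := by
  induction n with
  | zero => simp
  | succ n ih =>
    funext x
    rw [iteratedDeriv_succ, ih, iteratedDeriv_succ]
    have hn : ((n : ℕ∞) : WithTop ℕ∞) < ((⊤ : ℕ∞) : WithTop ℕ∞) :=
      WithTop.coe_lt_coe.2 (ENat.natCast_lt_top n)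
    exact ((hf.differentiable_iteratedDeriv n hn) x).hasDerivAt.ofReal_comp.deriv

theorem iteratedDeriv_zero_of_even {f : ℝ → ℝ} (hf : ∀ x, f (-x) = f x) {n : ℕ} (hn : Odd n) :
    iteratedDeriv n f 0 = 0 := by
  have h := iteratedDeriv_comp_neg n f 0
  simp only [hf, hn.neg_one_pow, neg_zero, smul_eq_mul] at h
  linarith

theorem fourierTr_two_pi_mul (g : ℝ → ℝ) (ξ : ℝ) :
    fourierTr g (2 * π * ξ) = 𝓕 (fun x => (g x : ℂ)) ξ := by
  rw [fourierTr, Real.fourier_real_eq_integral_exp_smul]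
  refine integral_congr_ae (Eventually.of_forall fun x => ?_)
  simp only [smul_eq_mul]
  rw [mul_comm]
  congr 2
  push_cast
  ring

theorem statement4 (g : SchwartzMap ℝ ℝ) (hg : ∀ τ, g (-τ) = g τ)
    (m : ℕ) (hm : 1 ≤ m) (hmodd : Odd m) :
    ((∫ τ : ℝ, iteratedDeriv m g τ / τ : ℝ) : ℂ) =
      (Complex.I ^ (m + 1) / 2) *
        ∫ t : ℝ, (t : ℂ) ^ m * fourierTr g t * (Real.sign t : ℂ) := by
  let G : 𝓢(ℝ, ℂ) := g.postcompCLM Complex.ofRealCLM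
  have hG : ⇑G = fun x => (g x : ℂ) := rfl
  obtain ⟨H, hH⟩ := G.exists_coe_eq_iteratedDeriv m
  have hHg : ⇑H = fun x => ((iteratedDeriv m g x : ℝ) : ℂ) := by
    rw [hH, hG, iteratedDeriv_ofReal_comp (g.smooth ⊤)]
  have hFH : 𝓕 ⇑H = fun ξ : ℝ => (2 * π * Complex.I * ξ) ^ m • 𝓕 ⇑G ξ := by
    rw [hH]
    refine Real.fourier_iteratedDeriv (N := ⊤) (G.smooth ⊤) (fun n _ => ?_) le_top
    obtain ⟨h, hh⟩ := G.exists_coe_eq_iteratedDeriv n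
    exact hh ▸ h.integrable
  have hmain := integral_div_self_eq_fourier_sign H.continuous H.integrable H.differentiableAt
    (by rw [hHg]; simp [iteratedDeriv_zero_of_even hg hmodd])
    (by rw [← SchwartzMap.fourier_coe]; exact (𝓕 H).integrable)
  have hleft : ((∫ τ : ℝ, iteratedDeriv m g τ / τ : ℝ) : ℂ) = ∫ x : ℝ, H x / x := by
    rw [← integral_complex_ofReal]
    simp [hHg]
  have hscale := Measure.integral_comp_mul_left
    (fun t : ℝ => (t : ℂ) ^ m * fourierTr g t * (Real.sign t : ℂ)) (2 * π)
  have hpi : (0 : ℝ) < 2 * π := two_pi_pos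
  have hsgn (ξ : ℝ) : Real.sign (2 * π * ξ) = Real.sign ξ := by
    rcases lt_trichotomy ξ 0 with h | rfl | h
    · rw [Real.sign_of_neg h, Real.sign_of_neg (mul_neg_of_pos_of_neg hpi h)]
    · simp
    · rw [Real.sign_of_pos h, Real.sign_of_pos (mul_pos hpi h)]
  have hintegrand (ξ : ℝ) : 𝓕 ⇑H ξ * (Real.sign ξ : ℂ) = Complex.I ^ m *
      (((2 * π * ξ : ℝ) : ℂ) ^ m * fourierTr g (2 * π * ξ) * (Real.sign (2 * π * ξ) : ℂ)) := by
    rw [hFH, hsgn, fourierTr_two_pi_mul, ← hG]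
    simp only [smul_eq_mul, Complex.ofReal_mul, Complex.ofReal_ofNat, mul_pow]
    ring
  rw [hleft, hmain]
  simp_rw [hintegrand]
  rw [integral_const_mul, hscale, abs_of_pos (inv_pos.2 hpi), Complex.real_smul]
  have hpi' : (π : ℂ) ≠ 0 := Complex.ofReal_ne_zero.2 pi_ne_zero
  push_cast
  field_simp
  ring
end

section
/- Let n ≥ 1 be an integer and let μ be a finite signed Borel measure on ℝ with compact support such that ∫_ℝ s^k dμ(s) = 0 for every integer k ≥ n. Then μ restricted to ℝ ∖ {0} is the zero measure; that is, μ = μ({0})·δ₀, where δ₀ is the Dirac measure at 0. -/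
open MeasureTheory Real

/-- A polynomial is integrable against a finite measure concentrated on a compact interval. -/
theorem integrable_polynomial_eval_of_Icc {P : Measure ℝ} [IsFiniteMeasure P] {a b : ℝ}
    (hP : ∀ᵐ x ∂P, x ∈ Set.Icc a b) (p : Polynomial ℝ) :
    Integrable (fun x => p.eval x) P := by
  obtain ⟨C, hC⟩ := (isCompact_Icc (a := a) (b := b)).exists_bound_of_continuousOn
    p.continuous.continuousOn
  refine Integrable.of_bound p.continuous.aestronglyMeasurable C ?_
  filter_upwards [hP] with x hx using hC x hx

/-- Two finite measures concentrated on a compact interval with the same moments are equal. -/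
theorem measure_ext_of_moments {P Q : Measure ℝ} [IsFiniteMeasure P] [IsFiniteMeasure Q]
    {a b : ℝ} (hP : ∀ᵐ x ∂P, x ∈ Set.Icc a b) (hQ : ∀ᵐ x ∂Q, x ∈ Set.Icc a b)
    (hPQ : ∀ k : ℕ, ∫ x, x ^ k ∂P = ∫ x, x ^ k ∂Q) : P = Q := by
  have hpoly (p : Polynomial ℝ) : ∫ x, p.eval x ∂P = ∫ x, p.eval x ∂Q := by
    have hpow {μ : Measure ℝ} [IsFiniteMeasure μ] (hμ : ∀ᵐ x ∂μ, x ∈ Set.Icc a b) (k : ℕ) :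
        Integrable (fun x : ℝ => x ^ k) μ := by
      simpa using integrable_polynomial_eval_of_Icc hμ (Polynomial.X ^ k)
    simp only [Polynomial.eval_eq_sum_range]
    rw [integral_finsetSum _ fun k _ => (hpow hP k).const_mul _,
      integral_finsetSum _ fun k _ => (hpow hQ k).const_mul _]
    simp only [integral_const_mul, hPQ]
  have happrox {μ : Measure ℝ} [IsFiniteMeasure μ] (hμ : ∀ᵐ x ∂μ, x ∈ Set.Icc a b)
      (f : BoundedContinuousFunction ℝ ℝ) (p : Polynomial ℝ) (ε : ℝ)
      (hp : ∀ x ∈ Set.Icc a b, |p.eval x - f x| < ε) :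
      |∫ x, p.eval x ∂μ - ∫ x, f x ∂μ| ≤ ε * μ.real Set.univ := by
    rw [← integral_sub (integrable_polynomial_eval_of_Icc hμ p) (f.integrable μ),
      ← Real.norm_eq_abs]
    refine norm_integral_le_of_norm_le_const ?_
    filter_upwards [hμ] with x hx using (hp x hx).le
  refine ext_of_forall_integral_eq_of_IsFiniteMeasure fun f => ?_
  set M := P.real Set.univ + Q.real Set.univ + 1 with hM
  have hM0 : 0 < M := by positivity
  refine eq_of_abs_sub_le_all fun ε hε => ?_
  obtain ⟨p, hp⟩ := exists_polynomial_near_of_continuousOn a b f f.continuous.continuousOn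
    (ε / M) (by positivity)
  have h₁ := abs_le.1 (happrox hP f p _ hp)
  have h₂ := abs_le.1 (happrox hQ f p _ hp)
  have h₃ : ε / M * P.real Set.univ + ε / M * Q.real Set.univ + ε / M = ε := by
    rw [← mul_add, ← mul_add_one, ← hM, div_mul_cancel₀ _ hM0.ne']
  have h₄ : 0 < ε / M := by positivity
  rw [hpoly p] at h₁
  exact abs_le.2 ⟨by linarith, by linarith⟩

/-- Two finite measures concentrated on a compact interval whose moments of order at least `n`
agree coincide away from `0`. -/
theorem restrict_compl_zero_eq_of_moments {P Q : Measure ℝ} [IsFiniteMeasure P]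
    [IsFiniteMeasure Q] {a b : ℝ} (hP : ∀ᵐ x ∂P, x ∈ Set.Icc a b)
    (hQ : ∀ᵐ x ∂Q, x ∈ Set.Icc a b) (n : ℕ)
    (hPQ : ∀ k : ℕ, n ≤ k → ∫ x, x ^ k ∂P = ∫ x, x ^ k ∂Q) :
    P.restrict {0}ᶜ = Q.restrict {0}ᶜ := by
  set w : ℝ → ENNReal := fun x => ENNReal.ofReal (x ^ (2 * n)) with hw
  have hnonneg (x : ℝ) : 0 ≤ x ^ (2 * n) := (even_two_mul n).pow_nonneg x
  have hwm : Measurable w := by fun_prop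
  have hfin {μ : Measure ℝ} [IsFiniteMeasure μ] (hμ : ∀ᵐ x ∂μ, x ∈ Set.Icc a b) :
      IsFiniteMeasure (μ.withDensity w) := by
    have h := integrable_polynomial_eval_of_Icc hμ (Polynomial.X ^ (2 * n))
    simp only [Polynomial.eval_pow, Polynomial.eval_X] at h
    exact isFiniteMeasure_withDensity_ofReal h.2
  have hint (μ : Measure ℝ) (k : ℕ) :
      ∫ x, x ^ k ∂(μ.withDensity w) = ∫ x, x ^ (2 * n + k) ∂μ := by
    rw [integral_withDensity_eq_integral_toReal_smul hwm (by simp [hw])]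
    simp only [hw, ENNReal.toReal_ofReal (hnonneg _), smul_eq_mul, pow_add]
  have hinv (μ : Measure ℝ) :
      ((μ.withDensity w).restrict {0}ᶜ).withDensity w⁻¹ = μ.restrict {0}ᶜ := by
    rw [restrict_withDensity (measurableSet_singleton 0).compl]
    refine withDensity_inv_same hwm ?_ (by simp [hw])
    filter_upwards [ae_restrict_mem (measurableSet_singleton (0 : ℝ)).compl] with x hx
    have hx0 : x ≠ 0 := hx
    have : 0 < x ^ (2 * n) := lt_of_le_of_ne (hnonneg x) (pow_ne_zero _ hx0).symm
    simpa [hw] using this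
  have := hfin hP
  have := hfin hQ
  have heq : P.withDensity w = Q.withDensity w :=
    measure_ext_of_moments ((withDensity_absolutelyContinuous P w).ae_le hP)
      ((withDensity_absolutelyContinuous Q w).ae_le hQ) fun k => by
        rw [hint, hint, hPQ _ (by omega)]
  rw [← hinv P, ← hinv Q, heq]

theorem statement5 (n : ℕ) (hn : 1 ≤ n) (μ : MeasureTheory.SignedMeasure ℝ)
    (hcpt : ∃ K : Set ℝ, IsCompact K ∧ μ.totalVariation Kᶜ = 0)
    (hmom : ∀ k : ℕ, n ≤ k →
      (∫ s : ℝ, s ^ k ∂μ.toJordanDecomposition.posPart) =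
        ∫ s : ℝ, s ^ k ∂μ.toJordanDecomposition.negPart) :
    μ.restrict {0}ᶜ = 0 := by
  obtain ⟨K, hK, hμK⟩ := hcpt
  obtain ⟨a, ha⟩ := hK.bddBelow
  obtain ⟨b, hb⟩ := hK.bddAbove
  have hKab : K ⊆ Set.Icc a b := fun x hx => ⟨ha hx, hb hx⟩
  rw [SignedMeasure.totalVariation, Measure.add_apply, add_eq_zero] at hμK
  have hP : ∀ᵐ x ∂μ.toJordanDecomposition.posPart, x ∈ Set.Icc a b :=
    measure_mono_null (Set.compl_subset_compl.2 hKab) hμK.1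
  have hQ : ∀ᵐ x ∂μ.toJordanDecomposition.negPart, x ∈ Set.Icc a b :=
    measure_mono_null (Set.compl_subset_compl.2 hKab) hμK.2
  have heq := restrict_compl_zero_eq_of_moments hP hQ n hmom
  have h0 : MeasurableSet ({0}ᶜ : Set ℝ) := (measurableSet_singleton 0).compl
  ext s hs
  rw [VectorMeasure.restrict_apply _ h0 hs]
  conv_lhs => rw [← μ.toSignedMeasure_toJordanDecomposition]
  rw [JordanDecomposition.toSignedMeasure, sub_apply,
    Measure.toSignedMeasure_apply_measurable (hs.inter h0),
    Measure.toSignedMeasure_apply_measurable (hs.inter h0), measureReal_def, measureReal_def,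
    ← Measure.restrict_apply hs, ← Measure.restrict_apply hs, heq]
  simp
end

section
/- Let n ≥ 1 and let V, V₀: ℝⁿ → [0,∞) be measurable, bounded functions each satisfying a bound V(x) ≤ A exp(−B|x|^{1+ε}) for some ε, A, B > 0 (and similarly for V₀). If ∫_{ℝⁿ} V(x)^k dx = ∫_{ℝⁿ} V₀(x)^k dx for every integer k ≥ n, then vol({x : V(x) > λ}) = vol({x : V₀(x) > λ}) for every λ > 0, where vol denotes Lebesgue measure on ℝⁿ. -/
open MeasureTheory Real

/-- Finite measures on a bounded interval are determined by their moments. -/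
theorem ext_of_moments_eq_of_ae_mem_Icc {μ ν : Measure ℝ} [IsFiniteMeasure μ] [IsFiniteMeasure ν]
    {a b : ℝ} (hμ : ∀ᵐ t ∂μ, t ∈ Set.Icc a b) (hν : ∀ᵐ t ∂ν, t ∈ Set.Icc a b)
    (hmom : ∀ k : ℕ, ∫ t, t ^ k ∂μ = ∫ t, t ^ k ∂ν) : μ = ν := by
  have integrable_of_continuous {ρ : Measure ℝ} [IsFiniteMeasure ρ]
      (hρ : ∀ᵐ t ∂ρ, t ∈ Set.Icc a b) {f : ℝ → ℝ} (hf : Continuous f) : Integrable f ρ := by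
    obtain ⟨C, hC⟩ := isCompact_Icc.exists_bound_of_continuousOn (hf.continuousOn (s := Set.Icc a b))
    exact Integrable.of_bound hf.aestronglyMeasurable C (hρ.mono hC)
  have integral_polynomial (p : Polynomial ℝ) : ∫ t, p.eval t ∂μ = ∫ t, p.eval t ∂ν := by
    simp_rw [Polynomial.eval_eq_sum_range]
    rw [integral_finsetSum _ fun i _ ↦ integrable_of_continuous hμ (by fun_prop),
      integral_finsetSum _ fun i _ ↦ integrable_of_continuous hν (by fun_prop)]
    simp_rw [integral_const_mul, hmom]
  have integral_near {ρ : Measure ℝ} [IsFiniteMeasure ρ] (hρ : ∀ᵐ t ∂ρ, t ∈ Set.Icc a b)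
      {f : ℝ → ℝ} (hf : Continuous f) {p : Polynomial ℝ} {δ : ℝ}
      (hp : ∀ t ∈ Set.Icc a b, |p.eval t - f t| < δ) :
      |∫ t, p.eval t ∂ρ - ∫ t, f t ∂ρ| ≤ δ * ρ.real Set.univ := by
    rw [← integral_sub (integrable_of_continuous hρ p.continuous) (integrable_of_continuous hρ hf)]
    have hbound : ∀ᵐ t ∂ρ, ‖p.eval t - f t‖ ≤ δ := hρ.mono fun t ht ↦ (hp t ht).le
    exact norm_integral_le_of_norm_le_const hbound
  refine ext_of_forall_integral_eq_of_IsFiniteMeasure fun f ↦ ?_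
  refine eq_of_abs_sub_le_all fun ε hε ↦ ?_
  set c := μ.real Set.univ + ν.real Set.univ + 1
  have hμ0 : 0 ≤ μ.real Set.univ := measureReal_nonneg
  have hν0 : 0 ≤ ν.real Set.univ := measureReal_nonneg
  have hc0 : 0 < c := by positivity
  obtain ⟨p, hp⟩ := exists_polynomial_near_of_continuousOn a b f f.continuous.continuousOn
    (ε / c) (by positivity)
  have hμp := integral_near hμ f.continuous hp
  have hνp := integral_near hν f.continuous hp
  rw [integral_polynomial p] at hμp
  have hεc : ε / c * c = ε := by field_simp
  have : 0 < ε / c := by positivity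
  rw [abs_le] at *
  constructor <;> nlinarith

/-- Two bounded nonnegative functions whose powers `k ≥ n` have equal integrals have superlevel
sets of equal measure at every positive level. -/
theorem measure_superlevel_eq_of_integral_pow_eq {α : Type*} [MeasurableSpace α] {μ : Measure α}
    {n : ℕ} {f g : α → ℝ} (hf : Measurable f) (hg : Measurable g)
    (hf0 : ∀ x, 0 ≤ f x) (hg0 : ∀ x, 0 ≤ g x) {C : ℝ} (hfC : ∀ x, f x ≤ C) (hgC : ∀ x, g x ≤ C)
    (hfn : Integrable (fun x ↦ f x ^ n) μ) (hgn : Integrable (fun x ↦ g x ^ n) μ)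
    (hmom : ∀ k : ℕ, n ≤ k → ∫ x, f x ^ k ∂μ = ∫ x, g x ^ k ∂μ) {r : ℝ} (hr : 0 < r) :
    μ {x | r < f x} = μ {x | r < g x} := by
  let pushforward (u : α → ℝ) : Measure ℝ :=
    (μ.withDensity fun x ↦ ENNReal.ofReal (u x ^ n)).map u
  have finite {u : α → ℝ} (hun : Integrable (fun x ↦ u x ^ n) μ) :
      IsFiniteMeasure (pushforward u) := by
    have := isFiniteMeasure_withDensity_ofReal hun.2
    exact Measure.isFiniteMeasure_map _ _
  have ae_mem {u : α → ℝ} (hu : Measurable u) (hu0 : ∀ x, 0 ≤ u x) (huC : ∀ x, u x ≤ C) :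
      ∀ᵐ t ∂pushforward u, t ∈ Set.Icc 0 C :=
    (ae_map_iff hu.aemeasurable measurableSet_Icc).2 (ae_of_all _ fun x ↦ ⟨hu0 x, huC x⟩)
  have moment {u : α → ℝ} (hu : Measurable u) (hu0 : ∀ x, 0 ≤ u x) (k : ℕ) :
      ∫ t, t ^ k ∂pushforward u = ∫ x, u x ^ (n + k) ∂μ := by
    rw [integral_map hu.aemeasurable (by fun_prop),
      integral_withDensity_eq_integral_toReal_smul (by fun_prop) (by simp)]
    refine integral_congr_ae (ae_of_all _ fun x ↦ ?_)
    simp [ENNReal.toReal_ofReal (pow_nonneg (hu0 x) n), pow_add]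
  have superlevel {u : α → ℝ} (hu : Measurable u) :
      ∫⁻ t in Set.Ioi r, (ENNReal.ofReal (t ^ n))⁻¹ ∂pushforward u = μ {x | r < u x} := by
    have hs : MeasurableSet {x | r < u x} := measurableSet_lt measurable_const hu
    rw [setLIntegral_map measurableSet_Ioi (by fun_prop) hu,
      setLIntegral_withDensity_eq_setLIntegral_mul _ (by fun_prop) (by fun_prop)
        (hu measurableSet_Ioi)]
    change ∫⁻ x in {x | r < u x}, _ ∂μ = _
    rw [← setLIntegral_one]
    refine setLIntegral_congr_fun hs fun x hx ↦ ?_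
    have : 0 < u x := hr.trans hx
    exact ENNReal.mul_inv_cancel (by simpa using by positivity) ENNReal.ofReal_ne_top
  have := finite hfn
  have := finite hgn
  have heq : pushforward f = pushforward g :=
    ext_of_moments_eq_of_ae_mem_Icc (ae_mem hf hf0 hfC) (ae_mem hg hg0 hgC) fun k ↦ by
      rw [moment hf hf0, moment hg hg0, hmom _ (Nat.le_add_right n k)]
  rw [← superlevel hf, ← superlevel hg, heq]

theorem integrable_exp_neg_mul_norm_rpow {E : Type*} [NormedAddCommGroup E] [NormedSpace ℝ E]
    [FiniteDimensional ℝ E] [Nontrivial E] [MeasurableSpace E] [BorelSpace E] (μ : Measure E)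
    [μ.IsAddHaarMeasure] {b p : ℝ} (hb : 0 < b) (hp : 0 < p) :
    Integrable (fun x : E ↦ exp (-b * ‖x‖ ^ p)) μ := by
  rw [integrable_fun_norm_addHaar μ (f := fun y ↦ exp (-b * y ^ p))]
  refine (integrableOn_rpow_mul_exp_neg_mul_rpow (s := (Module.finrank ℝ E - 1 : ℕ))
    (neg_one_lt_zero.trans_le (Nat.cast_nonneg _)) hp hb).congr_fun (fun y _ ↦ ?_) measurableSet_Ioi
  simp

/-- A nonnegative measurable function dominated by a stretched exponential is bounded and its
positive powers are integrable. -/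
theorem bounded_and_integrable_pow_of_le_exp {n : ℕ} (hn : 1 ≤ n)
    {V : EuclideanSpace ℝ (Fin n) → ℝ} (hVmeas : Measurable V) (hVnn : ∀ x, 0 ≤ V x)
    (hVdec : ∃ ε A B : ℝ, 0 < ε ∧ 0 < A ∧ 0 < B ∧
      ∀ x, V x ≤ A * Real.exp (-B * ‖x‖ ^ (1 + ε))) :
    (∃ C, ∀ x, V x ≤ C) ∧ ∀ k : ℕ, 1 ≤ k → Integrable (fun x ↦ V x ^ k) := by
  obtain ⟨ε, A, B, hε, hA, hB, hV⟩ := hVdec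
  have hVA (x) : V x ≤ A := (hV x).trans <| mul_le_of_le_one_right hA.le <|
    exp_le_one_iff.2 <| mul_nonpos_of_nonpos_of_nonneg (neg_nonpos.2 hB.le) (by positivity)
  refine ⟨⟨A, hVA⟩, fun k hk ↦ ?_⟩
  have : Nonempty (Fin n) := ⟨⟨0, hn⟩⟩
  refine Integrable.mono' (((integrable_exp_neg_mul_norm_rpow volume hB
    (by positivity : 0 < 1 + ε)).const_mul A).const_mul (A ^ (k - 1)))
    (hVmeas.pow_const k).aestronglyMeasurable (ae_of_all _ fun x ↦ ?_)
  rw [Real.norm_of_nonneg (pow_nonneg (hVnn x) k), ← Nat.sub_add_cancel hk, pow_succ,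
    Nat.add_sub_cancel]
  exact mul_le_mul (pow_le_pow_left₀ (hVnn x) (hVA x) _) (hV x) (hVnn x) (by positivity)

theorem statement7 (n : ℕ) (hn : 1 ≤ n)
    (V V₀ : EuclideanSpace ℝ (Fin n) → ℝ)
    (hVmeas : Measurable V) (hV₀meas : Measurable V₀)
    (hVnn : ∀ x, 0 ≤ V x) (hV₀nn : ∀ x, 0 ≤ V₀ x)
    (hVdec : ∃ ε A B : ℝ, 0 < ε ∧ 0 < A ∧ 0 < B ∧
      ∀ x, V x ≤ A * Real.exp (-B * ‖x‖ ^ (1 + ε)))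
    (hV₀dec : ∃ ε A B : ℝ, 0 < ε ∧ 0 < A ∧ 0 < B ∧
      ∀ x, V₀ x ≤ A * Real.exp (-B * ‖x‖ ^ (1 + ε)))
    (hmom : ∀ k : ℕ, n ≤ k → ∫ x, (V x) ^ k = ∫ x, (V₀ x) ^ k) :
    ∀ lam : ℝ, 0 < lam →
      volume {x | lam < V x} = volume {x | lam < V₀ x} := by
  intro lam hlam
  obtain ⟨⟨C, hC⟩, hVint⟩ := bounded_and_integrable_pow_of_le_exp hn hVmeas hVnn hVdec
  obtain ⟨⟨C₀, hC₀⟩, hV₀int⟩ := bounded_and_integrable_pow_of_le_exp hn hV₀meas hV₀nn hV₀dec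
  exact measure_superlevel_eq_of_integral_pow_eq hVmeas hV₀meas hVnn hV₀nn
    (fun x ↦ (hC x).trans (le_max_left C C₀)) (fun x ↦ (hC₀ x).trans (le_max_right C C₀))
    (hVint n hn) (hV₀int n hn) hmom hlam
end

section
/- Let n ≥ 1, let R: [0,∞) → [0,∞) be smooth with R(r) ≤ A exp(−B r^{1+ε}) for some ε, A, B > 0, and suppose R′(r) vanishes only at r = 0 and at those r with R(r) = 0. Define V₀: ℝⁿ → [0,∞) by V₀(x) = R(|x|). Then the pushforward of Lebesgue measure on ℝⁿ under V₀, restricted to (0,∞), is absolutely continuous with respect to Lebesgue measure on ℝ; that is, for every Borel set E ⊆ (0,∞) of Lebesgue measure zero, vol(V₀^{−1}(E)) = 0. -/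
open MeasureTheory Real

open Filter Topology in
/-- A set is Lebesgue null if its image under a function having a nonzero strict derivative at each
of its points is null. -/
theorem volume_eq_zero_of_volume_image_eq_zero {f f' : ℝ → ℝ} {s : Set ℝ}
    (hf : ∀ x ∈ s, HasStrictDerivAt f (f' x) x) (hf' : ∀ x ∈ s, f' x ≠ 0)
    (h : volume (f '' s) = 0) : volume s = 0 := by
  refine measure_null_of_locally_null s fun x hx => ?_
  set g := (hf x hx).localInverse f (f' x) x (hf' x hx)
  have hg : ∀ᶠ y in 𝓝 x, g (f y) = y :=
    ((hf x hx).hasStrictFDerivAt_equiv (hf' x hx)).eventually_left_inverse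
  refine ⟨s ∩ {y | ∀ᶠ z in 𝓝 y, g (f z) = z}, ?_, ?_⟩
  · exact inter_mem self_mem_nhdsWithin (mem_nhdsWithin_of_mem_nhds hg.eventually_nhds)
  · set u := s ∩ {y | ∀ᶠ z in 𝓝 y, g (f z) = z}
    have hu : u ⊆ g '' (f '' u) := fun y hy =>
      ⟨f y, Set.mem_image_of_mem f hy, hy.2.self_of_nhds⟩
    refine measure_mono_null hu
      (addHaar_image_eq_zero_of_differentiableOn_of_addHaar_eq_zero volume ?_
        (measure_mono_null (Set.image_mono Set.inter_subset_left) h))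
    rintro _ ⟨y, hy, rfl⟩
    exact ((hf y hy.1).to_local_left_inverse (hf' y hy.1)
      hy.2).hasDerivAt.differentiableAt.differentiableWithinAt

/-- In a nontrivial finite-dimensional space, the preimage of a null set under the norm is null. -/
theorem addHaar_preimage_norm_eq_zero {E : Type*} [NormedAddCommGroup E] [NormedSpace ℝ E]
    [MeasurableSpace E] [BorelSpace E] [FiniteDimensional ℝ E] [Nontrivial E]
    (μ : Measure E) [μ.IsAddHaarMeasure] {s : Set ℝ} (hs : volume s = 0) :
    μ ((fun x : E => ‖x‖) ⁻¹' s) = 0 := by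
  set f : ℝ → ℝ := s.indicator 1
  have hf : (fun y : ℝ => y ^ (Module.finrank ℝ E - 1) • f y)
      =ᵐ[volume.restrict (Set.Ioi 0)] 0 := by
    filter_upwards [ae_restrict_of_ae (measure_eq_zero_iff_ae_notMem.1 hs)] with y hy
    simp [f, hy]
  have hint : Integrable (fun x : E => f ‖x‖) μ :=
    (integrable_fun_norm_addHaar μ).2 ((integrable_zero _ _ _).congr hf.symm)
  have hzero : ∫ x, f ‖x‖ ∂μ = 0 := by
    rw [integral_fun_norm_addHaar, integral_congr_ae hf]
    simp
  have hnonneg : 0 ≤ fun x : E => f ‖x‖ := fun x =>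
    Set.indicator_nonneg (fun _ _ => zero_le_one) _
  refine measure_eq_zero_iff_ae_notMem.2 ?_
  filter_upwards [(integral_eq_zero_iff_of_nonneg hnonneg hint).1 hzero] with x hx hxs
  have hxs' : ‖x‖ ∈ s := hxs
  simp [f, hxs'] at hx

theorem statement8 (n : ℕ) (hn : 1 ≤ n)
    (R : ℝ → ℝ) (hR : ContDiffOn ℝ (⊤ : ℕ∞) R (Set.Ici 0))
    (hRnn : ∀ r, 0 ≤ r → 0 ≤ R r)
    (hRdec : ∃ ε A B : ℝ, 0 < ε ∧ 0 < A ∧ 0 < B ∧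
      ∀ r, 0 ≤ r → R r ≤ A * Real.exp (-B * r ^ (1 + ε)))
    (hR' : ∀ r, 0 ≤ r → deriv R r = 0 → r = 0 ∨ R r = 0)
    (V₀ : EuclideanSpace ℝ (Fin n) → ℝ) (hV₀ : ∀ x, V₀ x = R ‖x‖) :
    ∀ E : Set ℝ, E ⊆ Set.Ioi (0 : ℝ) → MeasurableSet E → volume E = 0 →
      volume (V₀ ⁻¹' E) = 0 := by
  intro E hE _ hE0
  have : Nonempty (Fin n) := ⟨⟨0, hn⟩⟩
  have hs : volume (Set.Ioi 0 ∩ R ⁻¹' E) = 0 := by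
    refine volume_eq_zero_of_volume_image_eq_zero (f := R) (f' := deriv R) ?_ ?_
      (measure_mono_null (Set.image_subset_iff.2 Set.inter_subset_right) hE0)
    · rintro r ⟨hr, -⟩
      exact (hR.contDiffAt (Ici_mem_nhds hr)).hasStrictDerivAt (by simp)
    · rintro r ⟨hr, hrE⟩ h0
      rcases hR' r (le_of_lt hr) h0 with h | h
      · exact (ne_of_gt hr) h
      · exact (ne_of_gt (hE hrE)) h
  refine measure_mono_null (t := {0} ∪ (fun x => ‖x‖) ⁻¹' (Set.Ioi 0 ∩ R ⁻¹' E)) ?_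
    (measure_union_null (measure_singleton _) (addHaar_preimage_norm_eq_zero volume hs))
  intro x hx
  rcases eq_or_ne x 0 with rfl | hx0
  · exact Or.inl rfl
  · exact Or.inr ⟨norm_pos_iff.2 hx0, show R ‖x‖ ∈ E from hV₀ x ▸ hx⟩
end

section
/- Let U ⊆ ℝ be an open set with 0 < vol(U) < ∞, where vol is Lebesgue measure. Then the topological frontier ∂U of U contains at least 2 points. Moreover, ∂U contains exactly 2 points if and only if U is a bounded open interval. (In particular, if U has the same measure as a bounded nonempty open interval I, then card(∂U) ≥ card(∂I), with equality if and only if U is an interval.) -/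
open MeasureTheory Real

/-- A preconnected set that meets `U` and avoids the frontier of `U` is contained in `U`. -/
theorem IsPreconnected.subset_of_inter_frontier_eq_empty {X : Type*} [TopologicalSpace X]
    {s U : Set X} (hs : IsPreconnected s) (hne : (s ∩ U).Nonempty)
    (hd : ∀ x ∈ s, x ∉ frontier U) : s ⊆ U := by
  have hdisj : Disjoint (interior U) (interior Uᶜ) :=
    disjoint_compl_right.mono interior_subset interior_subset
  have hcover : s ⊆ interior U ∪ interior Uᶜ := fun z hz => by
    have hzf := hd z hz
    rw [interior_compl]
    simp only [frontier, Set.mem_sdiff, Set.mem_union, Set.mem_compl_iff] at hzf ⊢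
    tauto
  rcases hs.subset_or_subset isOpen_interior isOpen_interior hdisj hcover with h | h
  · exact h.trans interior_subset
  · obtain ⟨z, hzs, hzU⟩ := hne
    exact absurd hzU (interior_subset (h hzs))

theorem exists_mem_frontier_le {U : Set ℝ} (hfin : volume U < ⊤) {x : ℝ} (hx : x ∈ U) :
    ∃ a ∈ frontier U, a ≤ x := by
  by_contra! h
  have hsub : Set.Iic x ⊆ U := isPreconnected_Iic.subset_of_inter_frontier_eq_empty
    ⟨x, Set.self_mem_Iic, hx⟩ fun y hy hyf => (h y hyf).not_ge hy
  exact absurd (measure_mono hsub |>.trans_lt hfin) (by simp)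

theorem exists_mem_frontier_ge {U : Set ℝ} (hfin : volume U < ⊤) {x : ℝ} (hx : x ∈ U) :
    ∃ b ∈ frontier U, x ≤ b := by
  by_contra! h
  have hsub : Set.Ici x ⊆ U := isPreconnected_Ici.subset_of_inter_frontier_eq_empty
    ⟨x, Set.self_mem_Ici, hx⟩ fun y hy hyf => (h y hyf).not_ge hy
  exact absurd (measure_mono hsub |>.trans_lt hfin) (by simp)

/-- Every point of an open set of finite length lies strictly between two frontier points. -/
theorem IsOpen.exists_frontier_lt_lt {U : Set ℝ} (hU : IsOpen U) (hfin : volume U < ⊤)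
    {x : ℝ} (hx : x ∈ U) : ∃ a ∈ frontier U, ∃ b ∈ frontier U, a < x ∧ x < b := by
  have hxf : x ∉ frontier U := fun h => (hU.frontier_eq ▸ h).2 hx
  obtain ⟨a, ha, hax⟩ := exists_mem_frontier_le hfin hx
  obtain ⟨b, hb, hxb⟩ := exists_mem_frontier_ge hfin hx
  exact ⟨a, ha, b, hb, hax.lt_of_ne (by rintro rfl; exact hxf ha),
    hxb.lt_of_ne (by rintro rfl; exact hxf hb)⟩

theorem encard_frontier_Ioo {a b : ℝ} (hab : a < b) : (frontier (Set.Ioo a b)).encard = 2 := by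
  rw [frontier_Ioo hab, Set.encard_pair hab.ne]

theorem IsOpen.two_le_encard_frontier {U : Set ℝ} (hU : IsOpen U) (hne : U.Nonempty)
    (hfin : volume U < ⊤) : 2 ≤ (frontier U).encard := by
  obtain ⟨x, hx⟩ := hne
  obtain ⟨a, ha, b, hb, hax, hxb⟩ := hU.exists_frontier_lt_lt hfin hx
  rw [← Set.encard_pair (hax.trans hxb).ne]
  exact Set.encard_le_encard (Set.pair_subset ha hb)

theorem IsOpen.encard_frontier_eq_two_iff {U : Set ℝ} (hU : IsOpen U) (hne : U.Nonempty)
    (hfin : volume U < ⊤) :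
    (frontier U).encard = 2 ↔ ∃ a b : ℝ, a < b ∧ U = Set.Ioo a b := by
  refine ⟨fun h => ?_, fun ⟨a, b, hab, h⟩ => h ▸ encard_frontier_Ioo hab⟩
  obtain ⟨x, hx⟩ := hne
  obtain ⟨a, ha, b, hb, hax, hxb⟩ := hU.exists_frontier_lt_lt hfin hx
  have hab := hax.trans hxb
  have hfr : frontier U = {a, b} := by
    refine (Set.Finite.eq_of_subset_of_encard_le' (Set.finite_of_encard_eq_coe h)
      (Set.pair_subset ha hb) ?_).symm
    rw [h, Set.encard_pair hab.ne]
  refine ⟨a, b, hab, Set.Subset.antisymm (fun y hy => ?_) ?_⟩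
  · obtain ⟨c, hc, d, hd, hcy, hyd⟩ := hU.exists_frontier_lt_lt hfin hy
    rw [hfr] at hc hd
    rcases hc with rfl | rfl <;> rcases hd with rfl | rfl <;> constructor <;> linarith
  · refine isPreconnected_Ioo.subset_of_inter_frontier_eq_empty ⟨x, ⟨hax, hxb⟩, hx⟩ ?_
    rintro y ⟨hay, hyb⟩ hy
    rw [hfr] at hy
    rcases hy with rfl | rfl
    exacts [hay.false, hyb.false]

theorem statement10 (U : Set ℝ) (hU : IsOpen U)
    (h0 : 0 < volume U) (hfin : volume U < ⊤) :
    2 ≤ (frontier U).encard ∧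
    ((frontier U).encard = 2 ↔ ∃ a b : ℝ, a < b ∧ U = Set.Ioo a b) ∧
    ∀ a b : ℝ, a < b → volume U = volume (Set.Ioo a b) →
      (frontier (Set.Ioo a b)).encard ≤ (frontier U).encard ∧
      ((frontier U).encard = (frontier (Set.Ioo a b)).encard ↔
        ∃ c d : ℝ, c < d ∧ U = Set.Ioo c d) := by
  have hne : U.Nonempty := nonempty_of_measure_ne_zero h0.ne'
  have hle := hU.two_le_encard_frontier hne hfin
  have hiff := hU.encard_frontier_eq_two_iff hne hfin
  refine ⟨hle, hiff, fun a b hab _ => ?_⟩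
  rw [encard_frontier_Ioo hab]
  exact ⟨hle, hiff⟩
end

section
/- Let n ≥ 1, let f: ℝ → ℝ be a Schwartz function such that ∫_{ℝⁿ} f^{(k)}(|ξ|²) dξ ≠ 0 for every integer k ≥ n, and let V, V₀: ℝⁿ → [0,∞) be measurable, bounded functions each satisfying a bound V(x) ≤ A exp(−B|x|^{1+ε}) for some ε, A, B > 0. Suppose that for every λ > 0, ∫_{ℝⁿ}∫_{ℝⁿ} [f((|ξ|² + V(x))/λ) − f(|ξ|²/λ)] dξ dx = ∫_{ℝⁿ}∫_{ℝⁿ} [f((|ξ|² + V₀(x))/λ) − f(|ξ|²/λ)] dξ dx. Then ∫_{ℝⁿ} V(x)^k dx = ∫_{ℝⁿ} V₀(x)^k dx for every integer k ≥ n. -/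
open MeasureTheory Real

open scoped Nat

/-- Every derivative of a Schwartz function on `ℝ` decays faster than any power on `[0, ∞)`. -/
lemma SchwartzMap.exists_abs_iteratedDeriv_le (f : SchwartzMap ℝ ℝ) (k N : ℕ) :
    ∃ C, 0 ≤ C ∧ ∀ a : ℝ, 0 ≤ a → |iteratedDeriv k f a| ≤ C * ((1 + a) ^ N)⁻¹ := by
  refine ⟨2 ^ N * (Finset.Iic (N, k)).sup (fun m => SchwartzMap.seminorm ℝ m.1 m.2) f,
    by positivity, fun a ha => ?_⟩
  have h := SchwartzMap.one_add_le_sup_seminorm_apply (𝕜 := ℝ) (m := (N, k)) le_rfl le_rfl f a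
  rw [norm_iteratedFDeriv_eq_norm_iteratedDeriv, Real.norm_of_nonneg ha, Real.norm_eq_abs] at h
  rw [← div_eq_mul_inv, le_div_iff₀ (by positivity), mul_comm]
  exact h

/-- Taylor's formula for a Schwartz function, with a remainder that decays in the base point. -/
lemma SchwartzMap.exists_taylor_remainder_le (f : SchwartzMap ℝ ℝ) (K N : ℕ) :
    ∃ C, 0 ≤ C ∧ ∀ a s : ℝ, 0 ≤ a → 0 ≤ s →
      |f (a + s) - f a - ∑ k ∈ Finset.Icc 1 K, iteratedDeriv k f a * (s ^ k / k !)| ≤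
        C * (((1 + a) ^ N)⁻¹ * s ^ (K + 1)) := by
  obtain ⟨C, hC, h⟩ := f.exists_abs_iteratedDeriv_le (K + 1) N
  refine ⟨C, hC, fun a s ha hs => ?_⟩
  have hsum : f a + ∑ k ∈ Finset.Icc 1 K, iteratedDeriv k f a * (s ^ k / k !) =
      ∑ k ∈ Finset.range (K + 1), iteratedDeriv k f a * (s ^ k / k !) := by
    rw [Finset.range_eq_Ico, Finset.sum_eq_sum_Ico_succ_bot (Nat.succ_pos K)]
    simp
    rfl
  rw [sub_sub, hsum]
  rcases hs.eq_or_lt with rfl | hs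
  · rw [← hsum, Finset.sum_eq_zero]
    · simp
    · intro k hk
      simp [(Nat.one_le_iff_ne_zero.1 (Finset.mem_Icc.1 hk).1)]
  have hsm : ∀ m : ℕ, ContDiff ℝ m f := fun m => f.smooth m
  have hlt : a < a + s := by linarith
  obtain ⟨y, hy, hyeq⟩ := taylor_mean_remainder_lagrange_iteratedDeriv (n := K) hlt.ne
    (hsm (K + 1)).contDiffOn
  have hT : taylorWithinEval f K (Set.uIcc a (a + s)) a (a + s) =
      ∑ k ∈ Finset.range (K + 1), iteratedDeriv k f a * (s ^ k / k !) := by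
    rw [taylor_within_apply]
    refine Finset.sum_congr rfl fun k _ => ?_
    rw [Set.uIcc_of_lt hlt, iteratedDerivWithin_eq_iteratedDeriv (uniqueDiffOn_Icc hlt)
      (hsm k).contDiffAt (Set.left_mem_Icc.2 hlt.le), smul_eq_mul, add_sub_cancel_left]
    ring
  rw [hT, add_sub_cancel_left] at hyeq
  rw [Set.uIoo_of_lt hlt] at hy
  rw [hyeq, abs_div, abs_mul, abs_of_nonneg (pow_nonneg hs.le _), Nat.abs_cast, ← mul_assoc]
  have hfac : (1 : ℝ) ≤ (K + 1)! := by exact_mod_cast (K + 1).factorial_pos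
  refine (div_le_self (by positivity) hfac).trans ?_
  gcongr
  refine (h y (ha.trans hy.1.le)).trans ?_
  gcongr
  exact hy.1.le

section Integration

variable {E : Type*} [NormedAddCommGroup E] [NormedSpace ℝ E] [FiniteDimensional ℝ E]
  [MeasurableSpace E] [BorelSpace E] (μ : Measure E) [μ.IsAddHaarMeasure]

lemma integrable_inv_one_add_norm_sq_pow :
    Integrable (fun x : E => ((1 + ‖x‖ ^ 2) ^ (Module.finrank ℝ E + 1))⁻¹) μ := by
  have h := integrable_rpow_neg_one_add_norm_sq (E := E) (μ := μ)
    (r := 2 * ((Module.finrank ℝ E + 1 : ℕ) : ℝ)) (by norm_cast; omega)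
  refine h.congr (Filter.Eventually.of_forall fun x => ?_)
  have h0 : (0 : ℝ) ≤ 1 + ‖x‖ ^ 2 := by positivity
  dsimp only
  rw [show -(2 * ((Module.finrank ℝ E + 1 : ℕ) : ℝ)) / 2 = -((Module.finrank ℝ E + 1 : ℕ) : ℝ) by
    ring, Real.rpow_neg h0, Real.rpow_natCast]

/-- A nonnegative measurable function with stretched exponential decay of order at least `1`
has finite moments of every positive order. -/
lemma integrable_pow_of_le_exp {V : E → ℝ} (hV : Measurable V) (hnn : ∀ x, 0 ≤ V x)
    (hdec : ∃ ε A B : ℝ, 0 < ε ∧ 0 < A ∧ 0 < B ∧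
      ∀ x, V x ≤ A * Real.exp (-B * ‖x‖ ^ (1 + ε))) {k : ℕ} (hk : 1 ≤ k) :
    Integrable (fun x => V x ^ k) μ := by
  obtain ⟨ε, A, B, hε, hA, hB, h⟩ := hdec
  set m := Module.finrank ℝ E + 1 with hm
  have hw : Integrable (fun x : E => (1 + ‖x‖) ^ (-(m : ℝ))) μ :=
    integrable_one_add_norm (by rw [hm]; push_cast; linarith)
  have hVA : ∀ x, V x ≤ A := fun x => (h x).trans <| by
    have : Real.exp (-B * ‖x‖ ^ (1 + ε)) ≤ 1 := by
      rw [Real.exp_le_one_iff, neg_mul, neg_nonpos]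
      positivity
    nlinarith
  refine (hw.const_mul (A ^ (k - 1) * (A * (Real.exp (2 * B) * (m ! / B ^ m))))).mono'
    (hV.pow_const k).aestronglyMeasurable (Filter.Eventually.of_forall fun x => ?_)
  rw [Real.norm_of_nonneg (pow_nonneg (hnn x) k), ← Nat.sub_add_cancel hk, pow_succ,
    Nat.sub_add_cancel hk, mul_assoc (A ^ (k - 1)), mul_assoc A]
  have hr : ‖x‖ ≤ 1 + ‖x‖ ^ (1 + ε) := by
    rcases le_total ‖x‖ 1 with h1 | h1
    · have : 0 ≤ ‖x‖ ^ (1 + ε) := by positivity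
      linarith
    · have := Real.rpow_le_rpow_of_exponent_le h1 (show (1 : ℝ) ≤ 1 + ε by linarith)
      rw [Real.rpow_one] at this
      linarith
  have hexp : Real.exp (-B * ‖x‖ ^ (1 + ε)) ≤
      Real.exp (2 * B) * (m ! / B ^ m) * (1 + ‖x‖) ^ (-(m : ℝ)) := by
    calc Real.exp (-B * ‖x‖ ^ (1 + ε)) ≤ Real.exp (2 * B + -(B * (1 + ‖x‖))) := by
          gcongr
          nlinarith
      _ = Real.exp (2 * B) * (Real.exp (B * (1 + ‖x‖)))⁻¹ := by rw [Real.exp_add, Real.exp_neg]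
      _ ≤ Real.exp (2 * B) * ((B * (1 + ‖x‖)) ^ m / m !)⁻¹ := by
          gcongr
          exact Real.pow_div_factorial_le_exp _ (by positivity) m
      _ = _ := by
          rw [Real.rpow_neg (by positivity), Real.rpow_natCast, mul_pow]
          field_simp
  gcongr
  · exact hnn x
  · exact hnn x
  · exact hVA x
  · exact (h x).trans (by gcongr)

lemma SchwartzMap.integrable_iteratedDeriv_norm_sq (f : SchwartzMap ℝ ℝ) (k : ℕ) :
    Integrable (fun ξ : E => iteratedDeriv k f (‖ξ‖ ^ 2)) μ := by
  obtain ⟨C, -, h⟩ := f.exists_abs_iteratedDeriv_le k (Module.finrank ℝ E + 1)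
  refine ((integrable_inv_one_add_norm_sq_pow μ).const_mul C).mono' ?_
    (Filter.Eventually.of_forall fun ξ => h _ (by positivity))
  have : Continuous (iteratedDeriv k f) := (f.smooth k).continuous_iteratedDeriv k le_rfl
  exact (this.comp (by fun_prop)).aestronglyMeasurable

/-- Semiclassical expansion in powers of the coupling `c ^ 2`, up to order `K`, of the trace
integral of `f (‖c ξ‖² + c² V x) - f (‖c ξ‖²)`. -/
lemma SchwartzMap.exists_integral_expansion (f : SchwartzMap ℝ ℝ) {V : E → ℝ}
    (hV : Measurable V) (hnn : ∀ x, 0 ≤ V x)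
    (hint : ∀ k : ℕ, 1 ≤ k → Integrable (fun x => V x ^ k) μ) (K : ℕ) :
    ∃ C, ∀ c : ℝ, 0 < c →
      |(∫ p : E × E, (f (‖c • p.1‖ ^ 2 + c ^ 2 * V p.2) - f (‖c • p.1‖ ^ 2)) ∂(μ.prod μ)) -
        |(c ^ Module.finrank ℝ E)⁻¹| * ∑ k ∈ Finset.Icc 1 K,
          (∫ ξ, iteratedDeriv k f (‖ξ‖ ^ 2) ∂μ) * (∫ x, V x ^ k ∂μ) / k ! * (c ^ 2) ^ k| ≤
      |(c ^ Module.finrank ℝ E)⁻¹| * (C * (c ^ 2) ^ (K + 1)) := by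
  set N := Module.finrank ℝ E + 1
  obtain ⟨C, hC, h⟩ := f.exists_taylor_remainder_le K N
  refine ⟨C * ((∫ ξ : E, ((1 + ‖ξ‖ ^ 2) ^ N)⁻¹ ∂μ) * ∫ x, V x ^ (K + 1) ∂μ), fun c hc => ?_⟩
  set r := |(c ^ Module.finrank ℝ E)⁻¹|
  let T : ℕ → E × E → ℝ := fun k p =>
    iteratedDeriv k f (‖c • p.1‖ ^ 2) * ((c ^ 2 * V p.2) ^ k / k !)
  let D : E × E → ℝ := fun p => f (‖c • p.1‖ ^ 2 + c ^ 2 * V p.2) - f (‖c • p.1‖ ^ 2)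
  let W : E × E → ℝ := fun p => C * (((1 + ‖c • p.1‖ ^ 2) ^ N)⁻¹ * (c ^ 2 * V p.2) ^ (K + 1))
  have hpow : ∀ k : ℕ, 1 ≤ k → Integrable (fun x => (c ^ 2 * V x) ^ k) μ := fun k hk => by
    simp_rw [mul_pow]
    exact (hint k hk).const_mul _
  have hTint : ∀ k ∈ Finset.Icc 1 K, Integrable (T k) (μ.prod μ) := fun k hk =>
    ((f.integrable_iteratedDeriv_norm_sq μ k).comp_smul hc.ne').mul_prod
      ((hpow k (Finset.mem_Icc.1 hk).1).div_const _)
  have hWint : Integrable W (μ.prod μ) :=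
    (((integrable_inv_one_add_norm_sq_pow μ).comp_smul hc.ne').mul_prod
      (hpow (K + 1) (by omega))).const_mul C
  have hbound : ∀ p, ‖D p - ∑ k ∈ Finset.Icc 1 K, T k p‖ ≤ W p := fun p =>
    h _ _ (by positivity) (mul_nonneg (by positivity) (hnn _))
  have hsumint : Integrable (fun p => ∑ k ∈ Finset.Icc 1 K, T k p) (μ.prod μ) :=
    integrable_finsetSum _ hTint
  have hDmeas : Measurable D := by
    have := f.continuous.measurable
    fun_prop
  have hRint : Integrable (fun p => D p - ∑ k ∈ Finset.Icc 1 K, T k p) (μ.prod μ) :=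
    hWint.mono' (hDmeas.aestronglyMeasurable.sub hsumint.aestronglyMeasurable)
      (Filter.Eventually.of_forall hbound)
  have hDint : Integrable D (μ.prod μ) := 
    (hRint.add hsumint).congr (Filter.Eventually.of_forall fun p => sub_add_cancel _ _)
  have hTval : ∀ k, ∫ p, T k p ∂(μ.prod μ) = r *
      ((∫ ξ, iteratedDeriv k f (‖ξ‖ ^ 2) ∂μ) * (∫ x, V x ^ k ∂μ) / k ! * (c ^ 2) ^ k) := by
    intro k
    rw [integral_prod_mul (fun ξ : E => iteratedDeriv k f (‖c • ξ‖ ^ 2))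
      (fun x => (c ^ 2 * V x) ^ k / k !),
      Measure.integral_comp_smul μ (fun ξ : E => iteratedDeriv k f (‖ξ‖ ^ 2)), integral_div]
    simp_rw [mul_pow]
    rw [integral_const_mul, smul_eq_mul]
    ring
  have hWval : ∫ p, W p ∂(μ.prod μ) = r * (C * ((∫ ξ : E, ((1 + ‖ξ‖ ^ 2) ^ N)⁻¹ ∂μ) *
      ∫ x, V x ^ (K + 1) ∂μ) * (c ^ 2) ^ (K + 1)) := by
    rw [integral_const_mul, integral_prod_mul (fun ξ : E => ((1 + ‖c • ξ‖ ^ 2) ^ N)⁻¹)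
      (fun x => (c ^ 2 * V x) ^ (K + 1)),
      Measure.integral_comp_smul μ (fun ξ : E => ((1 + ‖ξ‖ ^ 2) ^ N)⁻¹)]
    simp_rw [mul_pow]
    rw [integral_const_mul, smul_eq_mul]
    ring
  calc _ = ‖∫ p, (D p - ∑ k ∈ Finset.Icc 1 K, T k p) ∂(μ.prod μ)‖ := by
        rw [integral_sub hDint hsumint, integral_finsetSum _ hTint, Finset.mul_sum]
        simp_rw [hTval]
        rfl
    _ ≤ ∫ p, W p ∂(μ.prod μ) :=
        norm_integral_le_of_norm_le hWint (Filter.Eventually.of_forall hbound)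
    _ = _ := hWval

end Integration

/-- If every truncation of a power series without constant term is of the order of the first
omitted term as `t → 0⁺`, all coefficients vanish. -/
lemma coeff_eq_zero_of_forall_abs_sum_le {d : ℕ → ℝ}
    (h : ∀ K : ℕ, ∃ C, ∀ t : ℝ, 0 < t → |∑ k ∈ Finset.Icc 1 K, d k * t ^ k| ≤ C * t ^ (K + 1))
    {k : ℕ} (hk : 1 ≤ k) : d k = 0 := by
  induction k using Nat.strong_induction_on with
  | _ k ih =>
    obtain ⟨C, hC⟩ := h k
    have hle : ∀ t : ℝ, 0 < t → |d k| ≤ C * t := fun t ht => by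
      have h1 := hC t ht
      rw [Finset.sum_eq_single_of_mem k (Finset.mem_Icc.2 ⟨hk, le_rfl⟩), abs_mul,
        abs_of_pos (pow_pos ht k), pow_succ', ← mul_assoc] at h1
      · exact le_of_mul_le_mul_right h1 (pow_pos ht k)
      · intro j hj hjk
        obtain ⟨hj1, hj2⟩ := Finset.mem_Icc.1 hj
        rw [ih j (lt_of_le_of_ne hj2 hjk) hj1, zero_mul]
    have hlim : Filter.Tendsto (fun t : ℝ => C * t) (nhdsWithin 0 (Set.Ioi 0)) (nhds 0) := by
      have : Continuous fun t : ℝ => C * t := by fun_prop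
      simpa using (this.tendsto 0).mono_left nhdsWithin_le_nhds
    have := ge_of_tendsto hlim (Filter.eventually_of_mem self_mem_nhdsWithin hle)
    exact abs_nonpos_iff.1 this

theorem statement13 (n : ℕ) (hn : 1 ≤ n) (f : SchwartzMap ℝ ℝ)
    (hf : ∀ k : ℕ, n ≤ k →
      (∫ ξ : EuclideanSpace ℝ (Fin n), iteratedDeriv k f (‖ξ‖ ^ 2)) ≠ 0)
    (V V₀ : EuclideanSpace ℝ (Fin n) → ℝ)
    (hVmeas : Measurable V) (hV₀meas : Measurable V₀)
    (hVnn : ∀ x, 0 ≤ V x) (hV₀nn : ∀ x, 0 ≤ V₀ x)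
    (hVdec : ∃ ε A B : ℝ, 0 < ε ∧ 0 < A ∧ 0 < B ∧
      ∀ x, V x ≤ A * Real.exp (-B * ‖x‖ ^ (1 + ε)))
    (hV₀dec : ∃ ε A B : ℝ, 0 < ε ∧ 0 < A ∧ 0 < B ∧
      ∀ x, V₀ x ≤ A * Real.exp (-B * ‖x‖ ^ (1 + ε)))
    (heq : ∀ lam : ℝ, 0 < lam →
      (∫ p : EuclideanSpace ℝ (Fin n) × EuclideanSpace ℝ (Fin n),
          (f ((‖p.1‖ ^ 2 + V p.2) / lam) - f (‖p.1‖ ^ 2 / lam))) =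
        ∫ p : EuclideanSpace ℝ (Fin n) × EuclideanSpace ℝ (Fin n),
          (f ((‖p.1‖ ^ 2 + V₀ p.2) / lam) - f (‖p.1‖ ^ 2 / lam))) :
    ∀ k : ℕ, n ≤ k → ∫ x, (V x) ^ k = ∫ x, (V₀ x) ^ k := by
  intro k hk
  let a : ℕ → ℝ := fun k => ∫ ξ : EuclideanSpace ℝ (Fin n), iteratedDeriv k f (‖ξ‖ ^ 2)
  have hd := coeff_eq_zero_of_forall_abs_sum_le
    (d := fun k => a k * (∫ x, V x ^ k) / (k !) - a k * (∫ x, V₀ x ^ k) / (k !))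
    (fun K => ?_) (hn.trans hk)
  · have h1 : a k * ((∫ x, V x ^ k) - ∫ x, V₀ x ^ k) = 0 := by
      have : ((k ! : ℕ) : ℝ) ≠ 0 := by exact_mod_cast k.factorial_ne_zero
      field_simp at hd
      linarith
    exact sub_eq_zero.1 ((mul_eq_zero.1 h1).resolve_left (hf k hk))
  obtain ⟨C, hC⟩ := f.exists_integral_expansion volume hVmeas hVnn
    (fun _ => integrable_pow_of_le_exp volume hVmeas hVnn hVdec) K
  obtain ⟨C₀, hC₀⟩ := f.exists_integral_expansion volume hV₀meas hV₀nn
    (fun _ => integrable_pow_of_le_exp volume hV₀meas hV₀nn hV₀dec) K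
  refine ⟨C + C₀, fun t ht => ?_⟩
  have hc : 0 < √t := Real.sqrt_pos.2 ht
  have hrescale : ∀ U : EuclideanSpace ℝ (Fin n) → ℝ,
      (fun p : EuclideanSpace ℝ (Fin n) × EuclideanSpace ℝ (Fin n) =>
        f ((‖p.1‖ ^ 2 + U p.2) / t⁻¹) - f (‖p.1‖ ^ 2 / t⁻¹)) =
      fun p => f (‖√t • p.1‖ ^ 2 + √t ^ 2 * U p.2) - f (‖√t • p.1‖ ^ 2) := by
    intro U
    funext p
    rw [norm_smul, mul_pow, Real.norm_of_nonneg hc.le, Real.sq_sqrt ht.le, div_inv_eq_mul,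
      div_inv_eq_mul, add_mul, mul_comm t, mul_comm t]
  have hI := heq t⁻¹ (inv_pos.2 ht)
  rw [hrescale V, hrescale V₀, Measure.volume_eq_prod] at hI
  have h1 := hC √t hc
  have h2 := hC₀ √t hc
  rw [hI] at h1
  rw [Real.sq_sqrt ht.le] at h1 h2
  have hr : 0 < |(√t ^ Module.finrank ℝ (EuclideanSpace ℝ (Fin n)))⁻¹| := by positivity
  refine le_of_mul_le_mul_left ?_ hr
  simp_rw [sub_mul]
  rw [Finset.sum_sub_distrib, ← abs_of_pos hr, ← abs_mul, abs_of_pos hr, mul_sub, add_mul, mul_add]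
  refine le_trans (le_of_eq ?_) ((abs_sub _ _).trans (add_le_add h2 h1)) |>.trans (le_of_eq ?_)
  · congr 1
    ring
  · ring
end

section
/- Let n ≥ 1 and let V, V₀ ∈ C^∞(ℝⁿ; [0,∞)) be bounded functions such that ∫_{ℝⁿ} V^k |∇V|² dx and ∫_{ℝⁿ} V₀^k |∇V₀|² dx are finite and equal for every integer k ≥ n (in particular ∫ |∇V|² dx < ∞ and ∫ |∇V₀|² dx < ∞). Then for every Borel set A ⊆ (0,∞), ∫_{V^{−1}(A)} |∇V(x)|² dx = ∫_{V₀^{−1}(A)} |∇V₀(x)|² dx. -/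
open MeasureTheory Real

/-- Two finite measures on `ℝ` concentrated on a common compact interval and having the same
moments are equal. -/
theorem measure_eq_of_moments_eq {μ ν : Measure ℝ} [IsFiniteMeasure μ] [IsFiniteMeasure ν]
    {a b : ℝ} (hμ : ∀ᵐ t ∂μ, t ∈ Set.Icc a b) (hν : ∀ᵐ t ∂ν, t ∈ Set.Icc a b)
    (h : ∀ k : ℕ, ∫ t, t ^ k ∂μ = ∫ t, t ^ k ∂ν) : μ = ν := by
  have integrable_of_cont : ∀ (ρ : Measure ℝ) [IsFiniteMeasure ρ], (∀ᵐ t ∂ρ, t ∈ Set.Icc a b) →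
      ∀ g : ℝ → ℝ, Continuous g → Integrable g ρ := by
    intro ρ _ hρ g hg
    obtain ⟨C, hC⟩ := isCompact_Icc.exists_bound_of_continuousOn (s := Set.Icc a b) hg.continuousOn
    exact Integrable.of_bound hg.aestronglyMeasurable C (hρ.mono fun t ht => hC t ht)
  have poly_eq : ∀ p : Polynomial ℝ, ∫ t, p.eval t ∂μ = ∫ t, p.eval t ∂ν := by
    intro p
    simp only [Polynomial.eval_eq_sum_range]
    rw [integral_finsetSum _ fun i _ => integrable_of_cont μ hμ _ (by fun_prop),
      integral_finsetSum _ fun i _ => integrable_of_cont ν hν _ (by fun_prop)]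
    simp only [integral_const_mul, h]
  refine ext_of_forall_integral_eq_of_IsFiniteMeasure fun f => ?_
  refine eq_of_forall_dist_le fun ε hε => ?_
  have hpos : 0 < μ.real Set.univ + ν.real Set.univ + 1 := by positivity
  obtain ⟨p, hp⟩ := exists_polynomial_near_of_continuousOn a b f f.continuous.continuousOn
    (ε / (μ.real Set.univ + ν.real Set.univ + 1)) (by positivity)
  have near : ∀ (ρ : Measure ℝ) [IsFiniteMeasure ρ], (∀ᵐ t ∂ρ, t ∈ Set.Icc a b) →
      ‖∫ t, p.eval t ∂ρ - ∫ t, f t ∂ρ‖ ≤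
        ε / (μ.real Set.univ + ν.real Set.univ + 1) * ρ.real Set.univ := by
    intro ρ _ hρ
    rw [← integral_sub (integrable_of_cont ρ hρ _ p.continuous)
      (integrable_of_cont ρ hρ _ f.continuous)]
    exact norm_integral_le_of_norm_le_const (hρ.mono fun t ht => (hp t ht).le)
  have h₁ := near μ hμ
  have h₂ := near ν hν
  rw [poly_eq p] at h₁
  have hsum : ε / (μ.real Set.univ + ν.real Set.univ + 1) * μ.real Set.univ +
      ε / (μ.real Set.univ + ν.real Set.univ + 1) * ν.real Set.univ ≤ ε := by
    rw [← mul_add, div_mul_eq_mul_div, div_le_iff₀ hpos]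
    nlinarith
  rw [Real.norm_eq_abs, abs_le] at h₁ h₂
  rw [Real.dist_eq, abs_le]
  constructor <;> linarith

section WeightedMap

variable {X : Type*} [MeasurableSpace X]

/-- The pushforward under `V` of the measure with density `V ^ n * w` with respect to `μ`. -/
noncomputable def weightedMap (μ : Measure X) (V w : X → ℝ) (n : ℕ) : Measure ℝ :=
  (μ.withDensity fun x => ENNReal.ofReal (V x ^ n * w x)).map V

variable {μ : Measure X} {V w : X → ℝ} {n : ℕ}

theorem integral_weightedMap (hV : Measurable V) (hw : Measurable w) (hV0 : ∀ x, 0 ≤ V x)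
    (hw0 : ∀ x, 0 ≤ w x) {g : ℝ → ℝ} (hg : Measurable g) :
    ∫ t, g t ∂weightedMap μ V w n = ∫ x, V x ^ n * w x * g (V x) ∂μ := by
  rw [weightedMap, integral_map hV.aemeasurable hg.aestronglyMeasurable,
    integral_withDensity_eq_integral_toReal_smul (by fun_prop) (by simp)]
  refine integral_congr_ae (.of_forall fun x => ?_)
  simp [ENNReal.toReal_ofReal (mul_nonneg (pow_nonneg (hV0 x) n) (hw0 x))]

theorem isFiniteMeasure_weightedMap (hint : Integrable (fun x => V x ^ n * w x) μ) :
    IsFiniteMeasure (weightedMap μ V w n) := by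
  have := isFiniteMeasure_withDensity_ofReal hint.2
  unfold weightedMap
  infer_instance

theorem ae_weightedMap_mem_Icc (hV : Measurable V) (hV0 : ∀ x, 0 ≤ V x) {M : ℝ}
    (hM : ∀ x, V x ≤ M) : ∀ᵐ t ∂weightedMap μ V w n, t ∈ Set.Icc 0 M := by
  exact (ae_map_iff hV.aemeasurable measurableSet_Icc).2 (.of_forall fun x => ⟨hV0 x, hM x⟩)

theorem setIntegral_preimage_eq_integral_weightedMap (hV : Measurable V) (hw : Measurable w)
    (hV0 : ∀ x, 0 ≤ V x) (hw0 : ∀ x, 0 ≤ w x) {A : Set ℝ} (hA : A ⊆ Set.Ioi 0)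
    (hAm : MeasurableSet A) :
    ∫ x in V ⁻¹' A, w x ∂μ =
      ∫ t, A.indicator (fun t => (t ^ n)⁻¹) t ∂weightedMap μ V w n := by
  rw [integral_weightedMap hV hw hV0 hw0 (Measurable.indicator (by fun_prop) hAm),
    ← integral_indicator (hV hAm)]
  refine integral_congr_ae (.of_forall fun x => ?_)
  by_cases hx : V x ∈ A
  · have : V x ≠ 0 := (hA hx).ne'
    simp [Set.indicator, hx]
    field_simp
  · simp [Set.indicator, hx]

end WeightedMap

theorem measurable_norm_gradient_sq {n : ℕ} {V : EuclideanSpace ℝ (Fin n) → ℝ}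
    (hV : ContDiff ℝ (⊤ : ℕ∞) V) : Measurable fun x => ‖gradient V x‖ ^ 2 := by
  have : Continuous (gradient V) :=
    (InnerProductSpace.toDual ℝ _).symm.continuous.comp (hV.continuous_fderiv (by simp))
  exact (this.norm.pow 2).measurable

theorem statement14 (n : ℕ) (hn : 1 ≤ n)
    (V V₀ : EuclideanSpace ℝ (Fin n) → ℝ)
    (hV : ContDiff ℝ (⊤ : ℕ∞) V) (hV₀ : ContDiff ℝ (⊤ : ℕ∞) V₀)
    (hVnn : ∀ x, 0 ≤ V x) (hV₀nn : ∀ x, 0 ≤ V₀ x)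
    (hVbd : ∃ M : ℝ, ∀ x, V x ≤ M) (hV₀bd : ∃ M : ℝ, ∀ x, V₀ x ≤ M)
    (hgradV : Integrable (fun x => ‖gradient V x‖ ^ 2))
    (hgradV₀ : Integrable (fun x => ‖gradient V₀ x‖ ^ 2))
    (hint : ∀ k : ℕ, n ≤ k →
      Integrable (fun x => (V x) ^ k * ‖gradient V x‖ ^ 2) ∧
      Integrable (fun x => (V₀ x) ^ k * ‖gradient V₀ x‖ ^ 2) ∧
      (∫ x, (V x) ^ k * ‖gradient V x‖ ^ 2) =
        ∫ x, (V₀ x) ^ k * ‖gradient V₀ x‖ ^ 2) :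
    ∀ A : Set ℝ, A ⊆ Set.Ioi (0 : ℝ) → MeasurableSet A →
      (∫ x in V ⁻¹' A, ‖gradient V x‖ ^ 2) =
        ∫ x in V₀ ⁻¹' A, ‖gradient V₀ x‖ ^ 2 := by
  intro A hA hAm
  obtain ⟨M, hM⟩ := hVbd
  obtain ⟨M₀, hM₀⟩ := hV₀bd
  have mV := hV.continuous.measurable
  have mV₀ := hV₀.continuous.measurable
  have mw := measurable_norm_gradient_sq hV
  have mw₀ := measurable_norm_gradient_sq hV₀
  have := isFiniteMeasure_weightedMap (hint n le_rfl).1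
  have := isFiniteMeasure_weightedMap (hint n le_rfl).2.1
  have key : weightedMap volume V (fun x => ‖gradient V x‖ ^ 2) n =
      weightedMap volume V₀ (fun x => ‖gradient V₀ x‖ ^ 2) n := by
    refine measure_eq_of_moments_eq
      (ae_weightedMap_mem_Icc mV hVnn fun x => (hM x).trans (le_max_left M M₀))
      (ae_weightedMap_mem_Icc mV₀ hV₀nn fun x => (hM₀ x).trans (le_max_right M M₀)) fun k => ?_
    rw [integral_weightedMap mV mw hVnn (fun _ => by positivity) (by fun_prop),
      integral_weightedMap mV₀ mw₀ hV₀nn (fun _ => by positivity) (by fun_prop)]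
    simpa only [pow_add, mul_right_comm] using (hint (n + k) (Nat.le_add_right n k)).2.2
  rw [setIntegral_preimage_eq_integral_weightedMap (n := n) mV mw hVnn (fun _ => by positivity)
      hA hAm, key, ← setIntegral_preimage_eq_integral_weightedMap mV₀ mw₀ hV₀nn
      (fun _ => by positivity) hA hAm]
end
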